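/- arXiv:math/0011230 — 4 statements merged into one kernel-verified Lean document; each statement's English description precedes it below -/
import Mathlib

section
/- There exists a commutative ring R such that: R is a principal ideal domain (and not a field); R is local with maximal ideal generated by a prime element p; R is not complete in the p-adic topology (i.e., there is a sequence in R that is Cauchy with respect to the p-adic topology but has no limit in R); R has cardinality 2^{ℵ₁}; and every R-module M that is ℵ₁-free and ℵ₁-generated is a Whitehead module, i.e., Ext¹_R(M, R) = 0. -/
/-!
Statement 0 (Eklof–Shelah, "Whitehead modules over large principal ideal domains",
Theorem 1): There is a slender (local, not `p`-adically complete) p.i.d. `R` of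
cardinality `2 ^ ℵ₁` such that every `ℵ₁`-free `ℵ₁`-generated `R`-module is a
Whitehead module.
-/

open Cardinal

universe u

/-- The first Ext group `Ext¹_R(M, N)` (as a module, via the derived-functor `Ext`). -/
noncomputable def ext1 (R : Type u) [CommRing R] (M N : Type u) [AddCommGroup M] [Module R M]
    [AddCommGroup N] [Module R N] : ModuleCat R :=
  ((Ext R (ModuleCat.{u} R) 1).obj (Opposite.op (ModuleCat.of R M))).obj (ModuleCat.of R N)

/-- `M` is a Whitehead `R`-module: `Ext¹_R(M, R) = 0`. -/
def IsWhitehead (R : Type u) [CommRing R] (M : Type u) [AddCommGroup M] [Module R M] : Prop :=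
  Subsingleton (ext1 R M R)

/-- `M` is `κ`-generated: generated by a subset of cardinality `≤ κ`. -/
def IsGenerated (R : Type u) [Semiring R] (M : Type u) [AddCommMonoid M] [Module R M]
    (κ : Cardinal.{u}) : Prop :=
  ∃ S : Set M, #S ≤ κ ∧ Submodule.span R S = ⊤

/-- `M` is `κ`-free: every submodule generated by fewer than `κ` elements is free.
(So `ℵ₁`-free means every countably generated submodule is free.) -/
def IsKappaFree (R : Type u) [Ring R] (M : Type u) [AddCommGroup M] [Module R M]
    (κ : Cardinal.{u}) : Prop :=
  ∀ S : Set M, #S < κ → Module.Free R (Submodule.span R S)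

/-- `a` is a Cauchy sequence for the `p`-adic topology on `R`. -/
def PAdicCauchy {R : Type u} [CommRing R] (p : R) (a : ℕ → R) : Prop :=
  ∀ n : ℕ, ∃ N : ℕ, ∀ j ≥ N, ∀ k ≥ N, p ^ n ∣ (a j - a k)

/-- `L` is a limit of the sequence `a` in the `p`-adic topology on `R`. -/
def PAdicLimit {R : Type u} [CommRing R] (p : R) (a : ℕ → R) (L : R) : Prop :=
  ∀ n : ℕ, ∃ N : ℕ, ∀ j ≥ N, p ^ n ∣ (a j - L)

/-- `R` is not complete in the `p`-adic topology: there is a `p`-adically Cauchy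
sequence in `R` with no limit in `R`. -/
def NotPAdicComplete (R : Type u) [CommRing R] (p : R) : Prop :=
  ∃ a : ℕ → R, PAdicCauchy p a ∧ ∀ L : R, ¬ PAdicLimit p a L

/-!
The ring `R` is a union of a transfinite chain of rings `L ∩ K⟦X⟧`, where `L` is a field of
Laurent series containing `X`. Such a ring is a discrete valuation ring with uniformizer `X`, and
it is not complete if it contains the truncations of `c = ∑ X ^ 2 ^ n` but not `c` itself.

Let `0 → R → N → M → 0` be exact with `M` an `ℵ₁`-free module with at most `κ` generators. Then
`N` is generated by elements `v i`, where `v i₀` is the image of `1`, and it is described by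
relations `X ^ k i • v i = ∑ j, d i j • v j`. A retraction of `N` onto `R` is a solution of these
relations in `R` with value `1` at `i₀`. Because `λ ^ κ = λ`, the coefficients lie in an early
ring `A` of the chain, all systems of relations can be enumerated so that each is treated after
its coefficients have appeared, and it suffices to adjoin a solution to `A` without adjoining `c`.

Let `T` be the `A`-submodule of `N` generated by the `v i`. Completeness of `K⟦X⟧` allows a
solution, that is, a linear map `T → K⟦X⟧`, to be prescribed on lifts of a basis of `T / X T`: it
is taken to be `1` at `v i₀` and a fresh transcendental constant at each other basis element. By
`ℵ₁`-freeness every finite subset of `T` lies in a finitely generated pure submodule, which has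
generators containing `v i₀` and independent modulo `X`. The values of the solution on the
generators other than `v i₀` have algebraically independent constant terms. Adjoining such series,
together with their quotients, adds no series with coefficients in the old field, hence not `c`.
-/

section FractionClosure

variable {B : Type*} [CommRing B] [IsDomain B]

/-- The quotients of elements of `A` that exist in the ambient domain `B`: the intersection of `B`
with the fraction field of `A`. -/
def fractionClosure (A : Subring B) : Subring B where
  carrier := {f | ∃ b ∈ A, b ≠ 0 ∧ b * f ∈ A}
  zero_mem' := ⟨1, A.one_mem, one_ne_zero, by simp⟩
  one_mem' := ⟨1, A.one_mem, one_ne_zero, by simp⟩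
  add_mem' := by
    rintro f g ⟨b, hb, hb0, hf⟩ ⟨d, hd, hd0, hg⟩
    refine ⟨b * d, A.mul_mem hb hd, mul_ne_zero hb0 hd0, ?_⟩
    rw [show b * d * (f + g) = d * (b * f) + b * (d * g) by ring]
    exact A.add_mem (A.mul_mem hd hf) (A.mul_mem hb hg)
  mul_mem' := by
    rintro f g ⟨b, hb, hb0, hf⟩ ⟨d, hd, hd0, hg⟩
    refine ⟨b * d, A.mul_mem hb hd, mul_ne_zero hb0 hd0, ?_⟩
    rw [mul_mul_mul_comm]
    exact A.mul_mem hf hg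
  neg_mem' := by
    rintro f ⟨b, hb, hb0, hf⟩
    exact ⟨b, hb, hb0, by simpa using hf⟩

lemma mem_fractionClosure {A : Subring B} {f : B} :
    f ∈ fractionClosure A ↔ ∃ b ∈ A, b ≠ 0 ∧ b * f ∈ A := Iff.rfl

lemma le_fractionClosure (A : Subring B) : A ≤ fractionClosure A :=
  fun f hf => ⟨1, A.one_mem, one_ne_zero, by simpa using hf⟩

lemma fractionClosure_mono : Monotone (fractionClosure (B := B)) :=
  fun _ _ h _ ⟨b, hb, hb0, hf⟩ => ⟨b, h hb, hb0, h hf⟩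

end FractionClosure

section FractionClosed

open PowerSeries

variable {K : Type*} [Field K]

/-- The subrings of `K⟦X⟧` of the form `L ∩ K⟦X⟧`, where `L` is a subfield of the field of Laurent
series containing `X`. All the principal ideal domains constructed below are of this form. -/
structure IsFractionClosed (A : Subring K⟦X⟧) : Prop where
  X_mem : (X : K⟦X⟧) ∈ A
  mem_of_mul_mem : ∀ b ∈ A, b ≠ 0 → ∀ f, b * f ∈ A → f ∈ A

lemma isFractionClosed_fractionClosure {A : Subring K⟦X⟧} (hX : X ∈ A) :
    IsFractionClosed (fractionClosure A) where
  X_mem := le_fractionClosure A hX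
  mem_of_mul_mem := by
    rintro b ⟨d, hd, hd0, hdb⟩ hb0 f ⟨e, he, he0, hef⟩
    refine ⟨e * (d * b), A.mul_mem he hdb, mul_ne_zero he0 (mul_ne_zero hd0 hb0), ?_⟩
    rw [show e * (d * b) * f = d * (e * (b * f)) by ring]
    exact A.mul_mem hd hef

namespace IsFractionClosed

variable {A : Subring K⟦X⟧}

lemma fractionClosure_le {B : Subring K⟦X⟧} (hB : IsFractionClosed B) (h : A ≤ B) :
    fractionClosure A ≤ B := by
  rintro f ⟨b, hb, hb0, hf⟩
  exact hB.mem_of_mul_mem b (h hb) hb0 f (h hf)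

/-- The indeterminate `X`, as an element of `A`. -/
noncomputable def uniformizer (hA : IsFractionClosed A) : A := ⟨X, hA.X_mem⟩

lemma coe_uniformizer (hA : IsFractionClosed A) : (hA.uniformizer : K⟦X⟧) = X := rfl

lemma uniformizer_smul (hA : IsFractionClosed A) (f : K⟦X⟧) : hA.uniformizer • f = X * f := rfl

lemma uniformizer_pow_dvd_iff (hA : IsFractionClosed A) {a : A} {n : ℕ} :
    hA.uniformizer ^ n ∣ a ↔ (X : K⟦X⟧) ^ n ∣ a := by
  refine ⟨fun ⟨b, hb⟩ => ⟨b, congrArg Subtype.val hb⟩, fun ⟨g, hg⟩ => ?_⟩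
  have hgA : g ∈ A :=
    hA.mem_of_mul_mem _ (pow_mem hA.X_mem n) (pow_ne_zero n X_ne_zero) g (hg ▸ a.2)
  exact ⟨⟨g, hgA⟩, Subtype.ext hg⟩

lemma uniformizer_dvd_iff (hA : IsFractionClosed A) {a : A} :
    hA.uniformizer ∣ a ↔ constantCoeff (a : K⟦X⟧) = 0 := by
  simpa [X_dvd_iff] using hA.uniformizer_pow_dvd_iff (a := a) (n := 1)

lemma isUnit_iff (hA : IsFractionClosed A) {a : A} :
    IsUnit a ↔ constantCoeff (a : K⟦X⟧) ≠ 0 := by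
  refine ⟨fun h => ((h.map A.subtype).map (constantCoeff (R := K))).ne_zero, fun h => ?_⟩
  have hinv : (a : K⟦X⟧) * (a : K⟦X⟧)⁻¹ = 1 := PowerSeries.mul_inv_cancel _ h
  have hmem : (a : K⟦X⟧)⁻¹ ∈ A :=
    hA.mem_of_mul_mem a a.2 (left_ne_zero_of_mul_eq_one hinv) _ (hinv ▸ A.one_mem)
  exact .of_mul_eq_one ⟨_, hmem⟩ (Subtype.ext hinv)

lemma prime_uniformizer (hA : IsFractionClosed A) : Prime hA.uniformizer := by
  refine ⟨fun h => X_ne_zero (congrArg Subtype.val h),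
    by simp [hA.isUnit_iff, hA.coe_uniformizer], fun a b => ?_⟩
  simp only [hA.uniformizer_dvd_iff, MulMemClass.coe_mul, map_mul, mul_eq_zero, imp_self]

lemma isDiscreteValuationRing (hA : IsFractionClosed A) : IsDiscreteValuationRing A := by
  refine .ofHasUnitMulPowIrreducibleFactorization
    ⟨hA.uniformizer, hA.prime_uniformizer.irreducible, fun {a} ha => ?_⟩
  obtain ⟨b, hb⟩ := hA.uniformizer_pow_dvd_iff.2 ⟨_, X_pow_order_mul_divXPowOrder.symm⟩
  have hcoe : (b : K⟦X⟧) = divXPowOrder (a : K⟦X⟧) :=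
    mul_left_cancel₀ (pow_ne_zero _ X_ne_zero)
      ((congrArg Subtype.val hb).symm.trans X_pow_order_mul_divXPowOrder.symm)
  have hunit : IsUnit b := by
    rwa [hA.isUnit_iff, hcoe, Ne, constantCoeff_divXPowOrder_eq_zero_iff,
      ZeroMemClass.coe_eq_zero]
  exact ⟨_, hunit.unit, hb.symm⟩

lemma maximalIdeal_eq (hA : IsFractionClosed A) [IsLocalRing A] :
    IsLocalRing.maximalIdeal A = Ideal.span {hA.uniformizer} := by
  ext a
  rw [IsLocalRing.mem_maximalIdeal, mem_nonunits_iff, hA.isUnit_iff, not_not,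
    Ideal.mem_span_singleton, hA.uniformizer_dvd_iff]

end IsFractionClosed

/-- The power series with coefficients in a subfield. -/
noncomputable def coeffSubring (E : Subfield K) : Subring K⟦X⟧ := (PowerSeries.map E.subtype).range

lemma mem_coeffSubring {E : Subfield K} {f : K⟦X⟧} :
    f ∈ coeffSubring E ↔ ∀ n, coeff n f ∈ E := by
  refine ⟨?_, fun h => ⟨PowerSeries.mk fun n => ⟨coeff n f, h n⟩, by ext; simp⟩⟩
  rintro ⟨g, rfl⟩ n
  simp

lemma coeffSubring_mono : Monotone (coeffSubring (K := K)) :=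
  fun _ _ h _ hf => mem_coeffSubring.2 fun n => h (mem_coeffSubring.1 hf n)

lemma C_mem_coeffSubring {E : Subfield K} {a : K} (ha : a ∈ E) : C a ∈ coeffSubring E :=
  ⟨C ⟨a, ha⟩, by simp⟩

lemma isFractionClosed_coeffSubring (E : Subfield K) : IsFractionClosed (coeffSubring E) where
  X_mem := ⟨X, by simp⟩
  mem_of_mul_mem := by
    rintro _ ⟨b, rfl⟩ hb0 f ⟨a, ha⟩
    have hb : constantCoeff (divXPowOrder b) ≠ 0 :=
      mt constantCoeff_divXPowOrder_eq_zero_iff.1 (by rintro rfl; simp at hb0)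
    have key : X ^ b.order.toNat * f = map E.subtype ((divXPowOrder b)⁻¹ * a) :=
      calc X ^ b.order.toNat * f
        _ = map E.subtype ((divXPowOrder b)⁻¹ * divXPowOrder b) * (X ^ b.order.toNat * f) := by
          rw [PowerSeries.inv_mul_cancel _ hb, map_one, one_mul]
        _ = map E.subtype (divXPowOrder b)⁻¹ *
            (map E.subtype (X ^ b.order.toNat * divXPowOrder b) * f) := by
          simp only [map_mul, map_pow, map_X]
          ring
        _ = map E.subtype ((divXPowOrder b)⁻¹ * a) := by
          rw [X_pow_order_mul_divXPowOrder, ← ha, map_mul]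
    refine mem_coeffSubring.2 fun m => ?_
    rw [← coeff_X_pow_mul f b.order.toNat m, key, coeff_map]
    exact Subtype.property _

end FractionClosed

section AlgebraicIndependence

open PowerSeries

variable {K : Type*} [Field K] {E : Subfield K} {A : Subring K⟦X⟧} {σ : Type*}

/-- The constant coefficient, as a map into a subfield containing all coefficients. It is the
reduction modulo the maximal ideal when `A` is fraction closed. -/
noncomputable def residueHom (hAE : A ≤ coeffSubring E) : A →+* E :=
  ((constantCoeff (R := K)).comp A.subtype).codRestrict E fun a => by
    simpa using mem_coeffSubring.1 (hAE a.2) 0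

@[simp]
lemma coe_residueHom (hAE : A ≤ coeffSubring E) (a : A) :
    (residueHom hAE a : K) = constantCoeff (a : K⟦X⟧) := rfl

lemma residueHom_eq_zero_iff (hA : IsFractionClosed A) (hAE : A ≤ coeffSubring E) {a : A} :
    residueHom hAE a = 0 ↔ hA.uniformizer ∣ a := by
  rw [hA.uniformizer_dvd_iff, ← coe_residueHom hAE, ZeroMemClass.coe_eq_zero]

lemma constantCoeff_aeval (hAE : A ≤ coeffSubring E) (z : σ → K⟦X⟧) (H : MvPolynomial σ A) :
    constantCoeff (MvPolynomial.aeval z H) =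
      MvPolynomial.aeval (fun i => constantCoeff (z i)) (H.map (residueHom hAE)) := by
  rw [MvPolynomial.aeval_def, MvPolynomial.hom_eval₂, MvPolynomial.aeval_def,
    MvPolynomial.eval₂_map]
  rfl

lemma C_uniformizer_dvd_of_aeval_eq_zero (hA : IsFractionClosed A) (hAE : A ≤ coeffSubring E)
    {z : σ → K⟦X⟧} (hz : AlgebraicIndependent E fun i => constantCoeff (z i))
    {H : MvPolynomial σ A} (hH : MvPolynomial.aeval z H = 0) :
    MvPolynomial.C hA.uniformizer ∣ H := by
  have hmap : H.map (residueHom hAE) = 0 := by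
    rw [← map_eq_zero_iff _ hz, ← constantCoeff_aeval, hH, map_zero]
  refine (MvPolynomial.C_dvd_iff_dvd_coeff _ _).2 fun d => ?_
  rw [← residueHom_eq_zero_iff hA hAE, ← MvPolynomial.coeff_map, hmap, MvPolynomial.coeff_zero]

-- A relation among the `z i` may be divided by the uniformizer as often as one likes.
lemma algebraicIndependent_of_constantCoeff (hA : IsFractionClosed A) (hAE : A ≤ coeffSubring E)
    {z : σ → K⟦X⟧} (hz : AlgebraicIndependent E fun i => constantCoeff (z i)) :
    AlgebraicIndependent A z := by
  have hdvd (n : ℕ) {H : MvPolynomial σ A} (hH : MvPolynomial.aeval z H = 0) :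
      MvPolynomial.C hA.uniformizer ^ n ∣ H := by
    induction n generalizing H with
    | zero => simp
    | succ n ih =>
      obtain ⟨H', rfl⟩ := C_uniformizer_dvd_of_aeval_eq_zero hA hAE hz hH
      rw [pow_succ']
      rw [map_mul, MvPolynomial.aeval_C] at hH
      exact mul_dvd_mul_left _ (ih ((mul_eq_zero.1 hH).resolve_left X_ne_zero))
  refine (injective_iff_map_eq_zero _).2 fun H hH => ?_
  ext d n
  have hd := hdvd (n + 1) hH
  rw [← map_pow, MvPolynomial.C_dvd_iff_dvd_coeff] at hd
  simpa using X_pow_dvd_iff.1 (hA.uniformizer_pow_dvd_iff.1 (hd d)) n n.lt_succ_self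

lemma IsFractionClosed.mem_of_mem_fractionClosure_adjoin (hA : IsFractionClosed A)
    (hAE : A ≤ coeffSubring E) {z : σ → K⟦X⟧}
    (hz : AlgebraicIndependent E fun i => constantCoeff (z i)) {c : K⟦X⟧}
    (hcE : c ∈ coeffSubring E)
    (hc : c ∈ fractionClosure (Algebra.adjoin A (Set.range z)).toSubring) : c ∈ A := by
  simp only [mem_fractionClosure, Subalgebra.mem_toSubring,
    Algebra.adjoin_range_eq_range_aeval] at hc
  obtain ⟨_, ⟨Q, rfl⟩, hQ0, P, hP⟩ := hc
  have haeval (H : MvPolynomial σ A) :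
      MvPolynomial.aeval z (H.map (Subring.inclusion hAE)) = MvPolynomial.aeval z H := by
    rw [MvPolynomial.aeval_def, MvPolynomial.eval₂_map]
    rfl
  have hcQP : MvPolynomial.C ⟨c, hcE⟩ * Q.map (Subring.inclusion hAE) =
      P.map (Subring.inclusion hAE) := by
    apply algebraicIndependent_of_constantCoeff (isFractionClosed_coeffSubring E) le_rfl hz
    rw [map_mul, MvPolynomial.aeval_C, haeval, haeval]
    exact (mul_comm _ _).trans hP.symm
  have hQ : Q ≠ 0 := by rintro rfl; simp at hQ0
  obtain ⟨d, hd⟩ := MvPolynomial.ne_zero_iff.1 hQ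
  have hcoeff : ((Q.coeff d : A) : K⟦X⟧) * c = (P.coeff d : A) := by
    have h := congrArg (fun H => ((H.coeff d : coeffSubring E) : K⟦X⟧)) hcQP
    rw [MvPolynomial.coeff_C_mul, MvPolynomial.coeff_map, MvPolynomial.coeff_map] at h
    exact (mul_comm _ _).trans h
  exact hA.mem_of_mul_mem _ (Q.coeff d).2 (by simpa using hd) c (hcoeff ▸ (P.coeff d).2)

end AlgebraicIndependence

section Reduction

open Submodule

attribute [local instance] Ideal.Quotient.field

variable {A : Type*} [CommRing A] {m : Ideal A} {N S ι : Type*} [AddCommGroup N] [Module A N]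
  [AddCommGroup S] [Module A S]

lemma mem_span_singleton_smul_top_iff {x : A} {n : N} :
    n ∈ (Ideal.span {x} • ⊤ : Submodule A N) ↔ ∃ n', x • n' = n := by
  simp [ideal_span_singleton_smul, mem_smul_pointwise_iff_exists]

lemma mkQ_mem_span_image_mkQ_iff {b : Set N} {n : N} :
    (m • ⊤ : Submodule A N).mkQ n ∈ span (A ⧸ m) ((m • ⊤ : Submodule A N).mkQ '' b) ↔
      n ∈ span A b ⊔ m • ⊤ := by
  rw [← restrictScalars_mem A, restrictScalars_span A (A ⧸ m) Ideal.Quotient.mk_surjective,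
    ← map_span, ← mem_comap, comap_map_mkQ, sup_comm]

lemma mem_of_linearCombination_mem_smul_top {w : ι → N}
    (hw : LinearIndependent (A ⧸ m) ((m • ⊤ : Submodule A N).mkQ ∘ w)) {r : ι →₀ A}
    (hr : Finsupp.linearCombination A w r ∈ (m • ⊤ : Submodule A N)) (i : ι) : r i ∈ m := by
  have hzero : ∑ i ∈ r.support,
      Ideal.Quotient.mk m (r i) • (m • ⊤ : Submodule A N).mkQ (w i) = 0 := by
    rw [← Quotient.mk_eq_zero, ← mkQ_apply, Finsupp.linearCombination_apply, Finsupp.sum,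
      map_sum] at hr
    exact hr
  by_cases hi : i ∈ r.support
  · exact Ideal.Quotient.eq_zero_iff_mem.1 (linearIndependent_iff'.1 hw _ _ hzero i hi)
  · exact Finsupp.notMem_support_iff.1 hi ▸ m.zero_mem

lemma eq_of_eqOn_of_span_sup_smul_top_eq_top {f g : N →ₗ[A] S} {w : ι → N}
    (hw : span A (Set.range w) ⊔ m • ⊤ = ⊤) (hS : ∀ a ∈ m, ∀ s : S, a • s = 0)
    (h : ∀ i, f (w i) = g (w i)) : f = g := by
  have hle : span A (Set.range w) ⊔ m • ⊤ ≤ LinearMap.eqLocus f g := by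
    refine sup_le (span_le.2 (Set.range_subset_iff.2 h)) (smul_le.2 fun a ha n _ => ?_)
    rw [LinearMap.mem_eqLocus, map_smul, map_smul, hS a ha, hS a ha]
  exact LinearMap.ext fun n => hle (by rw [hw]; exact mem_top)

lemma exists_linearMap_eq_of_linearIndependent_mkQ [m.IsMaximal] {w : ι → N}
    (hw : LinearIndependent (A ⧸ m) ((m • ⊤ : Submodule A N).mkQ ∘ w))
    (hS : ∀ a ∈ m, ∀ s : S, a • s = 0) (y : ι → S) :
    ∃ f : N →ₗ[A] S, ∀ i, f (w i) = y i := by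
  have htors : Module.IsTorsionBySet A S m := fun s a => hS a a.2 s
  let _ : Module (A ⧸ m) S := htors.module
  have : IsScalarTower A (A ⧸ m) S := htors.isScalarTower
  obtain ⟨g, hg⟩ := LinearMap.exists_leftInverse_of_injective _ (LinearMap.ker_eq_bot.2 hw)
  refine ⟨(Finsupp.linearCombination (A ⧸ m) y ∘ₗ g).restrictScalars A ∘ₗ mkQ _, fun i => ?_⟩
  have hgi : g ((m • ⊤ : Submodule A N).mkQ (w i)) = Finsupp.single i 1 := by
    simpa using LinearMap.congr_fun hg (Finsupp.single i 1)
  simp [-mkQ_apply, hgi]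

lemma exists_linearIndepOn_mkQ_of_pure {x : A} [(Ideal.span {x}).IsMaximal]
    (hx : Ideal.span {x} ≤ Ideal.jacobson ⊥) {P : Submodule A N} (hP : P.FG)
    (hpure : ∀ n, x • n ∈ P → n ∈ P) {e : N} (he : e ∈ P)
    (hex : e ∉ (Ideal.span {x} • ⊤ : Submodule A N)) :
    ∃ b : Set N, e ∈ b ∧ span A b = P ∧
      LinearIndepOn (A ⧸ Ideal.span {x}) (Ideal.span {x} • ⊤ : Submodule A N).mkQ b := by
  have he0 : LinearIndepOn (A ⧸ Ideal.span {x}) (Ideal.span {x} • ⊤ : Submodule A N).mkQ {e} := by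
    rwa [linearIndepOn_singleton_iff, Ne, mkQ_apply, Quotient.mk_eq_zero]
  obtain ⟨b, hbP, heb, hspan, hind⟩ :=
    exists_linearIndepOn_extension he0 (Set.singleton_subset_iff.2 he : {e} ⊆ (P : Set N))
  refine ⟨b, heb rfl, (span_le.2 hbP).antisymm ?_, hind⟩
  refine le_of_le_smul_of_le_jacobson_bot hP hx fun n hn => ?_
  obtain ⟨y, hy, z, hz, rfl⟩ := mem_sup.1 (mkQ_mem_span_image_mkQ_iff.1 (hspan ⟨n, hn, rfl⟩))
  obtain ⟨n', rfl⟩ := mem_span_singleton_smul_top_iff.1 hz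
  have hn' : n' ∈ P := hpure n' ((P.add_mem_iff_right (span_le.2 hbP hy)).1 hn)
  exact add_mem_sup hy (smul_mem_smul (Ideal.mem_span_singleton_self x) hn')

lemma exists_linearIndependent_mkQ_of_span_eq_top [m.IsMaximal] {v : ι → N}
    (hv : span A (Set.range v) = ⊤) {i₀ : ι} (hi₀ : v i₀ ∉ (m • ⊤ : Submodule A N)) :
    ∃ J : Set ι, i₀ ∈ J ∧
      LinearIndependent (A ⧸ m) ((m • ⊤ : Submodule A N).mkQ ∘ fun j : J => v j) ∧
      span A (Set.range fun j : J => v j) ⊔ m • ⊤ = (⊤ : Submodule A N) := by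
  have hsing : LinearIndepOn (A ⧸ m) ((m • ⊤ : Submodule A N).mkQ ∘ v) {i₀} := by
    rwa [linearIndepOn_singleton_iff, Ne, Function.comp_apply, mkQ_apply, Quotient.mk_eq_zero]
  obtain ⟨J, -, hJ₀, hspan, hJ⟩ := exists_linearIndepOn_extension hsing (Set.subset_univ _)
  refine ⟨J, hJ₀ rfl, hJ, eq_top_iff.2 ?_⟩
  rw [← Set.image_eq_range, ← hv, span_le, hv]
  rintro _ ⟨i, rfl⟩
  refine mkQ_mem_span_image_mkQ_iff.1 ?_
  rw [← Set.image_comp]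
  exact hspan ⟨i, trivial, rfl⟩

end Reduction

section AdicExtension

open Submodule

variable {A : Type*} [CommRing A] {F N C ι : Type*} [AddCommGroup F] [Module A F]
  [AddCommGroup N] [Module A N] [AddCommGroup C] [Module A C]

-- Modulo `I ^ k` the map `τ` factors uniquely through `φ`; completeness of `C` glues the factors.
lemma exists_linearMap_comp_eq_of_isAdicComplete (I : Ideal A) [IsAdicComplete I C]
    (φ : F →ₗ[A] N)
    (hφ : ∀ k, Function.Bijective
      (mapQ (I ^ k • ⊤) (I ^ k • ⊤) φ (smul_top_le_comap_smul_top (I ^ k) φ)))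
    (τ : F →ₗ[A] C) : ∃ f : N →ₗ[A] C, f ∘ₗ φ = τ := by
  let g (k : ℕ) : N →ₗ[A] C ⧸ (I ^ k • ⊤ : Submodule A C) :=
    mapQ (I ^ k • ⊤) (I ^ k • ⊤) τ (smul_top_le_comap_smul_top (I ^ k) τ) ∘ₗ
      (LinearEquiv.ofBijective _ (hφ k)).symm.toLinearMap ∘ₗ mkQ (I ^ k • ⊤)
  have hg {k : ℕ} {n : N} {r : F} (h : n - φ r ∈ (I ^ k • ⊤ : Submodule A N)) :
      g k n = Submodule.Quotient.mk (τ r) := by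
    have hsymm : (LinearEquiv.ofBijective _ (hφ k)).symm (Submodule.Quotient.mk n) =
        Submodule.Quotient.mk r := by
      rw [LinearEquiv.symm_apply_eq]
      exact (Submodule.Quotient.eq _).2 h
    exact congrArg (mapQ _ _ τ (smul_top_le_comap_smul_top (I ^ k) τ)) hsymm
  have hcompat {k l : ℕ} (hkl : k ≤ l) : factorPow I C hkl ∘ₗ g l = g k := by
    ext n
    obtain ⟨q, hq⟩ := (hφ l).2 (Submodule.Quotient.mk n)
    obtain ⟨r, rfl⟩ := Submodule.Quotient.mk_surjective _ q
    have hr : n - φ r ∈ (I ^ l • ⊤ : Submodule A N) := (Submodule.Quotient.eq _).1 hq.symm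
    rw [LinearMap.comp_apply, hg hr, hg (pow_smul_top_le I N hkl hr)]
    rfl
  refine ⟨IsAdicComplete.lift I g hcompat, LinearMap.ext fun r => ?_⟩
  refine IsHausdorff.eq_iff_smodEq (I := I) |>.2 fun k => ?_
  rw [SModEq.def, LinearMap.comp_apply, IsAdicComplete.mk_lift, hg]
  simp

variable {x : A} {φ : F →ₗ[A] N}

lemma exists_eq_pow_smul_of_map_eq_pow_smul (hx : IsSMulRegular N x)
    (hφ : ∀ r n, φ r = x • n → ∃ r', r = x • r') {k : ℕ} {r : F} {n : N}
    (h : φ r = x ^ k • n) : ∃ r', r = x ^ k • r' := by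
  induction k generalizing n with
  | zero => exact ⟨r, by simp⟩
  | succ k ih =>
    rw [pow_succ, mul_smul] at h
    obtain ⟨r', rfl⟩ := ih h
    rw [map_smul] at h
    obtain ⟨r'', rfl⟩ := hφ r' n (hx.pow k h)
    exact ⟨r'', by rw [smul_smul, pow_succ]⟩

lemma exists_eq_map_add_pow_smul (hφ : ∀ n, ∃ r n', n = φ r + x • n') (k : ℕ) (n : N) :
    ∃ r n', n = φ r + x ^ k • n' := by
  induction k with
  | zero => exact ⟨0, n, by simp⟩
  | succ k ih =>
    obtain ⟨r, n', rfl⟩ := ih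
    obtain ⟨r', n'', rfl⟩ := hφ n'
    exact ⟨r + x ^ k • r', n'', by rw [map_add, map_smul, smul_add, pow_succ, mul_smul, add_assoc]⟩

lemma bijective_mapQ_span_singleton_pow (hx : IsSMulRegular N x)
    (hinj : ∀ r n, φ r = x • n → ∃ r', r = x • r') (hsurj : ∀ n, ∃ r n', n = φ r + x • n')
    (k : ℕ) :
    Function.Bijective (mapQ (Ideal.span {x} ^ k • ⊤) (Ideal.span {x} ^ k • ⊤) φ
      (smul_top_le_comap_smul_top (Ideal.span {x} ^ k) φ)) := by
  constructor
  · rw [← LinearMap.ker_eq_bot, ker_mapQ, ← le_bot_iff, map_le_iff_le_comap, comap_bot, ker_mkQ]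
    intro r hr
    rw [mem_comap, Ideal.span_singleton_pow, mem_span_singleton_smul_top_iff] at hr
    obtain ⟨n, hn⟩ := hr
    obtain ⟨r', rfl⟩ := exists_eq_pow_smul_of_map_eq_pow_smul hx hinj hn.symm
    rw [Ideal.span_singleton_pow, mem_span_singleton_smul_top_iff]
    exact ⟨r', rfl⟩
  · intro q
    obtain ⟨n, rfl⟩ := Submodule.Quotient.mk_surjective _ q
    obtain ⟨r, n', hn⟩ := exists_eq_map_add_pow_smul hsurj k n
    refine ⟨Submodule.Quotient.mk r, (Submodule.Quotient.eq _).2 ?_⟩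
    rw [Ideal.span_singleton_pow, mem_span_singleton_smul_top_iff]
    exact ⟨-n', by rw [hn]; simp⟩

lemma exists_linearMap_eq_of_linearIndependent_mkQ_of_isAdicComplete
    [IsAdicComplete (Ideal.span {x}) C] (hx : IsSMulRegular N x) {w : ι → N}
    (hw : LinearIndependent (A ⧸ Ideal.span {x})
      ((Ideal.span {x} • ⊤ : Submodule A N).mkQ ∘ w))
    (hspan : span A (Set.range w) ⊔ Ideal.span {x} • ⊤ = (⊤ : Submodule A N)) (τ : ι → C) :
    ∃ f : N →ₗ[A] C, ∀ i, f (w i) = τ i := by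
  have hinj (r : ι →₀ A) (n : N) (hrn : Finsupp.linearCombination A w r = x • n) :
      ∃ r', r = x • r' := by
    have hdvd (i : ι) : ∃ a, r i = x * a := Ideal.mem_span_singleton.1
      (mem_of_linearCombination_mem_smul_top hw
        (mem_span_singleton_smul_top_iff.2 ⟨n, hrn.symm⟩) i)
    choose a ha using hdvd
    classical
    refine ⟨.onFinset r.support (fun i => if r i = 0 then 0 else a i) (by simp +contextual),
      Finsupp.ext fun i => ?_⟩
    by_cases hi : r i = 0
    · simp [hi]
    · simpa [hi] using ha i
  have hsurj (n : N) : ∃ r n', n = Finsupp.linearCombination A w r + x • n' := by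
    obtain ⟨y, hy, z, hz, rfl⟩ := mem_sup.1 (hspan ▸ mem_top : n ∈ _)
    obtain ⟨r, rfl⟩ := Finsupp.mem_span_range_iff_exists_finsupp.1 hy
    obtain ⟨n', rfl⟩ := mem_span_singleton_smul_top_iff.1 hz
    exact ⟨r, n', rfl⟩
  obtain ⟨f, hf⟩ := exists_linearMap_comp_eq_of_isAdicComplete (Ideal.span {x})
    (Finsupp.linearCombination A w) (bijective_mapQ_span_singleton_pow hx hinj hsurj)
    (Finsupp.linearCombination A τ)
  exact ⟨f, fun i => by simpa using LinearMap.congr_fun hf (Finsupp.single i 1)⟩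

end AdicExtension

section Independence

open Submodule

attribute [local instance] Ideal.Quotient.field

lemma smul_eq_zero_of_algebraMap_eq_zero {A E S : Type*} [CommRing A] [CommRing E] [Algebra A E]
    [AddCommGroup S] [Module E S] [Module A S] [IsScalarTower A E S] {a : A}
    (ha : algebraMap A E a = 0) (s : S) : a • s = 0 := by
  rw [← algebraMap_smul E a s, ha, zero_smul]

lemma algebraicIndependent_of_linearIndepOn_mkQ {A N E K ι : Type*} [CommRing A] [AddCommGroup N]
    [Module A N] [CommRing E] [CommRing K] [Algebra A E] [Algebra E K] [Algebra A K]
    [IsScalarTower A E K] {m : Ideal A} [m.IsMaximal] (hm : m ≤ RingHom.ker (algebraMap A E))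
    {w : ι → N} (hw : LinearIndependent (A ⧸ m) ((m • ⊤ : Submodule A N).mkQ ∘ w))
    (hspan : span A (Set.range w) ⊔ m • ⊤ = (⊤ : Submodule A N)) {t : ι → K}
    (ht : AlgebraicIndependent E t) {i₀ : ι} {g : N →ₗ[A] K} (hg₀ : g (w i₀) = 1)
    (hg : ∀ i ≠ i₀, g (w i) = t i) {b : Set N}
    (hb : LinearIndepOn (A ⧸ m) (m • ⊤ : Submodule A N).mkQ b) (hi₀ : w i₀ ∈ b) :
    AlgebraicIndependent E fun n : {n // n ∈ b ∧ n ≠ w i₀} => g n := by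
  classical
  obtain ⟨Φ, hΦ⟩ := exists_linearMap_eq_of_linearIndependent_mkQ hw
    (fun a ha => smul_eq_zero_of_algebraMap_eq_zero (hm ha))
    fun i => if i = i₀ then 1 else (MvPolynomial.X i : MvPolynomial ι E)
  obtain ⟨L, hL⟩ := exists_linearMap_eq_of_linearIndependent_mkQ hb
    (fun a ha => smul_eq_zero_of_algebraMap_eq_zero (hm ha)) fun n =>
    if h : n = w i₀ then 1 else
      (MvPolynomial.X ⟨n, n.2, h⟩ : MvPolynomial {n // n ∈ b ∧ n ≠ w i₀} E)
  have hgΦ : (MvPolynomial.aeval t).toLinearMap.restrictScalars A ∘ₗ Φ = g := by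
    refine eq_of_eqOn_of_span_sup_smul_top_eq_top hspan
      (fun a ha => smul_eq_zero_of_algebraMap_eq_zero (hm ha)) fun i => ?_
    by_cases hi : i = i₀
    · simp [hΦ, hi, hg₀]
    · simp [hΦ, hi, hg]
  have hLΦ : (MvPolynomial.aeval (L ∘ w)).toLinearMap.restrictScalars A ∘ₗ Φ = L := by
    refine eq_of_eqOn_of_span_sup_smul_top_eq_top hspan
      (fun a ha => smul_eq_zero_of_algebraMap_eq_zero (hm ha)) fun i => ?_
    by_cases hi : i = i₀
    · simpa [hΦ, hi] using (hL ⟨w i₀, hi₀⟩).symm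
    · simp [hΦ, hi]
  have hX : (MvPolynomial.aeval (L ∘ w)) ∘ (fun n : {n // n ∈ b ∧ n ≠ w i₀} => Φ n) =
      MvPolynomial.X :=
    funext fun n =>
      (LinearMap.congr_fun hLΦ n).trans ((hL ⟨n, n.2.1⟩).trans (dif_neg n.2.2))
  have hΦind : AlgebraicIndependent E fun n : {n // n ∈ b ∧ n ≠ w i₀} => Φ n :=
    .of_comp (MvPolynomial.aeval (L ∘ w)) (hX ▸ MvPolynomial.algebraicIndependent_X _ E)
  rw [← hgΦ]
  exact hΦind.map' (f := MvPolynomial.aeval t) ht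

end Independence

section PowSaturation

open Submodule

variable {R N : Type*} [CommRing R] [AddCommGroup N] [Module R N] {x : R} {U : Submodule R N}

/-- The elements of `N` that are carried into `U` by a power of `x`. -/
def powSaturation (x : R) (U : Submodule R N) : Submodule R N :=
  (torsion' R (N ⧸ U) (Submonoid.powers x)).comap U.mkQ

lemma mem_powSaturation {n : N} : n ∈ powSaturation x U ↔ ∃ l : ℕ, x ^ l • n ∈ U := by
  simp only [powSaturation, mem_comap, mem_torsion'_iff, Subtype.exists, Submonoid.mem_powers_iff,
    Submonoid.mk_smul, mkQ_apply, ← Quotient.mk_smul, Quotient.mk_eq_zero, exists_prop,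
    exists_exists_eq_and]

lemma le_powSaturation (x : R) (U : Submodule R N) : U ≤ powSaturation x U :=
  fun n hn => mem_powSaturation.2 ⟨0, by simpa using hn⟩

lemma mem_powSaturation_of_smul_mem {n : N} (hn : x • n ∈ powSaturation x U) :
    n ∈ powSaturation x U := by
  obtain ⟨l, hl⟩ := mem_powSaturation.1 hn
  exact mem_powSaturation.2 ⟨l + 1, by rwa [pow_succ, mul_smul]⟩

/-- The saturation at `x` of every finitely generated submodule of `N` is finitely generated. This
is what `ℵ₁`-freeness is used for: it passes to extensions by `R` and to submodules over smaller
rings. -/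
def HasFGSaturations (x : R) (N : Type*) [AddCommGroup N] [Module R N] : Prop :=
  ∀ U : Submodule R N, U.FG → (powSaturation x U).FG

end PowSaturation

section GenericValues

open PowerSeries Submodule

attribute [local instance] Ideal.Quotient.field

lemma exists_finset_mem_adjoin_image {A S ι : Type*} [CommRing A] [CommRing S] [Algebra A S]
    {f : ι → S} {g : S} (hg : g ∈ Algebra.adjoin A (Set.range f)) :
    ∃ s : Finset ι, g ∈ Algebra.adjoin A (f '' s) := by
  rw [Algebra.adjoin_range_eq_range_aeval] at hg
  obtain ⟨H, (rfl : MvPolynomial.aeval f H = g)⟩ := hg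
  refine ⟨H.vars, ?_⟩
  have hH : MvPolynomial.aeval f H ∈ (MvPolynomial.supported A H.vars).map (MvPolynomial.aeval f) :=
    ⟨H, MvPolynomial.mem_supported_vars H, rfl⟩
  simpa only [MvPolynomial.supported, AlgHom.map_adjoin, Set.image_image, MvPolynomial.aeval_X]
    using hH

lemma exists_finset_mem_fractionClosure_adjoin_image {A S ι : Type*} [CommRing A] [CommRing S]
    [IsDomain S] [Algebra A S] {f : ι → S} {g : S}
    (hg : g ∈ fractionClosure (Algebra.adjoin A (Set.range f)).toSubring) :
    ∃ s : Finset ι, g ∈ fractionClosure (Algebra.adjoin A (f '' s)).toSubring := by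
  classical
  obtain ⟨d, hd, hd0, hdg⟩ := hg
  obtain ⟨s, hs⟩ := exists_finset_mem_adjoin_image hd
  obtain ⟨s', hs'⟩ := exists_finset_mem_adjoin_image hdg
  refine ⟨s ∪ s', d, Algebra.adjoin_mono ?_ hs, hd0, Algebra.adjoin_mono ?_ hs'⟩ <;> gcongr <;> simp

namespace IsFractionClosed

variable {K : Type*} [Field K] {E E' : Subfield K} {A : Subring K⟦X⟧} {N ι : Type*}
  [AddCommGroup N] [Module A N] {w : ι → N} {t : ι → K} {f : N →ₗ[A] K⟦X⟧} {i₀ : ι}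

lemma isMaximal_span_uniformizer (hA : IsFractionClosed A) :
    (Ideal.span {hA.uniformizer}).IsMaximal := by
  have := hA.isDiscreteValuationRing
  exact hA.maximalIdeal_eq ▸ inferInstance

lemma span_uniformizer_le_jacobson (hA : IsFractionClosed A) :
    Ideal.span {hA.uniformizer} ≤ Ideal.jacobson ⊥ := by
  have := hA.isDiscreteValuationRing
  rw [← hA.maximalIdeal_eq, IsLocalRing.jacobson_eq_maximalIdeal _ bot_ne_top]

lemma isAdicComplete_powerSeries (hA : IsFractionClosed A) :
    IsAdicComplete (Ideal.span {hA.uniformizer}) K⟦X⟧ := by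
  rw [← IsAdicComplete.map_algebraMap_iff (S := K⟦X⟧), Ideal.map_span, Set.image_singleton]
  exact inferInstanceAs (IsAdicComplete (Ideal.span {(X : K⟦X⟧)}) K⟦X⟧)

lemma algebraicIndependent_constantCoeff (hA : IsFractionClosed A) (hAE : A ≤ coeffSubring E)
    (hw : LinearIndependent (A ⧸ Ideal.span {hA.uniformizer})
      ((Ideal.span {hA.uniformizer} • ⊤ : Submodule A N).mkQ ∘ w))
    (hspan : span A (Set.range w) ⊔ Ideal.span {hA.uniformizer} • ⊤ = (⊤ : Submodule A N))
    (ht : AlgebraicIndependent E t) (hf₀ : f (w i₀) = 1) (hf : ∀ i ≠ i₀, f (w i) = C (t i))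
    {b : Set N} (hb : LinearIndepOn (A ⧸ Ideal.span {hA.uniformizer})
      (Ideal.span {hA.uniformizer} • ⊤ : Submodule A N).mkQ b) (hi₀ : w i₀ ∈ b) :
    AlgebraicIndependent E fun n : {n // n ∈ b ∧ n ≠ w i₀} => constantCoeff (f n) := by
  have := hA.isMaximal_span_uniformizer
  have hsmul (a : A) (n : N) :
      constantCoeff (f (a • n)) = constantCoeff (a : K⟦X⟧) * constantCoeff (f n) := by
    rw [map_smul, Subring.smul_def, smul_eq_mul, map_mul]
  let _ : Algebra A E := (residueHom hAE).toAlgebra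
  let _ : Algebra A K := ((constantCoeff (R := K)).comp A.subtype).toAlgebra
  have : IsScalarTower A E K := .of_algebraMap_eq fun _ => rfl
  have hm : Ideal.span {hA.uniformizer} ≤ RingHom.ker (algebraMap A E) :=
    fun a ha => (residueHom_eq_zero_iff hA hAE).2 (Ideal.mem_span_singleton.1 ha)
  let g : N →ₗ[A] K :=
    { toFun := fun n => constantCoeff (f n)
      map_add' := fun n n' => by rw [map_add, map_add]
      map_smul' := hsmul }
  have hg₀ : g (w i₀) = 1 := (congrArg constantCoeff hf₀).trans (map_one _)
  have hg (i : ι) (hi : i ≠ i₀) : g (w i) = t i :=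
    (congrArg constantCoeff (hf i hi)).trans (constantCoeff_C _)
  exact algebraicIndependent_of_linearIndepOn_mkQ hm hw hspan ht hg₀ hg hb hi₀

lemma apply_mem_coeffSubring (hA : IsFractionClosed A) (hAE : A ≤ coeffSubring E)
    (hspan : span A (Set.range w) ⊔ Ideal.span {hA.uniformizer} • ⊤ = (⊤ : Submodule A N))
    (hf : ∀ i, f (w i) ∈ coeffSubring E) (n : N) : f n ∈ coeffSubring E := by
  have hw {y : N} (hy : y ∈ span A (Set.range w)) : f y ∈ coeffSubring E := by
    induction hy using span_induction with
    | mem _ hy =>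
      obtain ⟨i, rfl⟩ := hy
      exact hf i
    | zero => simp
    | add _ _ _ _ hy hy' => exact map_add f _ _ ▸ add_mem hy hy'
    | smul a _ _ hy => exact map_smul f a _ ▸ mul_mem (hAE a.2) hy
  refine mem_coeffSubring.2 fun k => ?_
  induction k generalizing n with
  | zero =>
    obtain ⟨y, hy, z, hz, rfl⟩ := mem_sup.1 (hspan ▸ mem_top : n ∈ _)
    obtain ⟨n', rfl⟩ := mem_span_singleton_smul_top_iff.1 hz
    simpa [uniformizer_smul] using mem_coeffSubring.1 (hw hy) 0
  | succ k ih =>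
    obtain ⟨y, hy, z, hz, rfl⟩ := mem_sup.1 (hspan ▸ mem_top : n ∈ _)
    obtain ⟨n', rfl⟩ := mem_span_singleton_smul_top_iff.1 hz
    rw [map_add, map_smul, uniformizer_smul, map_add, coeff_succ_X_mul]
    exact add_mem (mem_coeffSubring.1 (hw hy) _) (ih n')

lemma mem_of_mem_fractionClosure_adjoin_range (hA : IsFractionClosed A)
    (hAE : A ≤ coeffSubring E)
    (hw : LinearIndependent (A ⧸ Ideal.span {hA.uniformizer})
      ((Ideal.span {hA.uniformizer} • ⊤ : Submodule A N).mkQ ∘ w))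
    (hspan : span A (Set.range w) ⊔ Ideal.span {hA.uniformizer} • ⊤ = (⊤ : Submodule A N))
    (ht : AlgebraicIndependent E t) (hf₀ : f (w i₀) = 1) (hf : ∀ i ≠ i₀, f (w i) = C (t i))
    (hi₀ : w i₀ ∉ (Ideal.span {hA.uniformizer} • ⊤ : Submodule A N))
    (hN : HasFGSaturations hA.uniformizer N) {c : K⟦X⟧} (hcE : c ∈ coeffSubring E)
    (hc : c ∈ fractionClosure (Algebra.adjoin A (Set.range f)).toSubring) : c ∈ A := by
  have := hA.isMaximal_span_uniformizer
  obtain ⟨s, hs⟩ := exists_finset_mem_fractionClosure_adjoin_image hc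
  let P := powSaturation hA.uniformizer (span A (insert (w i₀) s))
  have hsP : insert (w i₀) (s : Set N) ⊆ P := span_le.1 (le_powSaturation _ _)
  obtain ⟨b, hi₀b, hbP, hb⟩ := exists_linearIndepOn_mkQ_of_pure (P := P)
    hA.span_uniformizer_le_jacobson
    (hN _ (fg_span (s.finite_toSet.insert _))) (fun _ => mem_powSaturation_of_smul_mem)
    (hsP (Set.mem_insert _ _)) hi₀
  have hfb : f '' b ⊆ Algebra.adjoin A (Set.range fun n : {n // n ∈ b ∧ n ≠ w i₀} => f n) := by
    rintro _ ⟨n, hn, rfl⟩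
    by_cases h : n = w i₀
    · rw [h, hf₀]
      exact one_mem _
    · exact Algebra.subset_adjoin ⟨⟨n, hn, h⟩, rfl⟩
  have hadjoin : Algebra.adjoin A (f '' s) ≤
      Algebra.adjoin A (Set.range fun n : {n // n ∈ b ∧ n ≠ w i₀} => f n) :=
    calc Algebra.adjoin A (f '' s)
      _ ≤ Algebra.adjoin A (f '' P) :=
        Algebra.adjoin_mono (Set.image_mono ((Set.subset_insert _ _).trans hsP))
      _ = Algebra.adjoin A (f '' b) := by
        rw [← map_coe, ← hbP, map_span, Algebra.adjoin_span]
      _ ≤ _ := Algebra.adjoin_le hfb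
  exact hA.mem_of_mem_fractionClosure_adjoin hAE
    (hA.algebraicIndependent_constantCoeff hAE hw hspan ht hf₀ hf hb hi₀b) hcE
    (fractionClosure_mono hadjoin hs)

theorem exists_linearMap_notMem_fractionClosure_adjoin_range (hA : IsFractionClosed A)
    (hAE : A ≤ coeffSubring E) (hEE' : E ≤ E') (ht : AlgebraicIndependent E t)
    (htE' : ∀ i, t i ∈ E') (hreg : IsSMulRegular N hA.uniformizer) {v : ι → N}
    (hv : span A (Set.range v) = ⊤)
    (hi₀ : v i₀ ∉ (Ideal.span {hA.uniformizer} • ⊤ : Submodule A N))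
    (hN : HasFGSaturations hA.uniformizer N) {c : K⟦X⟧} (hcE : c ∈ coeffSubring E) (hcA : c ∉ A) :
    ∃ f : N →ₗ[A] K⟦X⟧, f (v i₀) = 1 ∧ (∀ n, f n ∈ coeffSubring E') ∧
      c ∉ fractionClosure (Algebra.adjoin A (Set.range f)).toSubring := by
  classical
  have := hA.isMaximal_span_uniformizer
  have := hA.isAdicComplete_powerSeries
  obtain ⟨J, hJ₀, hJ, hspan⟩ := exists_linearIndependent_mkQ_of_span_eq_top hv hi₀
  obtain ⟨f, hf⟩ := exists_linearMap_eq_of_linearIndependent_mkQ_of_isAdicComplete hreg hJ hspan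
    fun j : J => if j = ⟨i₀, hJ₀⟩ then 1 else C (t j)
  have hf₀ : f (v i₀) = 1 := by simpa using hf ⟨i₀, hJ₀⟩
  have hft (j : J) (hj : j ≠ ⟨i₀, hJ₀⟩) : f (v j) = C (t j) := (hf j).trans (if_neg hj)
  refine ⟨f, hf₀, hA.apply_mem_coeffSubring (hAE.trans (coeffSubring_mono hEE')) hspan fun j => ?_,
    fun hc => hcA ?_⟩
  · by_cases hj : j = ⟨i₀, hJ₀⟩
    · rw [hj, hf₀]
      exact one_mem _
    · exact hft j hj ▸ C_mem_coeffSubring (htE' j)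
  · exact hA.mem_of_mem_fractionClosure_adjoin_range hAE hJ hspan
      (ht.comp _ Subtype.val_injective) (i₀ := ⟨i₀, hJ₀⟩) hf₀ hft hi₀ hN hcE hc

end IsFractionClosed

end GenericValues

section Saturation

open Submodule

lemma fg_of_free_of_forall_exists_smul_mem {R M : Type*} [CommRing R] [IsDomain R]
    [AddCommGroup M] [Module R M] {U P : Submodule R M} [Module.Free R P] (hU : U.FG)
    (hUP : U ≤ P) (hP : ∀ p ∈ P, ∃ r : R, r ≠ 0 ∧ r • p ∈ U) : P.FG := by
  have : Module.Finite R U := .of_fg hU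
  have hquot : Module.rank R (P ⧸ U.submoduleOf P) = 0 := by
    rw [rank_eq_zero_iff]
    rintro ⟨p⟩
    obtain ⟨r, hr, hrp⟩ := hP p p.2
    exact ⟨r, hr, (Quotient.mk_eq_zero _).2 hrp⟩
  have hrank : Module.rank R P < ℵ₀ := by
    rw [← rank_quotient_add_rank_of_isDomain (U.submoduleOf P), hquot, zero_add,
      (submoduleOfEquivOfLe hUP).rank_eq]
    exact Module.rank_lt_aleph0 R U
  exact Module.Finite.iff_fg.1 (Module.rank_lt_aleph0_iff.1 hrank)

variable {R : Type u} [CommRing R] {M : Type u} [AddCommGroup M] [Module R M]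

lemma IsKappaFree.isTorsionFree [IsDomain R] (hM : IsKappaFree R M (aleph 1)) :
    Module.IsTorsionFree R M := by
  refine .of_smul_eq_zero fun r m h => ?_
  have : Module.Free R (span R {m}) := hM {m} (by simp)
  have hr : r • (⟨m, mem_span_singleton_self m⟩ : span R {m}) = 0 := Subtype.ext h
  exact (smul_eq_zero.1 hr).imp_right (congrArg Subtype.val)

lemma exists_countable_span_eq_powSaturation {R M : Type*} [CommRing R] [IsDomain R]
    [IsNoetherianRing R] [AddCommGroup M] [Module R M] [Module.IsTorsionFree R M] {x : R}
    (hx : x ≠ 0) {U : Submodule R M} (hU : U.FG) :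
    ∃ S : Set M, S.Countable ∧ span R S = powSaturation x U := by
  have hfg (l : ℕ) : (U.comap (LinearMap.lsmul R M (x ^ l))).FG :=
    fg_of_fg_map_injective _ (LinearMap.lsmul_injective (pow_ne_zero l hx))
      (.of_le hU (map_comap_le _ _))
  choose T hT using hfg
  have hmono : Monotone fun l => U.comap (LinearMap.lsmul R M (x ^ l)) := by
    refine monotone_nat_of_le_succ fun l m hm => ?_
    rw [mem_comap, LinearMap.lsmul_apply] at hm ⊢
    rw [pow_succ', mul_smul]
    exact U.smul_mem _ hm
  refine ⟨⋃ l, T l, Set.countable_iUnion fun l => (T l).countable_toSet, ?_⟩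
  ext m
  simp [span_iUnion, hT, mem_iSup_of_directed _ hmono.directed_le, mem_powSaturation]

lemma IsKappaFree.hasFGSaturations [IsDomain R] [IsNoetherianRing R]
    (hM : IsKappaFree R M (aleph 1)) {x : R} (hx : x ≠ 0) : HasFGSaturations x M := by
  intro U hU
  have := hM.isTorsionFree
  obtain ⟨S, hS, hspan⟩ := exists_countable_span_eq_powSaturation hx hU
  have : Module.Free R (powSaturation x U) := hspan ▸ hM S (by simpa [lt_aleph_one_iff] using hS)
  refine fg_of_free_of_forall_exists_smul_mem hU (le_powSaturation x U) fun m hm => ?_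
  obtain ⟨l, hl⟩ := mem_powSaturation.1 hm
  exact ⟨x ^ l, pow_ne_zero l hx, hl⟩

lemma HasFGSaturations.of_linearMap {R M N : Type*} [CommRing R] [IsNoetherianRing R]
    [AddCommGroup M] [Module R M] [AddCommGroup N] [Module R N] {x : R} (hM : HasFGSaturations x M)
    (π : N →ₗ[R] M) [IsNoetherian R (LinearMap.ker π)] : HasFGSaturations x N := by
  intro U hU
  refine fg_of_fg_map_of_fg_inf_ker π (.of_le (hM _ (hU.map π)) ?_) ?_
  · rintro _ ⟨n, hn, rfl⟩
    obtain ⟨l, hl⟩ := mem_powSaturation.1 hn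
    exact mem_powSaturation.2 ⟨l, map_smul π (x ^ l) n ▸ mem_map_of_mem hl⟩
  · exact (isNoetherian_submodule.1 inferInstance) _ inf_le_right

end Saturation

section PowSaturation

open Submodule

variable {A N : Type*} [CommRing A] [AddCommGroup N] [Module A N] {x : A} {U V : Submodule A N}

lemma powSaturation_le_powSaturation (h : U ≤ powSaturation x V) :
    powSaturation x U ≤ powSaturation x V := by
  intro n hn
  obtain ⟨l, hl⟩ := mem_powSaturation.1 hn
  obtain ⟨k, hk⟩ := mem_powSaturation.1 (h hl)
  exact mem_powSaturation.2 ⟨k + l, by rwa [pow_add, mul_smul]⟩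

lemma powSaturation_mono (x : A) : Monotone (powSaturation x : Submodule A N → Submodule A N) :=
  fun _ V h => powSaturation_le_powSaturation (h.trans (le_powSaturation x V))

lemma exists_pow_smul_mem_of_fg (hU : U.FG) (hUV : U ≤ powSaturation x V) :
    ∃ k : ℕ, ∀ n ∈ U, x ^ k • n ∈ V := by
  suffices ∃ k : ℕ, U ≤ V.comap (LinearMap.lsmul A N (x ^ k)) from this
  induction U, hU using fg_induction with
  | singleton n =>
    obtain ⟨k, hk⟩ := mem_powSaturation.1 (hUV (mem_span_singleton_self n))
    exact ⟨k, (span_singleton_le_iff_mem _ _).2 hk⟩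
  | sup U U' _ _ ih ih' =>
    obtain ⟨k, hk⟩ := ih (le_sup_left.trans hUV)
    obtain ⟨k', hk'⟩ := ih' (le_sup_right.trans hUV)
    refine ⟨k + k', sup_le (fun n hn => ?_) fun n hn => ?_⟩
    · rw [add_comm, mem_comap, LinearMap.lsmul_apply, pow_add, mul_smul]
      exact V.smul_mem _ (hk hn)
    · rw [mem_comap, LinearMap.lsmul_apply, pow_add, mul_smul]
      exact V.smul_mem _ (hk' hn)

lemma exists_finite_subset_le_powSaturation {b : Set N} (hU : U.FG)
    (hUb : U ≤ powSaturation x (span A b)) :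
    ∃ t ⊆ b, t.Finite ∧ U ≤ powSaturation x (span A t) := by
  induction U, hU using fg_induction with
  | singleton n =>
    obtain ⟨l, hl⟩ := mem_powSaturation.1 (hUb (mem_span_singleton_self n))
    obtain ⟨t, ht, hlt⟩ := mem_span_finite_of_mem_span hl
    exact ⟨t, ht, t.finite_toSet, (span_singleton_le_iff_mem _ _).2 (mem_powSaturation.2 ⟨l, hlt⟩)⟩
  | sup U V _ _ ihU ihV =>
    obtain ⟨t, ht, htf, hUt⟩ := ihU (le_sup_left.trans hUb)
    obtain ⟨t', ht', htf', hVt'⟩ := ihV (le_sup_right.trans hUb)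
    exact ⟨t ∪ t', Set.union_subset ht ht', htf.union htf', sup_le
      (hUt.trans (powSaturation_mono x (span_mono Set.subset_union_left)))
      (hVt'.trans (powSaturation_mono x (span_mono Set.subset_union_right)))⟩

variable {R : Type*} [CommRing R] [Algebra A R] [Module R N] [IsScalarTower A R N] {b : Set N}

lemma linearCombination_mapRange_algebraMap {ι : Type*} (v : ι → N) (a : ι →₀ A) :
    Finsupp.linearCombination R v (a.mapRange (algebraMap A R) (map_zero _)) =
      Finsupp.linearCombination A v a := by
  simp only [Finsupp.linearCombination_apply, algebraMap_smul, zero_smul, implies_true,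
    Finsupp.sum_mapRange_index]

lemma mem_span_of_pow_smul_mem_span
    (hx : ∀ r : R, algebraMap A R x * r ∈ (algebraMap A R).range → r ∈ (algebraMap A R).range)
    (hb : LinearIndepOn R id b) {n : N} (hn : n ∈ span R b) {l : ℕ} (hl : x ^ l • n ∈ span A b) :
    n ∈ span A b := by
  have hx' (l : ℕ) (r : R) (hr : algebraMap A R (x ^ l) * r ∈ (algebraMap A R).range) :
      r ∈ (algebraMap A R).range := by
    induction l with
    | zero => simpa using hr
    | succ l ih => exact ih (hx _ (by rwa [← mul_assoc, ← map_mul, ← pow_succ']))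
  rw [← Subtype.range_coe (s := b), Finsupp.mem_span_range_iff_exists_finsupp] at hn hl ⊢
  obtain ⟨r, rfl⟩ := hn
  obtain ⟨a, ha⟩ := hl
  have hra : algebraMap A R (x ^ l) • r = a.mapRange (algebraMap A R) (map_zero _) := by
    refine hb ?_
    rw [map_smul, algebraMap_smul]
    exact ha.symm.trans (linearCombination_mapRange_algebraMap _ a).symm
  have hr (j : b) : r j ∈ Set.range (algebraMap A R) :=
    hx' l _ ⟨a j, (DFunLike.congr_fun hra j).symm⟩
  obtain ⟨r', rfl⟩ := (Finsupp.range_mapRange _ (map_zero (algebraMap A R))).ge hr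
  exact ⟨r', (linearCombination_mapRange_algebraMap _ r').symm⟩

lemma fg_powSaturation_span_of_finite [IsNoetherianRing A] (hreg : IsSMulRegular N x)
    (hN : HasFGSaturations (algebraMap A R x) N)
    (hx : ∀ r : R, algebraMap A R x * r ∈ (algebraMap A R).range → r ∈ (algebraMap A R).range)
    (hb : LinearIndepOn R id b) (hfin : b.Finite) : (powSaturation x (span A b)).FG := by
  have hsmul (l : ℕ) (n : N) : algebraMap A R x ^ l • n = x ^ l • n := by
    rw [← map_pow, algebraMap_smul]
  have hle : span A b ≤ (span R b).restrictScalars A := span_le_restrictScalars A R b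
  obtain ⟨k, hk⟩ := exists_pow_smul_mem_of_fg (hN _ (fg_span hfin)) le_rfl
  refine fg_of_fg_map_injective (LinearMap.lsmul A N (x ^ k)) (hreg.pow k) ?_
  refine .of_le (fg_span hfin) ?_
  rintro _ ⟨n, hn, rfl⟩
  obtain ⟨l, hl⟩ := mem_powSaturation.1 hn
  have hn' : n ∈ powSaturation (algebraMap A R x) (span R b) :=
    mem_powSaturation.2 ⟨l, hsmul l n ▸ hle hl⟩
  refine mem_span_of_pow_smul_mem_span hx hb (l := l) (hsmul k n ▸ hk n hn' :) ?_
  rw [LinearMap.lsmul_apply, smul_comm]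
  exact (span A b).smul_mem _ hl

lemma hasFGSaturations_of_le_powSaturation_span [IsNoetherianRing A] (hreg : IsSMulRegular N x)
    (hN : HasFGSaturations (algebraMap A R x) N)
    (hx : ∀ r : R, algebraMap A R x * r ∈ (algebraMap A R).range → r ∈ (algebraMap A R).range)
    (hb : LinearIndepOn R id b) {T : Submodule A N} (hT : T ≤ powSaturation x (span A b)) :
    HasFGSaturations x T := by
  intro U hU
  obtain ⟨t, htb, htf, hUt⟩ := exists_finite_subset_le_powSaturation (hU.map T.subtype)
    ((map_subtype_le T U).trans hT)
  refine fg_of_fg_map_injective T.subtype T.subtype_injective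
    (.of_le (fg_powSaturation_span_of_finite hreg hN hx (hb.mono htb) htf) ?_)
  refine .trans ?_ (powSaturation_le_powSaturation hUt)
  rintro _ ⟨n, hn, rfl⟩
  obtain ⟨l, hl⟩ := mem_powSaturation.1 hn
  exact mem_powSaturation.2 ⟨l, mem_map_of_mem hl⟩

end PowSaturation

section Presentation

open Submodule

variable {R N I : Type*} [CommRing R] [AddCommGroup N] [Module R N] {x : R} {v : I → N} {s : Set I}
  {k : I → ℕ} {d : I → I →₀ R}

lemma exists_pow_smul_eq_linearCombination [IsDomain R] [IsDiscreteValuationRing R]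
    (hx : Irreducible x) (v : I → N) :
    ∃ (s : Set I) (k : I → ℕ) (d : I → I →₀ R), LinearIndepOn R v s ∧
      (∀ i, d i ∈ Finsupp.supported R R s) ∧
      ∀ i, x ^ k i • v i = Finsupp.linearCombination R v (d i) := by
  obtain ⟨s, hs, hmax⟩ := exists_maximal_linearIndepOn R v
  have hdep (i : I) : ∃ (k : ℕ), ∃ d ∈ Finsupp.supported R R s,
      x ^ k • v i = Finsupp.linearCombination R v d := by
    simp_rw [eq_comm (a := x ^ _ • v i), ← Finsupp.mem_span_image_iff_linearCombination]
    by_cases hi : i ∈ s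
    · exact ⟨0, by simpa using subset_span (Set.mem_image_of_mem v hi)⟩
    · obtain ⟨a, ha, hav⟩ := hmax i hi
      obtain ⟨k, u, rfl⟩ := IsDiscreteValuationRing.eq_unit_mul_pow_irreducible ha hx
      exact ⟨k, (smul_mem_iff_of_isUnit _ u.isUnit).1 (by rwa [smul_smul])⟩
  choose k d hd hkd using hdep
  exact ⟨s, k, d, hs, hd, hkd⟩

lemma span_range_le_powSaturation (hd : ∀ i, d i ∈ Finsupp.supported R R s)
    (hkd : ∀ i, x ^ k i • v i = Finsupp.linearCombination R v (d i)) :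
    span R (Set.range v) ≤ powSaturation x (span R (v '' s)) := by
  rw [span_le]
  rintro _ ⟨i, rfl⟩
  refine mem_powSaturation.2 ⟨k i, ?_⟩
  rw [hkd]
  exact (Finsupp.mem_span_image_iff_linearCombination R).2 ⟨d i, hd i, rfl⟩

lemma exists_linearMap_eq_of_pow_smul_eq_linearCombination {Q : Type*} [AddCommGroup Q] [Module R Q]
    (hQ : IsSMulRegular Q x) (hv : span R (Set.range v) = ⊤) (hs : LinearIndepOn R v s)
    (hd : ∀ i, d i ∈ Finsupp.supported R R s)
    (hkd : ∀ i, x ^ k i • v i = Finsupp.linearCombination R v (d i)) {z : I → Q}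
    (hz : ∀ i, x ^ k i • z i = Finsupp.linearCombination R z (d i)) :
    ∃ g : N →ₗ[R] Q, ∀ i, g (v i) = z i := by
  let y (i : I) : N × Q := (v i, z i)
  have hy (r : I →₀ R) : Finsupp.linearCombination R y r =
      (Finsupp.linearCombination R v r, Finsupp.linearCombination R z r) :=
    Prod.ext (Finsupp.apply_linearCombination R (LinearMap.fst R N Q) y r)
      (Finsupp.apply_linearCombination R (LinearMap.snd R N Q) y r)
  have hgraph : span R (Set.range y) ≤ powSaturation x (span R (y '' s)) :=
    span_range_le_powSaturation hd fun i => by rw [hy, ← hkd, ← hz]; rfl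
  have hinj : Function.Injective ((LinearMap.fst R N Q).domRestrict (span R (Set.range y))) := by
    rw [← LinearMap.ker_eq_bot, LinearMap.ker_eq_bot']
    rintro ⟨⟨_, q⟩, hq⟩ rfl
    obtain ⟨l, hl⟩ := mem_powSaturation.1 (hgraph hq)
    obtain ⟨r, hr, hrq⟩ := (Finsupp.mem_span_image_iff_linearCombination R).1 hl
    rw [hy, Prod.smul_mk, Prod.mk.injEq] at hrq
    obtain rfl := linearIndepOn_iff.1 hs r hr (hrq.1.trans (smul_zero _))
    obtain rfl := (hQ.pow l).right_eq_zero_of_smul (hrq.2.symm.trans (map_zero _))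
    rfl
  have hsurj : Function.Surjective ((LinearMap.fst R N Q).domRestrict (span R (Set.range y))) := by
    rw [← LinearMap.range_eq_top, LinearMap.range_domRestrict, map_span, ← Set.range_comp]
    exact hv
  let e := LinearEquiv.ofBijective _ ⟨hinj, hsurj⟩
  refine ⟨LinearMap.snd R N Q ∘ₗ (span R (Set.range y)).subtype ∘ₗ e.symm.toLinearMap, fun i => ?_⟩
  have : e.symm (v i) = ⟨y i, subset_span ⟨i, rfl⟩⟩ := e.symm_apply_eq.2 rfl
  simp [this, y]

end Presentation

section Descent

open PowerSeries Submodule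

variable {K I : Type*} [Field K]

/-- A family `z` of power series solving the relations `X ^ k i • v i = ∑ j, d i j • v j` between
unknowns `v i`, and sending the distinguished unknown `v i₀` to `1`. If `v` generates an extension
`N` of a module by `R` and `v i₀` is the image of `1 : R`, then `z` defines a retraction of `N` onto
`R`. -/
def IsSolution (i₀ : I) (k : I → ℕ) (d : I → I →₀ K⟦X⟧) (z : I → K⟦X⟧) : Prop :=
  z i₀ = 1 ∧ ∀ i, X ^ k i * z i = Finsupp.linearCombination K⟦X⟧ z (d i)

theorem IsFractionClosed.exists_isSolution {E E' : Subfield K} {A : Subring K⟦X⟧}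
    (hA : IsFractionClosed A) (hAE : A ≤ coeffSubring E) (hEE' : E ≤ E') {t : I → K}
    (ht : AlgebraicIndependent E t) (htE' : ∀ i, t i ∈ E') {c : K⟦X⟧} (hcE : c ∈ coeffSubring E)
    (hcA : c ∉ A) {R N : Type*} [CommRing R] [Algebra A R] [AddCommGroup N] [Module A N]
    [Module R N] [IsScalarTower A R N]
    (hR : ∀ r : R, algebraMap A R hA.uniformizer * r ∈ (algebraMap A R).range →
      r ∈ (algebraMap A R).range)
    (hreg : IsSMulRegular N hA.uniformizer)
    (hN : HasFGSaturations (algebraMap A R hA.uniformizer) N) {v : I → N} {i₀ : I}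
    (hi₀ : ∀ n : N, hA.uniformizer • n ≠ v i₀) {s : Set I} (hs : LinearIndepOn R v s)
    {k : I → ℕ} {d : I → I →₀ A} (hd : ∀ i, d i ∈ Finsupp.supported A A s)
    (hkd : ∀ i, hA.uniformizer ^ k i • v i = Finsupp.linearCombination A v (d i)) :
    ∃ z, IsSolution i₀ k (fun i => (d i).mapRange A.subtype (map_zero _)) z ∧
      (∀ i, z i ∈ coeffSubring E') ∧
      c ∉ fractionClosure (Algebra.adjoin A (Set.range z)).toSubring := by
  have := hA.isDiscreteValuationRing
  let T := span A (Set.range v)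
  let w (i : I) : T := ⟨v i, subset_span ⟨i, rfl⟩⟩
  have hw : span A (Set.range w) = ⊤ := by
    rw [← span_span_coe_preimage (R := A) (s := Set.range v)]
    congr 1
    ext n
    simp only [w, Set.mem_range, Set.mem_preimage, Subtype.ext_iff]
  have hT : HasFGSaturations hA.uniformizer T :=
    hasFGSaturations_of_le_powSaturation_span hreg hN hR hs.id_image
      (span_range_le_powSaturation hd hkd)
  have hwi₀ : w i₀ ∉ (Ideal.span {hA.uniformizer} • ⊤ : Submodule A T) := by
    rw [mem_span_singleton_smul_top_iff]
    rintro ⟨n, hn⟩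
    exact hi₀ n (congrArg Subtype.val hn)
  obtain ⟨f, hf₀, hfE, hfc⟩ := hA.exists_linearMap_notMem_fractionClosure_adjoin_range hAE hEE' ht
    htE' (hreg.submodule T _) hw hwi₀ hT hcE hcA
  refine ⟨f ∘ w, ⟨hf₀, fun i => ?_⟩, fun i => hfE _, fun hc => hfc (fractionClosure_mono
    (Algebra.adjoin_mono (Set.range_comp_subset_range w f)) hc)⟩
  have hwi : hA.uniformizer ^ k i • w i = Finsupp.linearCombination A w (d i) := by
    refine T.subtype_injective ?_
    rw [Finsupp.apply_linearCombination]
    exact hkd i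
  calc X ^ k i * f (w i) = f (hA.uniformizer ^ k i • w i) := by rw [map_smul]; rfl
    _ = Finsupp.linearCombination A (f ∘ w) (d i) := by rw [hwi, Finsupp.apply_linearCombination]
    _ = _ := (linearCombination_mapRange_algebraMap (R := K⟦X⟧) (f ∘ w) (d i)).symm

end Descent

section Stage

open PowerSeries

variable {K I : Type*} [Field K] {c : K⟦X⟧} {E E' : Subfield K} {A : Subring K⟦X⟧}

/-- The rings built in the transfinite construction: their elements have coefficients in `E`, and
they omit the series `c`, which will witness the incompleteness of the final ring. -/
structure IsStage (c : K⟦X⟧) (E : Subfield K) (A : Subring K⟦X⟧) : Prop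
    extends IsFractionClosed A where
  le_coeffSubring : A ≤ coeffSubring E
  notMem : c ∉ A

namespace IsStage

lemma mono (hA : IsStage c E A) (hEE' : E ≤ E') : IsStage c E' A where
  __ := hA
  le_coeffSubring := hA.le_coeffSubring.trans (coeffSubring_mono hEE')

lemma sSup {S : Set (Subring K⟦X⟧)} (hne : S.Nonempty) (hdir : DirectedOn (· ≤ ·) S)
    (hS : ∀ A ∈ S, IsStage c E A) : IsStage c E (sSup S) where
  X_mem := by
    obtain ⟨A, hA⟩ := hne
    exact le_sSup hA (hS A hA).X_mem
  mem_of_mul_mem b hb hb0 f hf := by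
    rw [Subring.mem_sSup_of_directedOn hne hdir] at hb hf ⊢
    obtain ⟨A, hA, hbA⟩ := hb
    obtain ⟨B, hB, hfB⟩ := hf
    obtain ⟨D, hD, hAD, hBD⟩ := hdir A hA B hB
    exact ⟨D, hD, (hS D hD).mem_of_mul_mem b (hAD hbA) hb0 f (hBD hfB)⟩
  le_coeffSubring := sSup_le fun A hA => (hS A hA).le_coeffSubring
  notMem h := by
    obtain ⟨A, hA, hcA⟩ := (Subring.mem_sSup_of_directedOn hne hdir).1 h
    exact (hS A hA).notMem hcA

lemma fractionClosure_adjoin (hA : IsStage c E A) (hEE' : E ≤ E') {z : I → K⟦X⟧}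
    (hz : ∀ i, z i ∈ coeffSubring E')
    (hc : c ∉ fractionClosure (Algebra.adjoin A (Set.range z)).toSubring) :
    IsStage c E' (fractionClosure (Algebra.adjoin A (Set.range z)).toSubring) where
  __ := isFractionClosed_fractionClosure
    (algebraMap_mem (Algebra.adjoin A (Set.range z)) (⟨X, hA.X_mem⟩ : A))
  le_coeffSubring := by
    refine (isFractionClosed_coeffSubring E').fractionClosure_le ?_
    rw [Algebra.adjoin_eq_ring_closure, Subring.closure_le]
    rintro _ (⟨a, rfl⟩ | ⟨i, rfl⟩)
    · exact coeffSubring_mono hEE' (hA.le_coeffSubring a.2)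
    · exact hz i
  notMem := hc

lemma exists_le_solution_mem (hA : IsStage c E A) (hEE' : E ≤ E') (P : (I → K⟦X⟧) → Prop) :
    ∃ B, A ≤ B ∧ IsStage c E' B ∧ ∀ z, P z → (∀ i, z i ∈ coeffSubring E') →
      c ∉ fractionClosure (Algebra.adjoin A (Set.range z)).toSubring →
      ∃ z', P z' ∧ ∀ i, z' i ∈ B := by
  by_cases h : ∃ z, P z ∧ (∀ i, z i ∈ coeffSubring E') ∧
      c ∉ fractionClosure (Algebra.adjoin A (Set.range z)).toSubring
  · obtain ⟨z, hz, hzE', hcz⟩ := h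
    have hle := le_fractionClosure (Algebra.adjoin A (Set.range z)).toSubring
    exact ⟨_, fun a ha => hle (algebraMap_mem (Algebra.adjoin A (Set.range z)) (⟨a, ha⟩ : A)),
      hA.fractionClosure_adjoin hEE' hzE' hcz,
      fun _ _ _ _ => ⟨z, hz, fun i => hle (Algebra.subset_adjoin ⟨i, rfl⟩)⟩⟩
  · exact ⟨A, le_rfl, hA.mono hEE', fun z hz hzE' hcz => absurd ⟨z, hz, hzE', hcz⟩ h⟩

end IsStage

end Stage

section Tower

variable {L Ω : Type*} [CompleteLattice L] [LinearOrder Ω] {base : L} {stage next : Ω → L}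
  {α β : Ω}

/-- A transfinite increasing tower in a complete lattice: `next α` is a chosen enlargement of
`stage α`, which is the supremum of `base` and all earlier choices. -/
structure IsTower (base : L) (stage next : Ω → L) : Prop where
  stage_eq (α : Ω) : stage α = sSup (insert base (next '' Set.Iio α))
  stage_le_next (α : Ω) : stage α ≤ next α

lemma exists_isTower [WellFoundedLT Ω] (base : L) {step : Ω → L → L}
    (hstep : ∀ α A, A ≤ step α A) :
    ∃ stage next, IsTower base stage next ∧ ∀ α, next α = step α (stage α) := by
  let next : Ω → L := wellFounded_lt.fix fun α ih =>
    step α (sSup (insert base (Set.range fun β : Set.Iio α => ih β β.2)))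
  have hnext (α : Ω) : next α = step α (sSup (insert base (next '' Set.Iio α))) := by
    rw [Set.image_eq_range]
    exact wellFounded_lt.fix_eq _ α
  exact ⟨fun α => sSup (insert base (next '' Set.Iio α)), next,
    ⟨fun _ => rfl, fun α => (hstep α _).trans_eq (hnext α).symm⟩, hnext⟩

namespace IsTower

lemma base_le_stage (h : IsTower base stage next) (α : Ω) : base ≤ stage α :=
  h.stage_eq α ▸ le_sSup (Set.mem_insert _ _)

lemma next_le_stage (h : IsTower base stage next) (hβα : β < α) : next β ≤ stage α :=
  h.stage_eq α ▸ le_sSup (Set.mem_insert_of_mem _ ⟨β, hβα, rfl⟩)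

lemma monotone_next (h : IsTower base stage next) : Monotone next := by
  intro β α hβα
  obtain rfl | hβα := hβα.eq_or_lt
  · exact le_rfl
  · exact (h.next_le_stage hβα).trans (h.stage_le_next α)

lemma directedOn_insert (h : IsTower base stage next) (s : Set Ω) :
    DirectedOn (· ≤ ·) (insert base (next '' s)) := by
  refine IsChain.directedOn (IsChain.insert ?_ ?_)
  · exact h.monotone_next.isChain_range.mono (Set.image_subset_range _ _)
  · rintro _ ⟨β, -, rfl⟩ -
    exact .inl ((h.base_le_stage β).trans (h.stage_le_next β))

end IsTower

open PowerSeries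

theorem exists_isTower_isStage [WellFoundedLT Ω] {K I : Type*} [Field K] {c : K⟦X⟧}
    {E E' : Ω → Subfield K} (hEE' : ∀ α, E α ≤ E' α) (hE'E : ∀ β α, β < α → E' β ≤ E α)
    {base : Subring K⟦X⟧} (hbase : ∀ α, IsStage c (E α) base) (P : Ω → (I → K⟦X⟧) → Prop) :
    ∃ stage next, IsTower base stage next ∧ (∀ α, IsStage c (E α) (stage α)) ∧
      (∀ α, IsStage c (E' α) (next α)) ∧
      ∀ α z, P α z → (∀ i, z i ∈ coeffSubring (E' α)) →
        c ∉ fractionClosure (Algebra.adjoin (stage α) (Set.range z)).toSubring →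
        ∃ z', P α z' ∧ ∀ i, z' i ∈ next α := by
  have hext (α : Ω) (A : Subring K⟦X⟧) : ∃ B, A ≤ B ∧ (IsStage c (E α) A →
      IsStage c (E' α) B ∧ ∀ z, P α z → (∀ i, z i ∈ coeffSubring (E' α)) →
        c ∉ fractionClosure (Algebra.adjoin A (Set.range z)).toSubring →
        ∃ z', P α z' ∧ ∀ i, z' i ∈ B) := by
    by_cases hA : IsStage c (E α) A
    · obtain ⟨B, hAB, hB⟩ := hA.exists_le_solution_mem (hEE' α) (P α)
      exact ⟨B, hAB, fun _ => hB⟩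
    · exact ⟨A, le_rfl, fun h => absurd h hA⟩
  choose step hle hstep using hext
  obtain ⟨stage, next, htower, hnext⟩ := exists_isTower base hle
  have hstage (α : Ω) : IsStage c (E α) (stage α) := by
    induction α using WellFoundedLT.induction with
    | ind α ih =>
      rw [htower.stage_eq]
      refine .sSup (Set.insert_nonempty _ _) (htower.directedOn_insert _) ?_
      rintro _ (rfl | ⟨β, hβα, rfl⟩)
      · exact hbase α
      · exact hnext β ▸ (hstep β _ (ih β hβα)).1.mono (hE'E β α hβα)
  exact ⟨stage, next, htower, hstage, fun α => hnext α ▸ (hstep α _ (hstage α)).1,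
    fun α => hnext α ▸ (hstep α _ (hstage α)).2⟩

end Tower

section Index

variable {κ lam : Cardinal.{u}}

lemma mk_arrow_le_of_power_eq_self {I C : Type u} (hlam : 1 < lam) (hpow : lam ^ κ = lam)
    (hI : #I ≤ κ) (hC : #C ≤ lam) : #(I → C) ≤ lam :=
  calc #(I → C) = #C ^ #I := (power_def C I).symm
    _ ≤ lam ^ #I := power_le_power_right hC
    _ ≤ lam ^ κ := power_le_power_left (zero_lt_one.trans hlam).ne' hI
    _ = lam := hpow

lemma exists_forall_lt_of_mk_lt_cof {J Ω : Type u} [LinearOrder Ω] (hJ : #J < Order.cof Ω)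
    (f : J → Ω) : ∃ β, ∀ j, f j < β := by
  have hf : ¬ IsCofinal (Set.range f) := fun h =>
    (hJ.trans_le ((Order.cof_le h).trans mk_range_le)).false
  simpa only [Set.forall_mem_range] using not_isCofinal_iff.1 hf

lemma lt_cof_ord_toType_of_power_eq_self (hκ : ℵ₀ ≤ κ) (hlam : 1 < lam) (hpow : lam ^ κ = lam) :
    κ < Order.cof lam.ord.ToType := by
  rw [Ordinal.cof_toType]
  exact hpow ▸ lt_cof_ord_power hκ hlam

lemma exists_enumeration_cofinally {C : Type u} [Nonempty C] (hlam : ℵ₀ ≤ lam) (hC : #C ≤ lam) :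
    ∃ enum : lam.ord.ToType → C, ∀ β c, ∃ α, β < α ∧ enum α = c := by
  have hΩ : #lam.ord.ToType = lam := mk_ord_toType lam
  obtain ⟨e⟩ : Nonempty (lam.ord.ToType ≃ lam.ord.ToType × C) := by
    rw [← Cardinal.eq, mk_prod, lift_id, lift_id, hΩ, mul_eq_left hlam hC (mk_ne_zero C)]
  refine ⟨fun α => (e α).2, fun β c => ?_⟩
  by_contra! h
  have hmem (a : lam.ord.ToType) : e.symm (a, c) ∈ Set.Iic β :=
    not_lt.1 fun hlt => h _ hlt (by rw [e.apply_symm_apply])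
  have hle : #lam.ord.ToType ≤ #(Set.Iic β) :=
    mk_le_of_injective (f := fun a => ⟨e.symm (a, c), hmem a⟩) fun a b hab =>
      congrArg Prod.fst (e.symm.injective (congrArg Subtype.val hab))
  exact (hle.trans_lt (mk_Iic_lt β (by rw [hΩ, Ordinal.type_toType]) (by rwa [hΩ]))).false

end Index

section Transcendentals

open IntermediateField

lemma exists_field_algebraicIndependent {κ : Cardinal.{u}} (hκ : ℵ₀ ≤ κ) {T : Type u}
    (hT : #T ≤ κ) :
    ∃ (F K : Type u) (_ : Field F) (_ : Field K) (_ : Algebra F K) (t : T → K),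
      #F = κ ∧ #K ≤ κ ∧ AlgebraicIndependent F t := by
  have hF : #κ.ord.ToType = κ := mk_ord_toType κ
  generalize κ.ord.ToType = F at hF
  have : Infinite F := infinite_iff.2 (hF ▸ hκ)
  obtain ⟨_⟩ := Infinite.nonempty_field (α := F)
  refine ⟨F, FractionRing (MvPolynomial T F), inferInstance, inferInstance, inferInstance,
    fun i => algebraMap (MvPolynomial T F) _ (MvPolynomial.X i), hF, ?_, ?_⟩
  · rw [mk_fractionRing]
    exact MvPolynomial.cardinalMk_le_max.trans (max_le (max_le hF.le hT) hκ)
  · exact (MvPolynomial.algebraicIndependent_X T F).map'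
      (f := IsScalarTower.toAlgHom F (MvPolynomial T F) (FractionRing (MvPolynomial T F)))
      (IsFractionRing.injective _ _)

variable {F K Ω I : Type*} [Field F] [Field K] [Algebra F K]

/-- The subfield of `K` generated over `F` by the elements `t (α, i)` with `α ∈ S`: the
coefficients which are available to the stages indexed by `S`. -/
noncomputable def stageField (F : Type*) [Field F] [Algebra F K] (t : Ω × I → K) (S : Set Ω) :
    Subfield K :=
  (adjoin F (t '' (Prod.fst ⁻¹' S))).toSubfield

lemma stageField_mono (t : Ω × I → K) : Monotone (stageField F t) := fun _ _ hST =>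
  IntermediateField.adjoin.mono F _ _ (Set.image_mono (Set.preimage_mono hST))

lemma mem_stageField (t : Ω × I → K) {S : Set Ω} {α : Ω} (hα : α ∈ S) (i : I) :
    t (α, i) ∈ stageField F t S :=
  IntermediateField.subset_adjoin F _ ⟨(α, i), hα, rfl⟩

lemma algebraMap_mem_stageField (t : Ω × I → K) (S : Set Ω) (a : F) :
    algebraMap F K a ∈ stageField F t S :=
  IntermediateField.algebraMap_mem _ a

lemma algebraicIndependent_stageField {t : Ω × I → K} (ht : AlgebraicIndependent F t) {S : Set Ω}
    {α : Ω} (hα : α ∉ S) : AlgebraicIndependent (stageField F t S) fun i => t (α, i) := by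
  have hdisj : Disjoint (Prod.fst ⁻¹' S : Set (Ω × I)) (Prod.fst ⁻¹' {α}) :=
    (Set.disjoint_singleton_right.2 hα).preimage _
  exact ((algebraicIndependent_adjoin_iff (E := K)).2 (ht.adjoin_of_disjoint hdisj)).comp
    (fun i : I => ⟨(α, i), rfl⟩) fun i j hij => congrArg (fun p => p.1.2) hij

end Transcendentals

section Lacunary

open PowerSeries

variable {K : Type*} [Field K]

/-- The power series `∑ X ^ 2 ^ n`, the limit missing from the ring constructed below. -/
noncomputable def lacunary (K : Type*) [Field K] : K⟦X⟧ :=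
  .mk (Set.indicator (Set.range (2 ^ · : ℕ → ℕ)) 1)

lemma coeff_two_pow_lacunary (n : ℕ) : coeff (2 ^ n) (lacunary K) = 1 := by
  rw [lacunary, coeff_mk, Set.indicator_of_mem (Set.mem_range_self n), Pi.one_apply]

lemma coeff_lacunary_eq_zero {n m : ℕ} (hnm : 2 ^ n < m) (hmn : m < 2 ^ (n + 1)) :
    coeff m (lacunary K) = 0 := by
  rw [lacunary, coeff_mk, Set.indicator_of_notMem]
  rintro ⟨k, rfl⟩
  have hnk := (Nat.pow_lt_pow_iff_right one_lt_two).1 hnm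
  have hkn := (Nat.pow_lt_pow_iff_right one_lt_two).1 hmn
  omega

lemma lacunary_mem_coeffSubring (E : Subfield K) : lacunary K ∈ coeffSubring E := by
  rw [mem_coeffSubring]
  intro n
  rw [lacunary, coeff_mk]
  rcases Set.indicator_eq_zero_or_self (Set.range (2 ^ · : ℕ → ℕ)) (1 : ℕ → K) n with h | h
  · exact h ▸ E.zero_mem
  · exact h ▸ E.one_mem

lemma coeff_eq_zero_of_polynomial_mul_eq {P Q : Polynomial K} {f : K⟦X⟧} (hP : P ≠ 0)
    (hPf : (P : K⟦X⟧) * f = Q) {n : ℕ} (hQ : Q.natDegree < P.natDegree + n)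
    (hf : ∀ m, n < m → m ≤ P.natDegree + n → coeff m f = 0) : coeff n f = 0 := by
  have hcoeff := congrArg (coeff (P.natDegree + n)) hPf
  rw [Polynomial.coeff_coe, Polynomial.coeff_eq_zero_of_natDegree_lt hQ, coeff_mul,
    Finset.sum_eq_single (P.natDegree, n), Polynomial.coeff_coe] at hcoeff
  · exact (mul_eq_zero.1 hcoeff).resolve_left (Polynomial.leadingCoeff_ne_zero.2 hP)
  · rintro ⟨i, j⟩ hij hne
    rw [Finset.HasAntidiagonal.mem_antidiagonal] at hij
    dsimp only at hij ⊢
    rcases lt_trichotomy i P.natDegree with hi | rfl | hi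
    · rw [hf j (by omega) (by omega), mul_zero]
    · exact (hne (congrArg _ (Nat.add_left_cancel hij))).elim
    · rw [Polynomial.coeff_coe, Polynomial.coeff_eq_zero_of_natDegree_lt hi, zero_mul]
  · exact fun h => (h (Finset.HasAntidiagonal.mem_antidiagonal.2 rfl)).elim

/-- The power series that are polynomials with coefficients in `E`. -/
noncomputable def polynomialSubring (E : Subfield K) : Subring K⟦X⟧ :=
  (Polynomial.coeToPowerSeries.ringHom (R := K)).range ⊓ coeffSubring E

lemma coe_mem_polynomialSubring {E : Subfield K} {P : Polynomial K} :
    (P : K⟦X⟧) ∈ polynomialSubring E ↔ ∀ n, P.coeff n ∈ E := by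
  simp only [polynomialSubring, Subring.mem_inf, mem_coeffSubring, Polynomial.coeff_coe,
    and_iff_right_iff_imp]
  exact fun _ => ⟨P, rfl⟩

lemma lacunary_notMem_fractionClosure_polynomialSubring (E : Subfield K) :
    lacunary K ∉ fractionClosure (polynomialSubring E) := by
  rw [mem_fractionClosure]
  rintro ⟨_, ⟨⟨P, rfl⟩, -⟩, hP0, ⟨⟨Q, hQ⟩, -⟩⟩
  have hP : P ≠ 0 := by
    rintro rfl
    exact hP0 (map_zero _)
  obtain ⟨n, hn⟩ : ∃ n, P.natDegree + Q.natDegree < 2 ^ n := ⟨_, Nat.lt_two_pow_self⟩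
  refine one_ne_zero ((coeff_two_pow_lacunary (K := K) n).symm.trans
    (coeff_eq_zero_of_polynomial_mul_eq hP hQ.symm (by omega) fun m hnm hm => ?_))
  exact coeff_lacunary_eq_zero hnm (by rw [pow_succ]; omega)

lemma trunc_mem_polynomialSubring {E : Subfield K} {f : K⟦X⟧} (hf : f ∈ coeffSubring E) (n : ℕ) :
    (trunc n f : K⟦X⟧) ∈ polynomialSubring E := by
  refine coe_mem_polynomialSubring.2 fun m => ?_
  rw [coeff_trunc]
  split_ifs
  exacts [mem_coeffSubring.1 hf m, E.zero_mem]

lemma C_mem_polynomialSubring {E : Subfield K} {a : K} (ha : a ∈ E) :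
    C a ∈ polynomialSubring E :=
  ⟨⟨Polynomial.C a, Polynomial.coe_C a⟩, C_mem_coeffSubring ha⟩

lemma isStage_fractionClosure_polynomialSubring (E : Subfield K) :
    IsStage (lacunary K) E (fractionClosure (polynomialSubring E)) where
  __ := isFractionClosed_fractionClosure (A := polynomialSubring E)
    ⟨⟨Polynomial.X, Polynomial.coe_X⟩, (isFractionClosed_coeffSubring E).X_mem⟩
  le_coeffSubring := (isFractionClosed_coeffSubring E).fractionClosure_le inf_le_right
  notMem := lacunary_notMem_fractionClosure_polynomialSubring E

lemma X_pow_dvd_trunc_sub (f : K⟦X⟧) {n m : ℕ} (hnm : n ≤ m) : X ^ n ∣ (trunc m f : K⟦X⟧) - f := by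
  rw [X_pow_dvd_iff]
  intro k hk
  rw [map_sub, Polynomial.coeff_coe, coeff_trunc, if_pos (hk.trans_le hnm), sub_self]

lemma eq_of_forall_X_pow_dvd_sub {f g : K⟦X⟧} (h : ∀ n, X ^ n ∣ f - g) : f = g := by
  ext n
  rw [← sub_eq_zero, ← map_sub]
  exact X_pow_dvd_iff.1 (h (n + 1)) n n.lt_succ_self

theorem IsFractionClosed.notPAdicComplete {A : Subring K⟦X⟧} (hA : IsFractionClosed A) {c : K⟦X⟧}
    (htrunc : ∀ n, (trunc n c : K⟦X⟧) ∈ A) (hc : c ∉ A) : NotPAdicComplete A hA.uniformizer := by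
  refine ⟨fun n => ⟨_, htrunc n⟩, fun n => ⟨n, fun j hj k hk => ?_⟩, fun L hL => hc ?_⟩
  · rw [hA.uniformizer_pow_dvd_iff]
    simpa using (X_pow_dvd_trunc_sub c hj).sub (X_pow_dvd_trunc_sub c hk)
  · have hLc : (L : K⟦X⟧) = c := eq_of_forall_X_pow_dvd_sub fun n => by
      obtain ⟨N, hN⟩ := hL n
      have hdvd := hN (max N n) (le_max_left N n)
      rw [hA.uniformizer_pow_dvd_iff] at hdvd
      simpa using (X_pow_dvd_trunc_sub c (le_max_right N n)).sub hdvd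
    exact hLc ▸ L.2

end Lacunary

section Construction

open PowerSeries Submodule

section Descend

variable {K I N : Type*} [Field K] {E E' : Subfield K} {A R : Subring K⟦X⟧} {c : K⟦X⟧} {t : I → K}
  [AddCommGroup N] [Module R N] {v : I → N} {i₀ : I} {s : Set I} {k : I → ℕ} {d : I → I →₀ R}

lemma IsStage.exists_isSolution (hA : IsStage c E A) (hR : IsFractionClosed R) (hAR : A ≤ R)
    (hEE' : E ≤ E') (ht : AlgebraicIndependent E t) (htE' : ∀ i, t i ∈ E')
    (hcE : c ∈ coeffSubring E) (hreg : IsSMulRegular N hR.uniformizer)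
    (hN : HasFGSaturations hR.uniformizer N) (hi₀ : ∀ n : N, hR.uniformizer • n ≠ v i₀)
    (hs : LinearIndepOn R v s) (hd : ∀ i, d i ∈ Finsupp.supported R R s)
    (hkd : ∀ i, hR.uniformizer ^ k i • v i = Finsupp.linearCombination R v (d i))
    (hdA : ∀ i j, (d i j : K⟦X⟧) ∈ A) :
    ∃ z, IsSolution i₀ k (fun i => (d i).mapRange R.subtype (map_zero _)) z ∧
      (∀ i, z i ∈ coeffSubring E') ∧
      c ∉ fractionClosure (Algebra.adjoin A (Set.range z)).toSubring := by
  let _ : Algebra A R := (Subring.inclusion hAR).toAlgebra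
  let _ : Module A N := Module.compHom N (algebraMap A R)
  have : IsScalarTower A R N := .of_compHom A R N
  have hdescend (i : I) : ∃ e : I →₀ A, e.mapRange (algebraMap A R) (map_zero _) = d i :=
    (Finsupp.range_mapRange _ (map_zero (algebraMap A R))).ge fun j => ⟨⟨d i j, hdA i j⟩, rfl⟩
  choose e he using hdescend
  obtain rfl : (fun i => (e i).mapRange (algebraMap A R) (map_zero _)) = d := funext he
  have hpure (r : R) (hr : algebraMap A R hA.uniformizer * r ∈ (algebraMap A R).range) :
      r ∈ (algebraMap A R).range := by
    obtain ⟨a, ha⟩ := hr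
    have har : (a : K⟦X⟧) = X * (r : K⟦X⟧) := congrArg Subtype.val ha
    exact ⟨⟨r, hA.mem_of_mul_mem X hA.X_mem X_ne_zero r (har ▸ a.2)⟩, rfl⟩
  have hinj : Function.Injective (algebraMap A R) := Subring.inclusion_injective hAR
  convert hA.exists_isSolution hA.le_coeffSubring hEE' ht htE' hcE hA.notMem hpure hreg hN hi₀ hs
    (d := e) (fun i => ?_) (k := k) fun i => ?_ using 4
  · funext i
    ext1 j
    rfl
  · refine (Finsupp.mem_supported A _).2 (subset_trans ?_ ((Finsupp.mem_supported R _).1 (hd i)))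
    rw [Finsupp.support_mapRange_of_injective _ _ hinj]
  · rw [← linearCombination_mapRange_algebraMap (R := R), ← hkd]
    rfl

lemma IsSolution.exists_linearMap {z : I → K⟦X⟧}
    (hz : IsSolution i₀ k (fun i => (d i).mapRange R.subtype (map_zero _)) z) (hzR : ∀ i, z i ∈ R)
    (hR : IsFractionClosed R) (hv : span R (Set.range v) = ⊤) (hs : LinearIndepOn R v s)
    (hd : ∀ i, d i ∈ Finsupp.supported R R s)
    (hkd : ∀ i, hR.uniformizer ^ k i • v i = Finsupp.linearCombination R v (d i)) :
    ∃ g : N →ₗ[R] R, g (v i₀) = 1 := by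
  let w (i : I) : R := ⟨z i, hzR i⟩
  have hw (i : I) : hR.uniformizer ^ k i • w i = Finsupp.linearCombination R w (d i) := by
    refine Subtype.ext ((hz.2 i).trans ?_)
    rw [show R.subtype = algebraMap R K⟦X⟧ from rfl, linearCombination_mapRange_algebraMap]
    exact (Finsupp.apply_linearCombination R (Algebra.linearMap R K⟦X⟧) w (d i)).symm
  obtain ⟨g, hg⟩ := exists_linearMap_eq_of_pow_smul_eq_linearCombination
    (IsSMulRegular.of_ne_zero hR.prime_uniformizer.ne_zero) hv hs hd hkd hw
  exact ⟨g, (hg i₀).trans (Subtype.ext hz.1)⟩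

end Descend

section UniversalTower

variable {F K Ω I : Type*} [Field F] [Field K] [Algebra F K] [LinearOrder Ω] {t : Ω × I → K}
  {i₀ : I} {c : K⟦X⟧} {base : Subring K⟦X⟧} {stage next : Ω → Subring K⟦X⟧}

/-- A tower of stages that adjoins solutions to all systems of relations: each system is treated at
cofinally many stages `α`, and whenever it has a solution with coefficients in the field generated
by the transcendentals up to `α` whose adjunction does not bring in `c`, then a solution is
contained in `next α`. -/
structure IsUniversalTower (F : Type*) [Field F] [Algebra F K] (t : Ω × I → K) (i₀ : I) (c : K⟦X⟧)
    (base : Subring K⟦X⟧) (stage next : Ω → Subring K⟦X⟧) : Prop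
    extends IsTower base stage next where
  isStage_stage (α : Ω) : IsStage c (stageField F t (Set.Iio α)) (stage α)
  isStage_next (α : Ω) : IsStage c (stageField F t (Set.Iic α)) (next α)
  exists_solution (β : Ω) (k : I → ℕ) (d : I → I →₀ K⟦X⟧) : ∃ α, β < α ∧
    ∀ z, IsSolution i₀ k d z → (∀ i, z i ∈ coeffSubring (stageField F t (Set.Iic α))) →
      c ∉ fractionClosure (Algebra.adjoin (stage α) (Set.range z)).toSubring →
      ∃ z', IsSolution i₀ k d z' ∧ ∀ i, z' i ∈ next α

namespace IsUniversalTower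

lemma mem_sSup_iff [Nonempty Ω] (h : IsUniversalTower F t i₀ c base stage next) {f : K⟦X⟧} :
    f ∈ sSup (Set.range next) ↔ ∃ α, f ∈ next α := by
  rw [Subring.mem_sSup_of_directedOn (Set.range_nonempty next)
    h.monotone_next.isChain_range.directedOn, Set.exists_range_iff]

lemma isStage_sSup [Nonempty Ω] (h : IsUniversalTower F t i₀ c base stage next) :
    IsStage c ⊤ (sSup (Set.range next)) := by
  refine .sSup (Set.range_nonempty next) h.monotone_next.isChain_range.directedOn ?_
  rintro _ ⟨α, rfl⟩
  exact (h.isStage_next α).mono le_top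

lemma base_le_sSup [Nonempty Ω] (h : IsUniversalTower F t i₀ c base stage next) :
    base ≤ sSup (Set.range next) := by
  obtain ⟨α⟩ := ‹Nonempty Ω›
  exact ((h.base_le_stage α).trans (h.stage_le_next α)).trans (le_sSup ⟨α, rfl⟩)

lemma exists_forall_mem_stage {Ω J : Type u} [LinearOrder Ω] {t : Ω × I → K}
    {stage next : Ω → Subring K⟦X⟧} (h : IsUniversalTower F t i₀ c base stage next)
    (hJ : #J < Order.cof Ω) {f : J → K⟦X⟧} (hf : ∀ j, ∃ α, f j ∈ next α) :
    ∃ β, ∀ α, β < α → ∀ j, f j ∈ stage α := by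
  choose b hb using hf
  obtain ⟨β, hβ⟩ := exists_forall_lt_of_mk_lt_cof hJ b
  exact ⟨β, fun α hβα j => h.next_le_stage ((hβ j).trans hβα) (hb j)⟩

theorem exists_linearMap {Ω I : Type u} [LinearOrder Ω] {t : Ω × I → K} {i₀ : I}
    {stage next : Ω → Subring K⟦X⟧} (h : IsUniversalTower F t i₀ c base stage next)
    (ht : AlgebraicIndependent F t) (hc : c ∈ coeffSubring (stageField F t ∅))
    (hI : #(I × I) < Order.cof Ω) {R : Subring K⟦X⟧} (hRnext : ∀ f, f ∈ R ↔ ∃ α, f ∈ next α)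
    (hR : IsFractionClosed R) {N : Type*} [AddCommGroup N] [Module R N]
    (hreg : IsSMulRegular N hR.uniformizer) (hN : HasFGSaturations hR.uniformizer N) {v : I → N}
    (hv : span R (Set.range v) = ⊤) (hi₀ : ∀ n : N, hR.uniformizer • n ≠ v i₀) :
    ∃ g : N →ₗ[R] R, g (v i₀) = 1 := by
  have := hR.isDiscreteValuationRing
  obtain ⟨s, k, d, hs, hd, hkd⟩ :=
    exists_pow_smul_eq_linearCombination hR.prime_uniformizer.irreducible v
  obtain ⟨β, hβ⟩ := h.exists_forall_mem_stage hI fun p : I × I => (hRnext _).1 (d p.1 p.2).2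
  obtain ⟨α, hβα, hα⟩ := h.exists_solution β k fun i => (d i).mapRange R.subtype (map_zero _)
  have hnextR : next α ≤ R := fun f hf => (hRnext f).2 ⟨α, hf⟩
  obtain ⟨z, hz, hzE, hzc⟩ := (h.isStage_stage α).exists_isSolution hR
    ((h.stage_le_next α).trans hnextR) (stageField_mono t Set.Iio_subset_Iic_self)
    (algebraicIndependent_stageField ht Set.self_notMem_Iio)
    (fun i => mem_stageField t Set.self_mem_Iic i)
    (coeffSubring_mono (stageField_mono t (Set.empty_subset _)) hc) hreg hN hi₀ hs hd hkd
    fun i j => hβ α hβα (i, j)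
  obtain ⟨z', hz', hz'α⟩ := hα z hz hzE hzc
  exact hz'.exists_linearMap (fun i => hnextR (hz'α i)) hR hv hs hd hkd

end IsUniversalTower

end UniversalTower

section Cardinality

variable {κ lam : Cardinal.{u}} {I K : Type u}

lemma mk_powerSeries_le_of_power_eq_self [Semiring K] (hκ : ℵ₀ ≤ κ) (hlam : 1 < lam)
    (hpow : lam ^ κ = lam) (hK : #K ≤ lam) : #K⟦X⟧ ≤ lam := by
  have hcoeff : Function.Injective fun (f : K⟦X⟧) (n : ULift.{u} ℕ) => coeff n.down f :=
    fun f g hfg => PowerSeries.ext fun n => congrFun hfg ⟨n⟩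
  exact (mk_le_of_injective hcoeff).trans
    (mk_arrow_le_of_power_eq_self hlam hpow (by simpa using hκ) hK)

lemma mk_relations_le_of_power_eq_self [Zero K] (hκ : ℵ₀ ≤ κ) (hlam : 1 < lam)
    (hpow : lam ^ κ = lam) (hI : #I ≤ κ) (hK : #K ≤ lam) : #((I → ℕ) × (I → I →₀ K)) ≤ lam := by
  have hκlam : κ < lam := (cantor' κ hlam).trans_eq hpow
  have hfinsupp : #(I →₀ K) ≤ lam := (mk_le_of_injective DFunLike.coe_injective).trans
    (mk_arrow_le_of_power_eq_self hlam hpow hI hK)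
  have hnat : #(I → ℕ) ≤ lam :=
    (mk_le_of_injective (Function.Injective.comp_left ULift.up_injective)).trans
      (mk_arrow_le_of_power_eq_self (C := ULift.{u} ℕ) hlam hpow hI
        (by simpa using hκ.trans hκlam.le))
  rw [mk_prod, lift_id, lift_id]
  exact mul_le_of_le (hκ.trans hκlam.le) hnat (mk_arrow_le_of_power_eq_self hlam hpow hI hfinsupp)

theorem exists_isUniversalTower {F : Type*} [Field F] [Field K] [Algebra F K] (hκ : ℵ₀ ≤ κ)
    (hlam : 1 < lam) (hpow : lam ^ κ = lam) (hI : #I ≤ κ) (hK : #K ≤ lam)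
    (t : lam.ord.ToType × I → K) (i₀ : I) {c : K⟦X⟧} {base : Subring K⟦X⟧}
    (hbase : IsStage c (stageField F t ∅) base) :
    ∃ stage next, IsUniversalTower F t i₀ c base stage next := by
  have hκlam : κ < lam := (cantor' κ hlam).trans_eq hpow
  obtain ⟨enum, henum⟩ := exists_enumeration_cofinally (hκ.trans hκlam.le)
    (mk_relations_le_of_power_eq_self hκ hlam hpow hI
      (mk_powerSeries_le_of_power_eq_self hκ hlam hpow hK))
  obtain ⟨stage, next, htower, hstage, hnext, hsol⟩ := exists_isTower_isStage
    (fun α => stageField_mono (F := F) t Set.Iio_subset_Iic_self)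
    (fun β α hβα => stageField_mono t (Set.Iic_subset_Iio.2 hβα))
    (fun α => hbase.mono (stageField_mono t (Set.empty_subset _)))
    fun α => IsSolution i₀ (enum α).1 (enum α).2
  refine ⟨stage, next, htower, hstage, hnext, fun β k d => ?_⟩
  obtain ⟨α, hβα, hα⟩ := henum β (k, d)
  exact ⟨α, hβα, by simpa only [hα] using hsol α⟩

lemma IsUniversalTower.mk_sSup {F K Ω : Type u} {I : Type*} [Field F] [Field K] [Algebra F K]
    [LinearOrder Ω] [Nonempty Ω] {t : Ω × I → K} {i₀ : I} {c : K⟦X⟧}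
    {stage next : Ω → Subring K⟦X⟧}
    (h : IsUniversalTower F t i₀ c (fractionClosure (polynomialSubring (stageField F t ∅)))
      stage next) (hF : #F = lam) (hK : #K⟦X⟧ ≤ lam) :
    #(sSup (Set.range next) : Subring K⟦X⟧) = lam := by
  refine le_antisymm ((mk_subtype_le _).trans hK) ?_
  have hC (a : F) : C (algebraMap F K a) ∈ sSup (Set.range next) :=
    h.base_le_sSup (le_fractionClosure _
      (C_mem_polynomialSubring (algebraMap_mem_stageField t ∅ a)))
  rw [← hF]
  exact mk_le_of_injective (f := fun a => (⟨_, hC a⟩ : (sSup (Set.range next) : Subring K⟦X⟧)))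
    fun a b hab => (algebraMap F K).injective (C_injective (congrArg Subtype.val hab))

theorem exists_isFractionClosed_forall_exists_linearMap (hκ : ℵ₀ ≤ κ) (hlam : 1 < lam)
    (hpow : lam ^ κ = lam) (hI : #I ≤ κ) (i₀ : I) :
    ∃ (K : Type u) (_ : Field K) (R : Subring K⟦X⟧) (hR : IsFractionClosed R),
      NotPAdicComplete R hR.uniformizer ∧ #R = lam ∧
      ∀ (N : Type u) [AddCommGroup N] [Module R N], IsSMulRegular N hR.uniformizer →
        HasFGSaturations hR.uniformizer N → ∀ v : I → N, span R (Set.range v) = ⊤ →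
        (∀ n, hR.uniformizer • n ≠ v i₀) → ∃ g : N →ₗ[R] R, g (v i₀) = 1 := by
  have hκlam : κ < lam := (cantor' κ hlam).trans_eq hpow
  have hℵ₀ : ℵ₀ ≤ lam := hκ.trans hκlam.le
  have : Nonempty lam.ord.ToType := mk_ne_zero_iff.1 (by simpa using (zero_lt_one.trans hlam).ne')
  have hΩI : #(lam.ord.ToType × I) ≤ lam := by
    rw [mk_prod, lift_id, lift_id, mk_ord_toType]
    exact mul_le_of_le hℵ₀ le_rfl (hI.trans hκlam.le)
  have hII : #(I × I) < Order.cof lam.ord.ToType := by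
    rw [mk_prod, lift_id]
    exact (mul_le_of_le hκ hI hI).trans_lt (lt_cof_ord_toType_of_power_eq_self hκ hlam hpow)
  obtain ⟨F, K, _, _, _, t, hF, hK, ht⟩ := exists_field_algebraicIndependent hℵ₀ hΩI
  obtain ⟨stage, next, h⟩ := exists_isUniversalTower hκ hlam hpow hI hK t i₀
    (isStage_fractionClosure_polynomialSubring (stageField F t ∅))
  have hR := h.isStage_sSup.toIsFractionClosed
  have hc := lacunary_mem_coeffSubring (stageField F t ∅)
  have htrunc (n : ℕ) := h.base_le_sSup (le_fractionClosure _ (trunc_mem_polynomialSubring hc n))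
  exact ⟨K, inferInstance, sSup (Set.range next), hR,
    hR.notPAdicComplete htrunc h.isStage_sSup.notMem,
    h.mk_sSup hF (mk_powerSeries_le_of_power_eq_self hκ hlam hpow hK),
    fun N _ _ hreg hN v hv hi₀ =>
      h.exists_linearMap ht hc hII (fun _ => h.mem_sSup_iff) hR hreg hN hv hi₀⟩

end Cardinality

end Construction

section Extensions

open Submodule

section Pushout

variable {R M P₀ P₁ Q : Type*} [CommRing R] [AddCommGroup M] [AddCommGroup P₀] [AddCommGroup P₁]
  [AddCommGroup Q] [Module R M] [Module R P₀] [Module R P₁] [Module R Q]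
  {d : P₁ →ₗ[R] P₀} {f : P₁ →ₗ[R] Q} {ε : P₀ →ₗ[R] M}

lemma mkQ_inl_eq_mkQ_inr (d : P₁ →ₗ[R] P₀) (f : P₁ →ₗ[R] Q) (p : P₁) :
    (LinearMap.range (d.prod (-f))).mkQ (d p, 0) = (LinearMap.range (d.prod (-f))).mkQ (0, f p) :=
  (Submodule.Quotient.eq _).2 ⟨p, by simp⟩

lemma injective_mkQ_comp_inr (hf : LinearMap.ker d ≤ LinearMap.ker f) :
    Function.Injective ((LinearMap.range (d.prod (-f))).mkQ ∘ₗ LinearMap.inr R P₀ Q) := by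
  rw [← LinearMap.ker_eq_bot, LinearMap.ker_eq_bot']
  intro q hq
  obtain ⟨p, hp⟩ := (Submodule.Quotient.mk_eq_zero _).1 hq
  obtain ⟨hp₀, rfl⟩ := Prod.ext_iff.1 hp
  exact neg_eq_zero.2 (hf hp₀)

lemma range_prod_neg_le_ker (hε : Function.Exact d ε) :
    LinearMap.range (d.prod (-f)) ≤ LinearMap.ker (ε ∘ₗ LinearMap.fst R P₀ Q) := by
  rintro _ ⟨p, rfl⟩
  exact hε.apply_apply_eq_zero p

lemma exact_mkQ_comp_inr_liftQ (hε : Function.Exact d ε) :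
    Function.Exact ((LinearMap.range (d.prod (-f))).mkQ ∘ₗ LinearMap.inr R P₀ Q)
      ((LinearMap.range (d.prod (-f))).liftQ (ε ∘ₗ LinearMap.fst R P₀ Q)
        (range_prod_neg_le_ker hε)) := by
  intro n
  obtain ⟨⟨a, q⟩, rfl⟩ := mkQ_surjective _ n
  constructor
  · intro h
    obtain ⟨p, rfl⟩ := (hε a).1 h
    exact ⟨f p + q, .symm ((Submodule.Quotient.eq (LinearMap.range (d.prod (-f)))).2 ⟨p, by simp⟩)⟩
  · rintro ⟨q', hq'⟩
    rw [← hq']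
    exact map_zero ε

end Pushout

variable {R M Q : Type u} [CommRing R] [AddCommGroup M] [Module R M] [AddCommGroup Q] [Module R Q]

/-- Every short exact sequence `0 → Q → N → M → 0` splits; splitting is expressed by a retraction of
`N` onto `Q`. -/
def ExtensionsSplit (R M Q : Type u) [CommRing R] [AddCommGroup M] [Module R M] [AddCommGroup Q]
    [Module R Q] : Prop :=
  ∀ (N : Type u) [AddCommGroup N] [Module R N] (i : Q →ₗ[R] N) (π : N →ₗ[R] M),
    Function.Injective i → Function.Surjective π → Function.Exact i π →
    ∃ g : N →ₗ[R] Q, g ∘ₗ i = LinearMap.id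

namespace ExtensionsSplit

lemma exists_comp_eq (hM : ExtensionsSplit R M Q) {P₀ P₁ : Type u} [AddCommGroup P₀]
    [AddCommGroup P₁] [Module R P₀] [Module R P₁] {d : P₁ →ₗ[R] P₀} {ε : P₀ →ₗ[R] M}
    (hdε : Function.Exact d ε) (hε : Function.Surjective ε) {f : P₁ →ₗ[R] Q}
    (hf : LinearMap.ker d ≤ LinearMap.ker f) : ∃ ψ : P₀ →ₗ[R] Q, ψ ∘ₗ d = f := by
  have hsurj : Function.Surjective ((LinearMap.range (d.prod (-f))).liftQ
      (ε ∘ₗ LinearMap.fst R P₀ Q) (range_prod_neg_le_ker hdε)) := fun m => by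
    obtain ⟨a, rfl⟩ := hε m
    exact ⟨mkQ _ (a, 0), rfl⟩
  obtain ⟨g, hg⟩ := hM _ _ _ (injective_mkQ_comp_inr hf) hsurj (exact_mkQ_comp_inr_liftQ hdε)
  refine ⟨g ∘ₗ mkQ _ ∘ₗ LinearMap.inl R P₀ Q, LinearMap.ext fun p => ?_⟩
  exact (congrArg g (mkQ_inl_eq_mkQ_inr d f p)).trans (LinearMap.congr_fun hg (f p))

open CategoryTheory

lemma subsingleton_ext1 (hM : ExtensionsSplit R M Q) : Subsingleton (ext1 R M Q) := by
  let P := ProjectiveResolution.of (ModuleCat.of R M)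
  have hexact : (P.complex.linearYonedaObj R (ModuleCat.of R Q)).ExactAt 1 := by
    rw [HomologicalComplex.exactAt_iff' _ 0 1 2 (by simp) (by simp),
      ShortComplex.moduleCat_exact_iff]
    intro (f : P.complex.X 1 ⟶ ModuleCat.of R Q) (hf : P.complex.d 2 1 ≫ f = 0)
    have h₁ : Function.Exact (P.complex.d 2 1).hom (P.complex.d 1 0).hom :=
      (ShortComplex.ShortExact.moduleCat_exact_iff_function_exact _).1 (P.exact_succ 0)
    have h₀ : Function.Exact (P.complex.d 1 0).hom (P.π.f 0).hom :=
      (ShortComplex.ShortExact.moduleCat_exact_iff_function_exact _).1 P.exact₀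
    have hker : LinearMap.ker (P.complex.d 1 0).hom ≤ LinearMap.ker f.hom := by
      rw [h₁.linearMap_ker_eq, LinearMap.range_le_ker_iff]
      exact congrArg ModuleCat.Hom.hom hf
    obtain ⟨ψ, hψ⟩ := hM.exists_comp_eq (ε := (P.π.f 0).hom) h₀
      ((ModuleCat.epi_iff_surjective _).1 inferInstance) hker
    exact ⟨ModuleCat.ofHom ψ, show P.complex.d 1 0 ≫ ModuleCat.ofHom ψ = f from
      ModuleCat.hom_ext hψ⟩
  exact ModuleCat.subsingleton_of_isZero
    (hexact.isZero_homology.of_iso (P.isoExt 1 (ModuleCat.of R Q)))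

end ExtensionsSplit

end Extensions

section Generators

open Submodule

lemma IsGenerated.exists_family {R M T : Type u} [Semiring R] [AddCommMonoid M] [Module R M]
    (hM : IsGenerated R M #T) : ∃ f : T → M, span R (Set.range f) = ⊤ := by
  obtain ⟨S, ⟨h⟩, hS⟩ := hM
  refine ⟨Function.extend h Subtype.val 0, top_le_iff.1 (hS.ge.trans (span_mono fun s hs => ?_))⟩
  exact ⟨h ⟨s, hs⟩, h.injective.extend_apply _ _ _⟩

lemma span_range_option_elim_eq_top {R N M T : Type*} [Ring R] [AddCommGroup N] [AddCommGroup M]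
    [Module R N] [Module R M] {i : R →ₗ[R] N} {π : N →ₗ[R] M} (hiπ : Function.Exact i π)
    {v : T → N} (hv : span R (Set.range (π ∘ v)) = ⊤) :
    span R (Set.range fun o : Option T => o.elim (i 1) v) = ⊤ := by
  rw [eq_top_iff]
  intro n _
  obtain ⟨m, hm, hmn⟩ : π n ∈ (span R (Set.range v)).map π := by
    rw [map_span, ← Set.range_comp, hv]
    exact mem_top
  obtain ⟨r, hr⟩ := (hiπ (n - m)).1 (by rw [map_sub, hmn, sub_self])
  have hv' : Set.range v ⊆ Set.range fun o : Option T => o.elim (i 1) v := by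
    rintro _ ⟨t, rfl⟩
    exact ⟨some t, rfl⟩
  rw [← sub_add_cancel n m, ← hr, ← mul_one r, ← smul_eq_mul, map_smul]
  exact add_mem (smul_mem _ _ (subset_span ⟨none, rfl⟩)) (span_mono hv' hm)

lemma smul_ne_apply_one {R N M : Type*} [CommRing R] [AddCommGroup N] [AddCommGroup M] [Module R N]
    [Module R M] {i : R →ₗ[R] N} {π : N →ₗ[R] M} (hi : Function.Injective i)
    (hiπ : Function.Exact i π) {x : R} (hM : IsSMulRegular M x) (hx : ¬ IsUnit x) (n : N) :
    x • n ≠ i 1 := by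
  intro hn
  obtain ⟨r, rfl⟩ := (hiπ n).1 (hM.right_eq_zero_of_smul
    (by rw [← map_smul, hn, hiπ.apply_apply_eq_zero]))
  rw [← map_smul] at hn
  exact hx (.of_mul_eq_one r (hi hn))

end Generators

section Whitehead

open PowerSeries

variable {κ : Cardinal.{u}} {K : Type u} [Field K] {R : Subring K⟦X⟧}

lemma IsFractionClosed.extensionsSplit_self (hR : IsFractionClosed R)
    (hdual : ∀ (N : Type u) [AddCommGroup N] [Module R N], IsSMulRegular N hR.uniformizer →
      HasFGSaturations hR.uniformizer N → ∀ v : Option κ.ord.ToType → N,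
      Submodule.span R (Set.range v) = ⊤ → (∀ n, hR.uniformizer • n ≠ v none) →
      ∃ g : N →ₗ[R] R, g (v none) = 1)
    {M : Type u} [AddCommGroup M] [Module R M] (hfree : IsKappaFree R M (aleph 1))
    (hgen : IsGenerated R M κ) : ExtensionsSplit R M R := by
  intro N _ _ i π hi hπ hiπ
  have := hR.isDiscreteValuationRing
  have := hfree.isTorsionFree
  have hx := hR.prime_uniformizer
  have hxM : IsSMulRegular M hR.uniformizer := .of_ne_zero hx.ne_zero
  have hxN : IsSMulRegular N hR.uniformizer :=
    isSMulRegular_of_range_eq_ker hi hiπ.linearMap_ker_eq.symm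
      (.of_ne_zero hx.ne_zero) hxM
  have : IsNoetherian R (LinearMap.ker π) := by
    rw [hiπ.linearMap_ker_eq]
    infer_instance
  obtain ⟨f, hf⟩ := IsGenerated.exists_family (T := κ.ord.ToType) (by rwa [mk_ord_toType])
  have hlift : π ∘ Function.surjInv hπ ∘ f = f :=
    funext fun t => Function.surjInv_eq hπ (f t)
  obtain ⟨g, hg⟩ := hdual N hxN ((hfree.hasFGSaturations hx.ne_zero).of_linearMap π)
    (fun o => o.elim (i 1) (Function.surjInv hπ ∘ f))
    (span_range_option_elim_eq_top hiπ (hlift.symm ▸ hf))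
    (smul_ne_apply_one hi hiπ hxM hx.not_isUnit)
  exact ⟨g, LinearMap.ext_ring hg⟩

end Whitehead

theorem exists_large_pid_aleph_one_free_implies_whitehead_general {κ lam : Cardinal.{u}}
    (hκ : ℵ₀ ≤ κ) (hlam : 1 < lam) (hpow : lam ^ κ = lam) :
    ∃ (R : Type u) (_ : CommRing R) (p : R),
      IsDomain R ∧ IsPrincipalIdealRing R ∧ ¬ IsField R ∧
      ∃ _ : IsLocalRing R, Prime p ∧ IsLocalRing.maximalIdeal R = Ideal.span {p} ∧
      NotPAdicComplete R p ∧
      #R = lam ∧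
      ∀ (M : Type u) (_ : AddCommGroup M) (_ : Module R M),
        IsKappaFree R M (aleph 1) → IsGenerated R M κ → IsWhitehead R M := by
  obtain ⟨K, _, R, hR, hcomplete, hcard, hdual⟩ :=
    exists_isFractionClosed_forall_exists_linearMap (I := Option κ.ord.ToType) hκ hlam hpow
      (by rw [mk_option, mk_ord_toType, add_one_eq hκ]) none
  have := hR.isDiscreteValuationRing
  exact ⟨R, inferInstance, hR.uniformizer, inferInstance, inferInstance,
    IsDiscreteValuationRing.not_isField R, inferInstance, hR.prime_uniformizer,
    hR.maximalIdeal_eq, hcomplete, hcard, fun M _ _ hfree hgen =>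
      (hR.extensionsSplit_self hdual hfree hgen).subsingleton_ext1⟩

theorem exists_large_pid_aleph_one_free_implies_whitehead :
    ∃ (R : Type) (_ : CommRing R) (p : R),
      IsDomain R ∧ IsPrincipalIdealRing R ∧ ¬ IsField R ∧
      ∃ _ : IsLocalRing R, Prime p ∧ IsLocalRing.maximalIdeal R = Ideal.span {p} ∧
      NotPAdicComplete R p ∧
      #R = 2 ^ aleph 1 ∧
      ∀ (M : Type) (_ : AddCommGroup M) (_ : Module R M),
        IsKappaFree R M (aleph 1) → IsGenerated R M (aleph 1) → IsWhitehead R M :=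
  exists_large_pid_aleph_one_free_implies_whitehead_general (aleph0_le_aleph 1)
    (one_lt_aleph0.trans_le ((aleph0_le_aleph 1).trans (cantor _).le))
    (by rw [← power_mul, mul_eq_self (aleph0_le_aleph 1)])
end

section
/- There exists a commutative ring R such that: R is a principal ideal domain (and not a field); R is local with maximal ideal generated by a prime element p; R is not complete in the p-adic topology; R has cardinality 2^{ℵ₁}; and there exists an R-module M that is ℵ₁-generated, is a Whitehead module (Ext¹_R(M, R) = 0), and is not a free R-module. -/
/-!
Statement 0 (Eklof–Shelah, "Whitehead modules over large principal ideal domains",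
Theorem 1): There is a slender (local, not `p`-adically complete) p.i.d. `R` of
cardinality `2 ^ ℵ₁` such that every `ℵ₁`-free `ℵ₁`-generated `R`-module is a
Whitehead module.
-/

open Cardinal

universe u

/-!
The ring `R` is the ring of constants of a derivation `D : F⟦X⟧ → Frac F⟦X⟧`, where
`F = ℚ(z (s, i))` is a field of rational functions. Such a ring is closed under division in `F⟦X⟧`,
so `D X = 0` makes it a discrete valuation ring with uniformizer `X`.

Fix a ladder system `η : ω₁ → ℕ → S` on a countable set `S`, that is, a family of sequences with
infinite and pairwise almost disjoint ranges. The partial derivatives of the series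
`y (δ, i) = ∑ n, z (η δ n, i) * X ^ n`, collected into a vector indexed by the variables, are
supported on the range of `n ↦ (η δ n, i)`. Hence these vectors are linearly independent modulo the
finitely supported ones, and composing the total differential with a suitable linear functional
gives a `D` which kills `X` and every variable but takes prescribed values on the `y (δ, i)`. With
enough indices `i`, every family `v : ω₁ → Frac F⟦X⟧` occurs as `δ ↦ D (y (δ, i))` for some `i`.

The module `M` has generators `x s` and `y (δ, n)` with `y (δ, n) = x (η δ n) + p • y (δ, n + 1)`.
It is a Whitehead module if the equations `p * w δ (n + 1) - w δ n + f (η δ n) = c δ n` are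
solvable in `R`. Over `F⟦X⟧` they have a unique solution `w` for each `f`, and it lies in `R` as
soon as `D` takes on `∑ n, f (η δ n) * X ^ n` the same value as on `∑ n, c δ n * X ^ n`, which a
suitable `f s = z (s, i)` achieves. Finally `M` is not free: modulo the countably many `x s` it is
`p`-divisible, so a free `M` would have countable rank, yet the `y (δ, 0)` are linearly independent.
-/

section Whitehead

open CategoryTheory Function

theorem lcomp_ker_subtype_surjective_of_projective {R M N P Q : Type*} [CommRing R]
    [AddCommGroup M] [Module R M] [AddCommGroup N] [Module R N] [AddCommGroup P] [Module R P]
    [AddCommGroup Q] [Module R Q] [Module.Projective R P] [Module.Projective R Q]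
    {π : P →ₗ[R] M} {ε : Q →ₗ[R] M} (hπ : Surjective π) (hε : Surjective ε)
    (h : Surjective (LinearMap.lcomp R N π.ker.subtype)) :
    Surjective (LinearMap.lcomp R N ε.ker.subtype) := by
  intro g
  obtain ⟨φ, rfl⟩ := Module.projective_lifting_property π ε hπ
  obtain ⟨ψ, hψ⟩ := Module.projective_lifting_property (π ∘ₗ φ) π hε
  have hψ' (x : P) : π (φ (ψ x)) = π x := LinearMap.congr_fun hψ x
  let ψ' : π.ker →ₗ[R] (π ∘ₗ φ).ker := ψ.restrict fun x hx ↦ by simpa [hψ'] using hx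
  let θ : Q →ₗ[R] (π ∘ₗ φ).ker :=
    (LinearMap.id - ψ ∘ₗ φ).codRestrict _ fun x ↦ by simp [hψ']
  obtain ⟨χ, hχ⟩ := h (g ∘ₗ ψ')
  refine ⟨χ ∘ₗ φ + g ∘ₗ θ, LinearMap.ext fun k ↦ ?_⟩
  have hχk : χ (φ k) = g (ψ' ⟨φ k, k.2⟩) := LinearMap.congr_fun hχ ⟨φ k, k.2⟩
  have hk : ψ' ⟨φ k, k.2⟩ + θ k = k := Subtype.ext (add_sub_cancel (ψ (φ k)) k.1)
  calc χ (φ k) + g (θ k) = g (ψ' ⟨φ k, k.2⟩ + θ k) := by rw [hχk, map_add]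
    _ = g k := by rw [hk]

theorem exists_comp_eq_of_lcomp_ker_subtype_surjective {R M N P₀ P₁ P₂ : Type*} [CommRing R]
    [AddCommGroup M] [Module R M] [AddCommGroup N] [Module R N] [AddCommGroup P₀] [Module R P₀]
    [AddCommGroup P₁] [Module R P₁] [AddCommGroup P₂] [Module R P₂]
    {d₂ : P₂ →ₗ[R] P₁} {d₁ : P₁ →ₗ[R] P₀} {ε : P₀ →ₗ[R] M} (h₂₁ : Exact d₂ d₁) (h₁₀ : Exact d₁ ε)
    (h : Surjective (LinearMap.lcomp R N ε.ker.subtype)) {f : P₁ →ₗ[R] N} (hf : f ∘ₗ d₂ = 0) :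
    ∃ χ : P₀ →ₗ[R] N, χ ∘ₗ d₁ = f := by
  let d : P₁ →ₗ[R] ε.ker := d₁.codRestrict _ fun x ↦ h₁₀.apply_apply_eq_zero x
  have hd : Surjective d := fun k ↦
    ((h₁₀ k).1 k.2).imp fun _ hx ↦ Subtype.ext hx
  have hd₂ : Exact d₂ d := fun x ↦ by rw [← h₂₁ x, Subtype.ext_iff]; rfl
  obtain ⟨g, rfl⟩ := (LinearMap.exact_lcomp_of_exact_of_surjective N hd₂ hd f).1 hf
  obtain ⟨χ, rfl⟩ := h g
  exact ⟨χ, rfl⟩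

theorem isWhitehead_of_lcomp_ker_subtype_surjective {R M P : Type u} [CommRing R]
    [AddCommGroup M] [Module R M] [AddCommGroup P] [Module R P] [Module.Projective R P]
    {π : P →ₗ[R] M} (hπ : Surjective π) (h : Surjective (LinearMap.lcomp R R π.ker.subtype)) :
    IsWhitehead R M := by
  let Q := ProjectiveResolution.of (ModuleCat.of R M)
  suffices hQ : Limits.IsZero ((Q.complex.linearYonedaObj R (ModuleCat.of R R)).homology 1) from
    ModuleCat.subsingleton_of_isZero (hQ.of_iso (Q.isoExt 1 (ModuleCat.of R R)))
  rw [← HomologicalComplex.exactAt_iff_isZero_homology,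
    HomologicalComplex.exactAt_iff' _ 0 1 2 (by simp) (by simp), ShortComplex.moduleCat_exact_iff]
  intro (f : Q.complex.X 1 ⟶ ModuleCat.of R R) (hf : Q.complex.d 2 1 ≫ f = 0)
  have hε : Surjective (Q.π.f 0).hom := (ModuleCat.epi_iff_surjective (Q.π.f 0)).1 inferInstance
  have : Module.Projective R (Q.complex.X 0) :=
    (IsProjective.iff_projective (Q.complex.X 0)).2 (Q.projective 0)
  obtain ⟨χ, hχ⟩ := exists_comp_eq_of_lcomp_ker_subtype_surjective
    ((ShortComplex.ShortExact.moduleCat_exact_iff_function_exact _).1 (Q.exact_succ 0))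
    ((ShortComplex.ShortExact.moduleCat_exact_iff_function_exact _).1 Q.exact₀)
    (lcomp_ker_subtype_surjective_of_projective hπ hε h) (congrArg ModuleCat.Hom.hom hf)
  exact ⟨ModuleCat.ofHom χ, ModuleCat.hom_ext hχ⟩

end Whitehead

section Divisibility

open Module

variable {R M : Type*} [CommRing R] [IsDomain R] [WfDvdMonoid R] [AddCommGroup M] [Module R M]
  {p : R}

theorem eq_zero_of_forall_pow_dvd {r : R} (hp : ¬IsUnit p) (h : ∀ n, p ^ n ∣ r) : r = 0 := by
  by_contra hr
  obtain ⟨n, hn⟩ := FiniteMultiplicity.of_not_isUnit hp hr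
  exact hn (h _)

theorem linearMap_eq_zero_of_sup_range_lsmul_eq_top (hp : ¬IsUnit p) {N : Submodule R M}
    (hN : N ⊔ (LinearMap.lsmul R M p).range = ⊤) {f : M →ₗ[R] R} (hf : N ≤ f.ker) : f = 0 := by
  suffices h : ∀ n m, p ^ n ∣ f m from
    LinearMap.ext fun m ↦ eq_zero_of_forall_pow_dvd hp fun n ↦ h n m
  intro n m
  induction n generalizing m with
  | zero => simp
  | succ n ih =>
    obtain ⟨a, ha, _, ⟨m, rfl⟩, rfl⟩ := Submodule.mem_sup.1 (hN ▸ Submodule.mem_top : m ∈ _)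
    have ha' : f a = 0 := hf ha
    simpa [ha', pow_succ'] using mul_dvd_mul_left p (ih m)

theorem countable_of_basis_of_span_sup_range_lsmul_eq_top (hp : ¬IsUnit p) {S ι : Type*}
    [Countable S] {x : S → M}
    (hx : Submodule.span R (Set.range x) ⊔ (LinearMap.lsmul R M p).range = ⊤) (B : Basis ι R M) :
    Countable ι := by
  have hcover : ⋃ s, ((B.repr (x s)).support : Set ι) = Set.univ := by
    refine Set.eq_univ_of_forall fun i ↦ by_contra fun hi ↦ ?_
    have hker : Submodule.span R (Set.range x) ≤ (B.coord i).ker := by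
      rw [Submodule.span_le, Set.range_subset_iff]
      exact fun s ↦ by_contra fun h ↦ hi (Set.mem_iUnion.2 ⟨s, by simpa using h⟩)
    simpa using LinearMap.congr_fun (linearMap_eq_zero_of_sup_range_lsmul_eq_top hp hx hker) (B i)
  rw [← Set.countable_univ_iff, ← hcover]
  exact Set.countable_iUnion fun s ↦ Finset.countable_toSet _

end Divisibility

section LadderModule

variable (R : Type*) [CommRing R] (p : R) {Ω S : Type*} (η : Ω → ℕ → S)

/-- The element `p • y (δ, n + 1) - y (δ, n) + x (η δ n)` of the free module with basis
`x s = single (inl s) 1` and `y j = single (inr j) 1`, for `j = (δ, n)`. -/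
noncomputable def ladderRelation (j : Ω × ℕ) : (S ⊕ Ω × ℕ) →₀ R :=
  p • Finsupp.single (Sum.inr (j.1, j.2 + 1)) 1 - Finsupp.single (Sum.inr j) 1
    + Finsupp.single (Sum.inl (η j.1 j.2)) 1

/-- The module attached to the ladder system `η`: generated by the `x s` and the `y (δ, n)` subject
to `y (δ, n) = x (η δ n) + p • y (δ, n + 1)`, so that `y (δ, 0)` is a formal sum
`∑ p ^ n • x (η δ n)`. -/
abbrev LadderModule : Type _ :=
  ((S ⊕ Ω × ℕ) →₀ R) ⧸ Submodule.span R (Set.range (ladderRelation R p η))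

namespace LadderModule

variable {R}

/-- The generators of a ladder module: `gen (inl s)` is `x s` and `gen (inr (δ, n))` is
`y (δ, n)`. -/
noncomputable def gen (k : S ⊕ Ω × ℕ) : LadderModule R p η :=
  Submodule.Quotient.mk (Finsupp.single k 1)

theorem span_range_gen : Submodule.span R (Set.range (gen p η)) = ⊤ := by
  have hgen : gen p η = Submodule.mkQ _ ∘ Finsupp.basisSingleOne := by
    ext
    simp [gen]
  rw [hgen, Set.range_comp, Submodule.span_image, Module.Basis.span_eq, Submodule.map_top,
    Submodule.range_mkQ]

theorem gen_inr (δ : Ω) (n : ℕ) :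
    gen p η (Sum.inr (δ, n)) = gen p η (Sum.inl (η δ n)) + p • gen p η (Sum.inr (δ, n + 1)) := by
  have h : p • gen p η (Sum.inr (δ, n + 1)) - gen p η (Sum.inr (δ, n)) +
      gen p η (Sum.inl (η δ n)) = 0 :=
    (Submodule.Quotient.mk_eq_zero _).2 (Submodule.subset_span ⟨(δ, n), rfl⟩)
  rw [eq_comm, ← sub_eq_zero, ← h]
  abel

theorem span_range_gen_inl_sup_range_lsmul :
    Submodule.span R (Set.range fun s ↦ gen p η (Sum.inl s)) ⊔
      (LinearMap.lsmul R (LadderModule R p η) p).range = ⊤ := by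
  rw [eq_top_iff, ← span_range_gen, Submodule.span_le]
  rintro _ ⟨s | ⟨δ, n⟩, rfl⟩
  · exact Submodule.mem_sup_left (Submodule.subset_span ⟨s, rfl⟩)
  · rw [gen_inr]
    exact Submodule.add_mem_sup (Submodule.subset_span ⟨_, rfl⟩) ⟨_, rfl⟩

variable {p η}

/-- The universal property of ladder modules: a linear map out of one is determined by images
`f s` of the `x s` and `w δ n` of the `y (δ, n)` satisfying the relations. -/
noncomputable def lift {V : Type*} [AddCommGroup V] [Module R V] (f : S → V) (w : Ω → ℕ → V)
    (h : ∀ δ n, w δ n = f (η δ n) + p • w δ (n + 1)) : LadderModule R p η →ₗ[R] V :=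
  Submodule.liftQ _ (Finsupp.linearCombination R (Sum.elim f fun j ↦ w j.1 j.2)) <| by
    rw [Submodule.span_le]
    rintro _ ⟨⟨δ, n⟩, rfl⟩
    simp [ladderRelation, h δ n]

theorem lift_gen_inr {V : Type*} [AddCommGroup V] [Module R V] (f : S → V) (w : Ω → ℕ → V)
    (h : ∀ δ n, w δ n = f (η δ n) + p • w δ (n + 1)) (δ : Ω) (n : ℕ) :
    lift f w h (gen p η (Sum.inr (δ, n))) = w δ n := by
  simp [lift, gen]

theorem linearIndependent_gen_inr_zero [IsDomain R] (hp : p ≠ 0) :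
    LinearIndependent R fun δ ↦ gen p η (Sum.inr (δ, 0)) := by
  let K := FractionRing R
  have hpK : algebraMap R K p ≠ 0 := by simpa using hp
  let ψ : LadderModule R p η →ₗ[R] (Ω →₀ K) :=
    lift 0 (fun δ n ↦ Finsupp.single δ ((algebraMap R K p)⁻¹ ^ n)) fun δ n ↦ by
      rw [Pi.zero_apply, zero_add, Finsupp.smul_single, Algebra.smul_def, pow_succ',
        mul_inv_cancel_left₀ hpK]
  have hψ : ψ ∘ (fun δ ↦ gen p η (Sum.inr (δ, 0))) = fun δ ↦ Finsupp.single δ (1 : K) := by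
    ext1 δ
    simp [ψ, lift_gen_inr]
  refine .of_comp ψ (hψ ▸ ?_)
  exact (Finsupp.linearIndependent_single_one K Ω).restrict_scalars' R

theorem not_free [IsDomain R] [WfDvdMonoid R] [Countable S] [Uncountable Ω] (hp₀ : p ≠ 0)
    (hp : ¬IsUnit p) : ¬Module.Free R (LadderModule R p η) := by
  intro hfree
  obtain ⟨ι, B⟩ := hfree.exists_basis
  have : Countable ι := countable_of_basis_of_span_sup_range_lsmul_eq_top hp
    (span_range_gen_inl_sup_range_lsmul p η) B
  have hle := (linearIndependent_gen_inr_zero (η := η) hp₀).cardinal_lift_le_rank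
  rw [← B.mk_eq_rank''] at hle
  have hΩ : #Ω ≤ ℵ₀ := lift_le_aleph0.1 (hle.trans (lift_le_aleph0.2 mk_le_aleph0))
  exact not_countable (mk_le_aleph0_iff.1 hΩ)

end LadderModule

theorem LadderModule.isWhitehead {R : Type u} [CommRing R] {p : R} {Ω S : Type u} {η : Ω → ℕ → S}
    (h : ∀ c : Ω → ℕ → R, ∃ (f : S → R) (w : Ω → ℕ → R),
      ∀ δ n, p * w δ (n + 1) - w δ n + f (η δ n) = c δ n) :
    IsWhitehead R (LadderModule R p η) := by
  let N := Submodule.span R (Set.range (ladderRelation R p η))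
  refine isWhitehead_of_lcomp_ker_subtype_surjective N.mkQ_surjective ?_
  rw [N.ker_mkQ]
  intro g
  obtain ⟨f, w, hfw⟩ := h fun δ n ↦ g ⟨_, Submodule.subset_span ⟨(δ, n), rfl⟩⟩
  refine ⟨Finsupp.linearCombination R (Sum.elim f fun j ↦ w j.1 j.2),
    LinearMap.ext_on Submodule.span_span_coe_preimage ?_⟩
  rintro ⟨_, _⟩ ⟨j, rfl⟩
  simpa [ladderRelation] using hfw j.1 j.2

theorem LadderModule.isGenerated {R : Type u} [CommRing R] {p : R} {Ω S : Type u} {η : Ω → ℕ → S}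
    {κ : Cardinal.{u}} (hκ : ℵ₀ ≤ κ) (hS : #S ≤ κ) (hΩ : #Ω ≤ κ) :
    IsGenerated R (LadderModule R p η) κ := by
  refine ⟨Set.range (gen p η), mk_range_le.trans ?_, span_range_gen p η⟩
  have hΩℕ : #(Ω × ℕ) ≤ κ := by
    simpa using mul_le_of_le hκ hΩ hκ
  simpa using add_le_of_le hκ hS hΩℕ

end LadderModule

section PAdic

variable {R R' : Type*} [CommRing R] [CommRing R'] {p : R} {a : ℕ → R} {L L' : R}

namespace PAdicLimit

theorem map (f : R →+* R') (h : PAdicLimit p a L) :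
    PAdicLimit (f p) (fun n ↦ f (a n)) (f L) := fun n ↦
  (h n).imp fun _ hN j hj ↦ by simpa using map_dvd f (hN j hj)

theorem pAdicCauchy (h : PAdicLimit p a L) : PAdicCauchy p a := fun n ↦
  (h n).imp fun _ hN j hj k hk ↦ by simpa using dvd_sub (hN j hj) (hN k hk)

theorem unique [IsDomain R] [WfDvdMonoid R] (hp : ¬IsUnit p) (h : PAdicLimit p a L)
    (h' : PAdicLimit p a L') : L = L' := by
  refine sub_eq_zero.1 (eq_zero_of_forall_pow_dvd hp fun n ↦ ?_)
  obtain ⟨N, hN⟩ := h n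
  obtain ⟨N', hN'⟩ := h' n
  simpa using dvd_sub (hN' (max N N') (le_max_right _ _)) (hN (max N N') (le_max_left _ _))

end PAdicLimit

end PAdic

section DivisionClosed

variable {W : Type*} [CommRing W]

/-- A subring is closed under division if it contains every quotient `b` of `a * b` by `a ≠ 0`
that exists in the ambient ring. For domains this says that `A` is the intersection of `W` with the
fraction field of `A`. -/
def IsDivisionClosed (A : Subring W) : Prop :=
  ∀ ⦃a b : W⦄, a ∈ A → a ≠ 0 → a * b ∈ A → b ∈ A

namespace IsDivisionClosed

variable {A : Subring W}

theorem coe_dvd_coe (hA : IsDivisionClosed A) {a b : A} : (a : W) ∣ b ↔ a ∣ b := by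
  refine ⟨fun ⟨c, hc⟩ ↦ ?_, map_dvd A.subtype⟩
  by_cases ha : (a : W) = 0
  · rw [ha, zero_mul, ZeroMemClass.coe_eq_zero] at hc
    exact hc ▸ dvd_zero a
  · exact ⟨⟨c, hA a.2 ha (hc ▸ b.2)⟩, Subtype.ext hc⟩

theorem isUnit_coe (hA : IsDivisionClosed A) {a : A} : IsUnit (a : W) ↔ IsUnit a := by
  rw [isUnit_iff_dvd_one, isUnit_iff_dvd_one, ← hA.coe_dvd_coe, OneMemClass.coe_one]

theorem irreducible_of_coe (hA : IsDivisionClosed A) {ϖ : A} (hϖ : Irreducible (ϖ : W)) :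
    Irreducible ϖ := by
  refine ⟨fun h ↦ hϖ.not_isUnit (hA.isUnit_coe.2 h), fun a b hab ↦ ?_⟩
  rw [← hA.isUnit_coe, ← hA.isUnit_coe]
  exact hϖ.isUnit_or_isUnit (congrArg Subtype.val hab)

theorem isDiscreteValuationRing [IsDomain W] [IsDiscreteValuationRing W]
    (hA : IsDivisionClosed A) {ϖ : A} (hϖ : Irreducible (ϖ : W)) : IsDiscreteValuationRing A := by
  refine IsDiscreteValuationRing.ofHasUnitMulPowIrreducibleFactorization
    ⟨ϖ, hA.irreducible_of_coe hϖ, fun {r} hr ↦ ?_⟩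
  have hr' : (r : W) ≠ 0 := by simpa using hr
  obtain ⟨n, hn⟩ := IsDiscreteValuationRing.associated_pow_irreducible hr' hϖ
  exact ⟨n, associated_of_dvd_dvd (hA.coe_dvd_coe.1 hn.symm.dvd) (hA.coe_dvd_coe.1 hn.dvd)⟩

theorem notPAdicComplete [IsDomain W] [WfDvdMonoid W] (hA : IsDivisionClosed A) {ϖ : A}
    (hϖ : ¬IsUnit (ϖ : W)) {a : ℕ → A} {w : W} (hw : w ∉ A)
    (ha : PAdicLimit (ϖ : W) (fun n ↦ a n) w) : NotPAdicComplete A ϖ := by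
  refine ⟨a, fun n ↦ (ha.pAdicCauchy n).imp fun _ hN j hj k hk ↦ hA.coe_dvd_coe.1 ?_, fun L hL ↦ ?_⟩
  · simpa using hN j hj k hk
  · exact hw (ha.unique hϖ (hL.map A.subtype) ▸ L.2)

end IsDivisionClosed

end DivisionClosed

section Derivation

variable {k W V : Type*} [CommRing k] [CommRing W] [Algebra k W] [AddCommGroup V] [Module W V]
  [Module k V]

/-- The ring of constants of a derivation `D`: the elements `w` with `D w = 0`. -/
def ringOfConstants (D : Derivation k W V) : Subring W where
  carrier := {w | D w = 0}
  zero_mem' := map_zero D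
  one_mem' := D.map_one_eq_zero
  add_mem' ha hb := by simp_all
  neg_mem' ha := by simp_all
  mul_mem' ha hb := by simp_all

variable {D : Derivation k W V}

theorem mem_ringOfConstants {w : W} : w ∈ ringOfConstants D ↔ D w = 0 := Iff.rfl

theorem isDivisionClosed_ringOfConstants [IsDomain W] [Module.IsTorsionFree W V] :
    IsDivisionClosed (ringOfConstants D) := by
  intro a b ha ha0 hab
  rw [mem_ringOfConstants, D.leibniz, mem_ringOfConstants.1 ha, smul_zero, add_zero] at hab
  exact (smul_eq_zero.1 hab).resolve_left ha0

open KaehlerDifferential in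
theorem exists_derivation_extending_of_formallyEtale {A B : Type*} [CommRing A] [CommRing B]
    [Algebra k A] [Algebra k B] [Algebra A B] [IsScalarTower k A B] [Algebra.FormallyEtale A B]
    {V : Type*} [AddCommGroup V] [Module A V] [Module B V] [Module k V] [IsScalarTower A B V]
    [IsScalarTower k A V] [IsScalarTower k B V] (d : Derivation k A V) :
    ∃ D : Derivation k B V, ∀ a, D (algebraMap A B a) = d a := by
  let Φ : Ω[B⁄k] →ₗ[B] V := d.liftKaehlerDifferential.liftBaseChange B ∘ₗ
    (tensorKaehlerEquivOfFormallyEtale k A B).symm.toLinearMap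
  exact ⟨Φ.compDer (KaehlerDifferential.D k B), fun a ↦ by
    simp [Φ, tensorKaehlerEquivOfFormallyEtale_symm_D_algebraMap]⟩

theorem exists_dual_derivation_of_isFractionRing (T F : Type*) [DecidableEq T] [Field F]
    [Algebra (MvPolynomial T ℤ) F] [IsFractionRing (MvPolynomial T ℤ) F] (s : T) :
    ∃ d : Derivation ℤ F F, ∀ t,
      d (algebraMap (MvPolynomial T ℤ) F (MvPolynomial.X t)) = if s = t then 1 else 0 := by
  have : Algebra.FormallyEtale (MvPolynomial T ℤ) F :=
    .of_isLocalization (nonZeroDivisors (MvPolynomial T ℤ))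
  obtain ⟨d, hd⟩ := exists_derivation_extending_of_formallyEtale (B := F)
    (MvPolynomial.mkDerivation ℤ fun t ↦ if s = t then (1 : F) else 0)
  exact ⟨d, fun t ↦ (hd _).trans (MvPolynomial.mkDerivation_X ..)⟩

theorem exists_field_with_dual_derivations (T : Type u) [DecidableEq T] :
    ∃ (F : Type u) (_ : Field F) (z : T → F) (d : T → Derivation ℤ F F),
      #F ≤ max #T ℵ₀ ∧ ∀ s t, d s (z t) = if s = t then 1 else 0 := by
  choose d hd using exists_dual_derivation_of_isFractionRing T (FractionRing (MvPolynomial T ℤ))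
  refine ⟨_, _, _, d, ?_, hd⟩
  rw [IsFractionRing.cardinalMk (MvPolynomial T ℤ)]
  exact MvPolynomial.cardinalMk_le_max_lift.trans (by simp [le_total])

theorem injective_of_dual_derivations {F T : Type*} [CommRing F] [Nontrivial F] [DecidableEq T]
    [Algebra k F] {z : T → F} {d : T → Derivation k F F}
    (hd : ∀ s t, d s (z t) = if s = t then 1 else 0) : Function.Injective z := fun s t hst ↦ by
  by_contra hne
  simpa [hne, hd] using congrArg (d s) hst

end Derivation

section LadderSystem

/-- A ladder system: a family of sequences whose ranges are infinite and pairwise almost disjoint.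
The index `j` plays the role of a limit ordinal and `τ j` that of a ladder on it. -/
structure IsLadderSystem {J T : Type*} (τ : J → ℕ → T) : Prop where
  infinite_range (j : J) : (Set.range (τ j)).Infinite
  finite_inter ⦃i j : J⦄ (hij : i ≠ j) : (Set.range (τ i) ∩ Set.range (τ j)).Finite

theorem isLadderSystem_res (α : Type*) : IsLadderSystem (PiNat.res : (ℕ → α) → ℕ → List α) where
  infinite_range x := Set.infinite_range_of_injective fun m n h ↦ by
    simpa using congrArg List.length h
  finite_inter x y hxy := by
    obtain ⟨k, hk⟩ := Function.ne_iff.1 hxy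
    refine ((Set.finite_Iic k).image (PiNat.res x)).subset ?_
    rintro _ ⟨⟨n, rfl⟩, m, hm⟩
    have hmn : m = n := by simpa using congrArg List.length hm
    subst hmn
    exact ⟨m, le_of_not_gt fun hkm ↦ hk (PiNat.res_eq_res.1 hm hkm).symm, rfl⟩

namespace IsLadderSystem

variable {J J' T T' : Type*} {τ : J → ℕ → T}

theorem comp (hτ : IsLadderSystem τ) {f : J' → J} (hf : Function.Injective f) {g : T → T'}
    (hg : Function.Injective g) : IsLadderSystem fun j n ↦ g (τ (f j) n) where
  infinite_range j := by
    simpa only [Set.range_comp' g] using (hτ.infinite_range (f j)).image hg.injOn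
  finite_inter i j hij := by
    simpa only [Set.range_comp' g, ← Set.image_inter hg] using
      (hτ.finite_inter (hf.ne hij)).image g

theorem prod (hτ : IsLadderSystem τ) (I : Type*) :
    IsLadderSystem fun (j : J × I) n ↦ (τ j.1 n, j.2) where
  infinite_range j := by
    simpa only [Set.range_comp' (·, j.2)] using
      (hτ.infinite_range j.1).image (Prod.mk_left_injective j.2).injOn
  finite_inter := by
    rintro ⟨j, i⟩ ⟨j', i'⟩ hij
    by_cases hi : i = i'
    · subst hi
      have hj : j ≠ j' := fun hj ↦ hij (hj ▸ rfl)
      simpa only [Set.range_comp' (·, i), ← Set.image_inter (Prod.mk_left_injective i)] using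
        (hτ.finite_inter hj).image (·, i)
    · refine Set.finite_empty.subset ?_
      rintro _ ⟨⟨m, rfl⟩, n, hn⟩
      exact hi (congrArg Prod.snd hn).symm

end IsLadderSystem

theorem exists_isLadderSystem {Ω : Type u} (hΩ : #Ω ≤ 𝔠) (S : Type*) [Infinite S] :
    ∃ η : Ω → ℕ → S, IsLadderSystem η := by
  obtain ⟨b⟩ : Nonempty (Ω ↪ (ℕ → Bool)) := by
    simpa [← lift_mk_le'] using hΩ
  exact ⟨_, (isLadderSystem_res Bool).comp b.injective
    ((Infinite.natEmbedding S).injective.comp Encodable.encode_injective)⟩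

end LadderSystem

section Functional

open Function

variable {K J T : Type*} [Field K]

theorem exists_linearMap_of_linearIndependent_mkQ {M V : Type*} [AddCommGroup M] [Module K M]
    [AddCommGroup V] [Module K V] {N : Submodule K M} {g : J → M}
    (hg : LinearIndependent K (N.mkQ ∘ g)) (v : J → V) :
    ∃ ℓ : M →ₗ[K] V, N ≤ ℓ.ker ∧ ∀ j, ℓ (g j) = v j := by
  obtain ⟨s, hs⟩ := LinearMap.exists_leftInverse_of_injective _ (LinearMap.ker_eq_bot.2 hg)
  refine ⟨Finsupp.linearCombination K v ∘ₗ s ∘ₗ N.mkQ, fun x hx ↦ ?_, fun j ↦ ?_⟩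
  · have hx' : N.mkQ x = 0 := by simpa using hx
    simp [-Submodule.mkQ_apply, hx']
  · have hsj : s (N.mkQ (g j)) = Finsupp.single j 1 := by
      simpa using LinearMap.congr_fun hs (Finsupp.single j 1)
    simp [-Submodule.mkQ_apply, hsj]

theorem mem_range_lcoeFun {f : T → K} :
    f ∈ (Finsupp.lcoeFun (R := K) : (T →₀ K) →ₗ[K] T → K).range ↔ f.support.Finite := by
  refine ⟨?_, fun hf ↦ ⟨.ofSupportFinite f hf, rfl⟩⟩
  rintro ⟨f, rfl⟩
  exact f.hasFiniteSupport

theorem linearIndependent_mkQ_range_lcoeFun {g : J → T → K} (hg : ∀ j, (support (g j)).Infinite)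
    (hgg : Pairwise fun i j ↦ (support (g i) ∩ support (g j)).Finite) :
    LinearIndependent K
      ((Finsupp.lcoeFun (R := K) : (T →₀ K) →ₗ[K] T → K).range.mkQ ∘ g) := by
  classical
  rw [linearIndependent_iff]
  intro l hl
  rw [Finsupp.linearCombination_linear_comp, LinearMap.comp_apply, ← LinearMap.mem_ker,
    Submodule.ker_mkQ, mem_range_lcoeFun] at hl
  ext j
  have hexceptional : (support (Finsupp.linearCombination K g l) ∪
      ⋃ i ∈ l.support.erase j, support (g i) ∩ support (g j)).Finite :=
    hl.union (Set.Finite.biUnion (Finset.finite_toSet _) fun i hi ↦ hgg (Finset.ne_of_mem_erase hi))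
  obtain ⟨t, htj, ht⟩ := ((hg j).sdiff hexceptional).nonempty
  obtain ⟨hlt, hit⟩ : Finsupp.linearCombination K g l t = 0 ∧
      ∀ i ≠ j, l i ≠ 0 → g i t = 0 := by
    simpa [mem_support.1 htj] using ht
  have hsum : Finsupp.linearCombination K g l t = l j * g j t := by
    rw [Finsupp.linearCombination_apply, Finsupp.sum, Finset.sum_apply]
    refine Finset.sum_eq_single j (fun i hi hij ↦ ?_) fun hj ↦ ?_
    · simp [hit i hij (Finsupp.mem_support_iff.1 hi)]
    · simp [Finsupp.notMem_support_iff.1 hj]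
  exact (mul_eq_zero.1 (hsum.symm.trans hlt)).resolve_right htj

theorem exists_linearMap_apply_eq_of_almostDisjoint_support {g : J → T → K}
    (hg : ∀ j, (support (g j)).Infinite)
    (hgg : Pairwise fun i j ↦ (support (g i) ∩ support (g j)).Finite) (v : J → K) :
    ∃ ℓ : (T → K) →ₗ[K] K, (∀ f : T → K, f.support.Finite → ℓ f = 0) ∧ ∀ j, ℓ (g j) = v j :=
  (exists_linearMap_of_linearIndependent_mkQ (linearIndependent_mkQ_range_lcoeFun hg hgg) v).imp
    fun _ hℓ ↦ ⟨fun _ hf ↦ hℓ.1 (mem_range_lcoeFun.2 hf), hℓ.2⟩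

end Functional

section PowerSeries

open PowerSeries

theorem exists_eq_add_X_mul {A : Type*} [CommRing A] (c : ℕ → A⟦X⟧) :
    ∃ w : ℕ → A⟦X⟧, ∀ n, w n = c n + X * w (n + 1) := by
  refine ⟨fun n ↦ .mk fun m ↦ ∑ k ∈ Finset.range (m + 1), coeff (m - k) (c (n + k)), fun n ↦ ?_⟩
  ext m
  cases m with
  | zero => simp
  | succ m =>
    rw [map_add, coeff_succ_X_mul, coeff_mk, coeff_mk, Finset.sum_range_succ']
    simp [add_comm, add_left_comm]

theorem mk_eq_C_add_X_mul {A : Type*} [CommRing A] (f : ℕ → A) (n : ℕ) :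
    PowerSeries.mk (fun m ↦ f (n + m)) = C (f n) + X * .mk fun m ↦ f (n + 1 + m) := by
  rw [eq_X_mul_shift_add_const (.mk fun m ↦ f (n + m))]
  simp [add_comm, add_left_comm]

theorem pAdicLimit_trunc {A : Type*} [CommRing A] (w : A⟦X⟧) :
    PAdicLimit X (fun n ↦ (trunc n w : A⟦X⟧)) w := by
  refine fun n ↦ ⟨n, fun j hj ↦ (pow_dvd_pow X hj).trans ?_⟩
  rw [dvd_sub_comm]
  nth_rw 1 [eq_X_pow_mul_shift_add_trunc j w]
  simp

theorem cardinalMk_powerSeries (A : Type*) : #A⟦X⟧ = #A ^ ℵ₀ := by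
  change #((Unit →₀ ℕ) → A) = _
  simp

end PowerSeries

section MapCoeff

open PowerSeries

variable {k F : Type*} [CommRing k] [CommRing F] [Algebra k F]

/-- The coefficientwise extension of a derivation of `F` to the power series over `F`. -/
noncomputable def powerSeriesMapCoeff (d : Derivation k F F) : Derivation k F⟦X⟧ F⟦X⟧ :=
  Derivation.mk'
    { toFun w := .mk fun n ↦ d (coeff n w)
      map_add' a b := by ext; simp
      map_smul' c a := by ext; simp } fun a b ↦ by
    ext n
    simp only [LinearMap.coe_mk, AddHom.coe_mk, coeff_mk, map_add, smul_eq_mul, coeff_mul, map_sum,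
      Derivation.leibniz, Finset.sum_add_distrib, add_right_inj]
    exact Finset.Nat.sum_antidiagonal_swap (f := fun ij ↦ coeff ij.1 b * d (coeff ij.2 a))

theorem coeff_powerSeriesMapCoeff (d : Derivation k F F) (w : F⟦X⟧) (n : ℕ) :
    coeff n (powerSeriesMapCoeff d w) = d (coeff n w) := by
  simp [powerSeriesMapCoeff]

variable {K T : Type*} [Field K] [Algebra F⟦X⟧ K] [Algebra k K] [IsScalarTower k F⟦X⟧ K]

variable (K) in
/-- The total differential of power series over `F` with respect to a family `d` of derivations of
`F`, all of them extended coefficientwise. -/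
noncomputable def totalDerivation (d : T → Derivation k F F) : Derivation k F⟦X⟧ (T → K) :=
  Derivation.mk' (LinearMap.pi fun t ↦
    (IsScalarTower.toAlgHom k F⟦X⟧ K).toLinearMap ∘ₗ (powerSeriesMapCoeff (d t)).toLinearMap)
    fun a b ↦ by
      ext t
      simp [Algebra.smul_def]

theorem support_totalDerivation [FaithfulSMul F⟦X⟧ K] (d : T → Derivation k F F) (w : F⟦X⟧) :
    (totalDerivation K d w).support = {t | ∃ n, d t (coeff n w) ≠ 0} := by
  ext t
  have h : totalDerivation K d w t = algebraMap F⟦X⟧ K (powerSeriesMapCoeff (d t) w) := rfl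
  rw [Function.mem_support, h, Ne, FaithfulSMul.algebraMap_eq_zero_iff, PowerSeries.ext_iff]
  simp [coeff_powerSeriesMapCoeff]

variable [FaithfulSMul F⟦X⟧ K] [DecidableEq T] [Nontrivial F] {z : T → F}
  {d : T → Derivation k F F}

theorem exists_derivation_of_isLadderSystem (hd : ∀ s t, d s (z t) = if s = t then 1 else 0)
    {J : Type*} {τ : J → ℕ → T} (hτ : IsLadderSystem τ) (v : J → K) :
    ∃ D : Derivation k F⟦X⟧ K, D X = 0 ∧ (∀ t, D (C (z t)) = 0) ∧
      ∀ j, D (.mk fun n ↦ z (τ j n)) = v j := by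
  let E : Derivation k F⟦X⟧ (T → K) := totalDerivation K d
  have hE_X : (E X).support.Finite := by
    rw [support_totalDerivation]
    refine Set.finite_empty.subset fun t ⟨n, hn⟩ ↦ hn ?_
    rw [coeff_X]
    split_ifs <;> simp
  have hE_C (t : T) : (E (C (z t))).support.Finite := by
    rw [support_totalDerivation]
    refine (Set.finite_singleton t).subset fun s ⟨n, hn⟩ ↦ by_contra fun hst ↦ hn ?_
    rw [coeff_C]
    split_ifs
    · simpa [hd] using hst
    · simp
  have hE_mk (j : J) : (E (.mk fun n ↦ z (τ j n))).support = Set.range (τ j) := by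
    rw [support_totalDerivation]
    ext t
    simp [hd, eq_comm]
  obtain ⟨ℓ, hℓ, hℓv⟩ := exists_linearMap_apply_eq_of_almostDisjoint_support
    (g := fun j ↦ E (.mk fun n ↦ z (τ j n))) (fun j ↦ by simpa [hE_mk] using hτ.infinite_range j)
    (fun i j hij ↦ by simpa [hE_mk] using hτ.finite_inter hij) v
  exact ⟨(ℓ.restrictScalars F⟦X⟧).compDer E, hℓ _ hE_X, fun t ↦ hℓ _ (hE_C t), hℓv⟩

end MapCoeff

section LadderSeries

open PowerSeries

variable {k F V Ω S : Type*} [CommRing k] [Field F] [Algebra k F] [AddCommGroup V] [Module F⟦X⟧ V]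
  [Module k V]

/-- A derivation of `F⟦X⟧` realizes all values along `η` if every `v : Ω → V` is the family of its
values on the series `∑ n, f (η δ n) * X ^ n`, for some `f` taking values in the constants. -/
def RealizesAllValues (D : Derivation k F⟦X⟧ V) (η : Ω → ℕ → S) : Prop :=
  ∀ v : Ω → V, ∃ f : S → F, (∀ s, D (C (f s)) = 0) ∧ ∀ δ, D (.mk fun n ↦ f (η δ n)) = v δ

variable {D : Derivation k F⟦X⟧ V} [Module.IsTorsionFree F⟦X⟧ V]

theorem notPAdicComplete_ringOfConstants (hX : D X = 0) {w : F⟦X⟧} (hw : D w ≠ 0)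
    (hw' : ∀ n, D (C (coeff n w)) = 0) :
    NotPAdicComplete (ringOfConstants D) ⟨X, hX⟩ := by
  have htrunc (n : ℕ) : (trunc n w : F⟦X⟧) ∈ ringOfConstants D := by
    induction n with
    | zero => simp [zero_mem]
    | succ n ih =>
      rw [trunc_succ, Polynomial.coe_add, Polynomial.coe_monomial, monomial_eq_C_mul_X_pow]
      exact add_mem ih (mul_mem (hw' n) (pow_mem hX n))
  exact isDivisionClosed_ringOfConstants.notPAdicComplete (a := fun n ↦ ⟨_, htrunc n⟩)
    X_irreducible.not_isUnit hw (pAdicLimit_trunc w)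

theorem RealizesAllValues.notPAdicComplete [Nonempty Ω] [Nontrivial V] {η : Ω → ℕ → S}
    (hD : RealizesAllValues D η) (hX : D X = 0) : NotPAdicComplete (ringOfConstants D) ⟨X, hX⟩ := by
  obtain ⟨v, hv⟩ := exists_ne (0 : V)
  obtain ⟨f, hf, hfv⟩ := hD fun _ ↦ v
  exact notPAdicComplete_ringOfConstants hX (w := .mk fun n ↦ f (η (Classical.arbitrary Ω) n))
    (by rwa [hfv]) (by simpa using fun n ↦ hf _)

theorem RealizesAllValues.exists_solution {η : Ω → ℕ → S} (hD : RealizesAllValues D η)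
    (hX : D X = 0) (c : Ω → ℕ → ringOfConstants D) :
    ∃ (f : S → ringOfConstants D) (w : Ω → ℕ → ringOfConstants D),
      ∀ δ n, ⟨X, hX⟩ * w δ (n + 1) - w δ n + f (η δ n) = c δ n := by
  choose u hu using fun δ ↦ exists_eq_add_X_mul fun n ↦ (c δ n : F⟦X⟧)
  obtain ⟨f, hf, hfu⟩ := hD fun δ ↦ D (u δ 0)
  let w (δ : Ω) (n : ℕ) : F⟦X⟧ := .mk (fun m ↦ f (η δ (n + m))) - u δ n
  have hw (δ : Ω) (n : ℕ) : X * w δ (n + 1) - w δ n + C (f (η δ n)) = (c δ n : F⟦X⟧) := by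
    simp only [w]
    rw [hu δ n, mk_eq_C_add_X_mul (fun m ↦ f (η δ m)) n]
    ring
  have hDw (δ : Ω) (n : ℕ) : w δ n ∈ ringOfConstants D := by
    induction n with
    | zero => simp [w, mem_ringOfConstants, hfu]
    | succ n ih =>
      refine isDivisionClosed_ringOfConstants (show X ∈ ringOfConstants D from hX) X_ne_zero ?_
      have hXw : X * w δ (n + 1) = (c δ n : F⟦X⟧) + w δ n - C (f (η δ n)) := by rw [← hw]; ring
      rw [hXw]
      exact sub_mem (add_mem (c δ n).2 ih) (hf _)
  exact ⟨fun s ↦ ⟨C (f s), hf s⟩, fun δ n ↦ ⟨w δ n, hDw δ n⟩, fun δ n ↦ Subtype.ext (hw δ n)⟩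

end LadderSeries

section LargeRing

open PowerSeries

theorem IsLadderSystem.exists_realizesAllValues {k F K Ω S I : Type*} [CommRing k] [Field F]
    [Field K] [Algebra k F] [Algebra k K] [Algebra F⟦X⟧ K] [IsScalarTower k F⟦X⟧ K]
    [FaithfulSMul F⟦X⟧ K] [DecidableEq (S × I)] {z : S × I → F} {d : S × I → Derivation k F F}
    (hd : ∀ s t, d s (z t) = if s = t then 1 else 0) {η : Ω → ℕ → S} (hη : IsLadderSystem η)
    {v : I → Ω → K} (hv : Function.Surjective v) :
    ∃ D : Derivation k F⟦X⟧ K, D X = 0 ∧ (∀ t, D (C (z t)) = 0) ∧ RealizesAllValues D η := by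
  obtain ⟨D, hX, hDz, hD⟩ := exists_derivation_of_isLadderSystem hd (hη.prod I)
    fun j : Ω × I ↦ v j.2 j.1
  refine ⟨D, hX, hDz, fun w ↦ ?_⟩
  obtain ⟨i, rfl⟩ := hv w
  exact ⟨fun s ↦ z (s, i), fun s ↦ hDz _, fun δ ↦ hD (δ, i)⟩

theorem IsLadderSystem.exists_realizesAllValues_mk_eq {Ω S : Type u} [Infinite Ω] [Countable S]
    [Nonempty S] {η : Ω → ℕ → S} (hη : IsLadderSystem η) {μ : Cardinal.{u}} (h1 : 1 < μ)
    (hμ : μ ^ #Ω = μ) :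
    ∃ (F : Type u) (_ : Field F) (K : Type u) (_ : Field K) (_ : Algebra F⟦X⟧ K)
      (_ : Module.IsTorsionFree F⟦X⟧ K) (D : Derivation ℤ F⟦X⟧ K),
      D X = 0 ∧ RealizesAllValues D η ∧ #(ringOfConstants D) = μ := by
  classical
  have hΩ : ℵ₀ ≤ #Ω := aleph0_le_mk Ω
  have hμ₀ : ℵ₀ ≤ μ := hΩ.trans ((cantor' _ h1).trans_eq hμ).le
  let I : Type u := μ.out
  have hI : #I = μ := mk_out μ
  obtain ⟨F, _, z, d, hF, hd⟩ := exists_field_with_dual_derivations (S × I)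
  have hFμ : #F ≤ μ := hF.trans <| max_le
    (by simpa [hI] using mul_le_of_le hμ₀ (mk_le_aleph0.trans hμ₀) le_rfl) hμ₀
  have hFX : #F⟦X⟧ ≤ μ := calc
    #F⟦X⟧ = #F ^ ℵ₀ := cardinalMk_powerSeries F
    _ ≤ μ ^ ℵ₀ := power_le_power_right hFμ
    _ ≤ μ ^ #Ω := power_le_power_left (pos_of_gt h1).ne' hΩ
    _ = μ := hμ
  -- `K` is made a variable because `FractionRing` carries two different `ℤ`-algebra structures.
  obtain ⟨K, _, _, _, hK⟩ : ∃ (K : Type u) (_ : Field K) (_ : Algebra F⟦X⟧ K)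
      (_ : FaithfulSMul F⟦X⟧ K), #K = #F⟦X⟧ :=
    ⟨FractionRing F⟦X⟧, inferInstance, inferInstance, inferInstance,
      IsFractionRing.cardinalMk F⟦X⟧ _⟩
  obtain ⟨e⟩ : #(Ω → K) ≤ #I := by
    rw [hI, ← power_def, hK]
    exact (power_le_power_right hFX).trans_eq hμ
  -- A plain `IsScalarTower ℤ F⟦X⟧ K` refers to the `zsmul` actions, not to the algebra structures.
  have := IsScalarTower.of_algebraMap_eq' (R := ℤ) (S := F⟦X⟧) (A := K) (RingHom.ext_int _ _)
  obtain ⟨D, hX, hDz, hD⟩ := hη.exists_realizesAllValues hd (Function.invFun_surjective e.injective)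
  refine ⟨F, _, K, _, _, inferInstance, D, hX, hD, ?_⟩
  refine le_antisymm ((mk_subtype_le _).trans hFX) ?_
  rw [← hI]
  refine mk_le_of_injective (f := fun i : I ↦ (⟨C (z (Classical.arbitrary S, i)), hDz _⟩ :
    ringOfConstants D)) fun i j hij ↦ ?_
  exact congrArg Prod.snd
    (injective_of_dual_derivations hd (C_injective (congrArg Subtype.val hij)))

theorem exists_large_pid_with_nonfree_whitehead_module_general {μ : Cardinal.{u}} (h1 : 1 < μ)
    (hμ : μ ^ aleph 1 = μ) :
    ∃ (R : Type u) (_ : CommRing R) (p : R),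
      IsDomain R ∧ IsPrincipalIdealRing R ∧ ¬ IsField R ∧
      ∃ _ : IsLocalRing R, Prime p ∧ IsLocalRing.maximalIdeal R = Ideal.span {p} ∧
      NotPAdicComplete R p ∧
      #R = μ ∧
      ∃ (M : Type u) (_ : AddCommGroup M) (_ : Module R M),
        IsGenerated R M (aleph 1) ∧ IsWhitehead R M ∧ ¬ Module.Free R M := by
  let Ω : Type u := (aleph 1).out
  have hΩ : #Ω = aleph 1 := mk_out _
  have : Uncountable Ω := aleph0_lt_mk_iff.1 (hΩ ▸ aleph0_lt_aleph_one)
  obtain ⟨η, hη⟩ := exists_isLadderSystem (hΩ.trans_le aleph_one_le_continuum) (ULift.{u} ℕ)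
  obtain ⟨F, _, K, _, _, _, D, hX, hD, hcard⟩ :=
    hη.exists_realizesAllValues_mk_eq h1 (hΩ.symm ▸ hμ)
  let p : ringOfConstants D := ⟨X, hX⟩
  have hp : Irreducible p := isDivisionClosed_ringOfConstants.irreducible_of_coe X_irreducible
  have : IsDiscreteValuationRing (ringOfConstants D) :=
    isDivisionClosed_ringOfConstants.isDiscreteValuationRing (ϖ := p) X_irreducible
  exact ⟨ringOfConstants D, inferInstance, p, inferInstance, inferInstance,
    IsDiscreteValuationRing.not_isField _, inferInstance, hp.prime, hp.maximalIdeal_eq,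
    hD.notPAdicComplete hX, hcard,
    LadderModule (ringOfConstants D) p η, inferInstance, inferInstance,
    LadderModule.isGenerated (aleph0_le_aleph 1) (mk_le_aleph0.trans (aleph0_le_aleph 1)) hΩ.le,
    LadderModule.isWhitehead (hD.exists_solution hX),
    LadderModule.not_free hp.ne_zero hp.not_isUnit⟩

end LargeRing

/-- Eklof–Shelah, Theorem 1, second assertion: there is a slender
(local, not `p`-adically complete) p.i.d. `R` of cardinality `2 ^ ℵ₁` admitting an
`ℵ₁`-generated Whitehead `R`-module which is not free. -/
theorem exists_large_pid_with_nonfree_whitehead_module :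
    ∃ (R : Type) (_ : CommRing R) (p : R),
      IsDomain R ∧ IsPrincipalIdealRing R ∧ ¬ IsField R ∧
      ∃ _ : IsLocalRing R, Prime p ∧ IsLocalRing.maximalIdeal R = Ideal.span {p} ∧
      NotPAdicComplete R p ∧
      #R = 2 ^ aleph 1 ∧
      ∃ (M : Type) (_ : AddCommGroup M) (_ : Module R M),
        IsGenerated R M (aleph 1) ∧ IsWhitehead R M ∧ ¬ Module.Free R M :=
  exists_large_pid_with_nonfree_whitehead_module_general
    ((one_lt_aleph0.trans_le (aleph0_le_aleph 1)).trans (cantor _)) (by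
    rw [← power_mul, mul_eq_self (aleph0_le_aleph 1)])
end

section
/- There exists a commutative ring R such that: R is a principal ideal domain (and not a field); R has cardinality ℵ₂; and every ℵ₁-generated R-module M which is a Whitehead module (Ext¹_R(M, R) = 0) is a free R-module. -/
/-!
Statement 0 (Eklof–Shelah, "Whitehead modules over large principal ideal domains",
Theorem 1): There is a slender (local, not `p`-adically complete) p.i.d. `R` of
cardinality `2 ^ ℵ₁` such that every `ℵ₁`-free `ℵ₁`-generated `R`-module is a
Whitehead module.
-/

open Cardinal

universe u

open CategoryTheory Polynomial

/-!
Take `R = k[X]` with `#k = ℵ₂`, and let `0 → K → F → M → 0` be exact with `F` free on `ℵ₁`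
generators, so that `K` is free on a basis `(cⱼ)` with at most `ℵ₁` elements. The coordinates of the
`cⱼ` all lie in `R₀ = k₀[X]` for a subfield `k₀` of cardinality at most `ℵ₁`, and `R` is free over
`R₀` with a basis `(bᵢ)` of size `ℵ₂`. Distinct `cⱼ` can thus be sent to distinct `bᵢ`, so one
single functional `g : K → R` encodes the whole basis of `K`. As `M` is Whitehead, `g` extends to
`F`. An `R₀`-linear map `R → K` decoding `bᵢ` into `cⱼ` then turns this extension into an
`R`-linear retraction of `F` onto `K`, which makes `M` a submodule of `F` and hence free.
-/

section SubmodulesOfFreeModules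

variable {R ι : Type*} [CommRing R]

theorem exists_mem_forall_mem_apply_dvd [IsPrincipalIdealRing R] {M : Type*} [AddCommGroup M]
    [Module R M] (N : Submodule R M) (f : M →ₗ[R] R) : ∃ v ∈ N, ∀ x ∈ N, f v ∣ f x := by
  obtain ⟨v, hvN, hv⟩ := Submodule.IsPrincipal.generator_mem (N.map f)
  refine ⟨v, hvN, fun x hx ↦ ?_⟩
  rw [hv]
  exact (Submodule.IsPrincipal.mem_iff_generator_dvd _).1 (Submodule.mem_map_of_mem hx)

variable [LinearOrder ι]

theorem linearIndepOn_of_forall_mem_supported_Iic {s : Set ι} {v : ι → ι →₀ R}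
    (hv : ∀ i ∈ s, v i ∈ Finsupp.supported R R (Set.Iic i))
    (hs : ∀ i ∈ s, v i i ∈ nonZeroDivisors R) : LinearIndepOn R v s := by
  rw [LinearIndepOn, linearIndependent_iff]
  intro l hl
  by_contra hne
  obtain ⟨m, hm, hmax⟩ :=
    l.support.exists_max_image Subtype.val (Finsupp.support_nonempty_iff.2 hne)
  have coord_eq_zero : l m * v m m = 0 := by
    have h0 : (l.sum fun i a ↦ a • v i) m = 0 := DFunLike.congr_fun hl (m : ι)
    rwa [Finsupp.sum, Finsupp.finsetSum_apply, Finset.sum_eq_single_of_mem m hm] at h0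
    intro i hi him
    have him' : (i : ι) < m := (hmax i hi).lt_of_ne (Subtype.coe_injective.ne him)
    simp [(Finsupp.mem_supported' R _).1 (hv i i.2) m him'.not_ge]
  exact Finsupp.mem_support_iff.1 hm
    ((mul_right_mem_nonZeroDivisors_eq_zero_iff (hs m m.2)).1 coord_eq_zero)

theorem le_span_image_of_forall_apply_dvd [WellFoundedLT ι] {N : Submodule R (ι →₀ R)}
    {v : ι → ι →₀ R} (hv : ∀ i, v i ∈ N ⊓ Finsupp.supported R R (Set.Iic i))
    (hdvd : ∀ i, ∀ x ∈ N ⊓ Finsupp.supported R R (Set.Iic i), v i i ∣ x i) :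
    N ≤ Submodule.span R (v '' {i | v i i ≠ 0}) := by
  intro x hxN
  induction hx : x.support.max using WellFoundedLT.induction generalizing x with
  | ind d ih =>
  obtain rfl | hne := eq_or_ne x 0
  · exact zero_mem _
  obtain ⟨m, hm⟩ := Finset.max_of_nonempty (Finsupp.support_nonempty_iff.2 hne)
  have x_supported : x ∈ Finsupp.supported R R (Set.Iic m) := fun j hj ↦ Finset.le_max_of_eq hj hm
  obtain ⟨c, hc⟩ := hdvd m x ⟨hxN, x_supported⟩
  have hvm : v m m ≠ 0 := by
    intro h
    refine Finsupp.mem_support_iff.1 (Finset.mem_of_max hm) ?_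
    rw [hc, h, zero_mul]
  let y := x - c • v m
  have y_supported : y ∈ Finsupp.supported R R (Set.Iic m) :=
    sub_mem x_supported (Submodule.smul_mem _ c (hv m).2)
  have hym : y m = 0 := by simp [y, hc, mul_comm]
  have y_max_lt : y.support.max < d := by
    rw [← hx, hm, Finset.max_eq_sup_coe, Finset.sup_lt_iff (WithBot.bot_lt_coe m)]
    intro j hj
    refine WithBot.coe_lt_coe.2 (lt_of_le_of_ne (y_supported hj) ?_)
    rintro rfl
    exact Finsupp.mem_support_iff.1 hj hym
  have hy := ih _ y_max_lt (sub_mem hxN (N.smul_mem c (hv m).1)) rfl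
  rw [← sub_add_cancel x (c • v m)]
  exact add_mem hy (Submodule.smul_mem _ c (Submodule.subset_span ⟨m, hvm, rfl⟩))

end SubmodulesOfFreeModules

section PrincipalIdealDomain

variable {R ι M : Type*} [CommRing R] [IsDomain R] [IsPrincipalIdealRing R] [AddCommGroup M]
  [Module R M]

theorem exists_basis_submodule_finsupp_of_pid (N : Submodule R (ι →₀ R)) :
    ∃ J : Set ι, Nonempty (Module.Basis J R N) := by
  obtain ⟨_, _⟩ := exists_wellFoundedLT ι
  choose v hv hdvd using fun i ↦
    exists_mem_forall_mem_apply_dvd (N ⊓ Finsupp.supported R R (Set.Iic i)) (Finsupp.lapply i)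
  let J : Set ι := {i | v i i ≠ 0}
  have hli : LinearIndepOn R v J := linearIndepOn_of_forall_mem_supported_Iic
    (fun i _ ↦ (hv i).2) fun _ hi ↦ mem_nonZeroDivisors_of_ne_zero hi
  have hspan : Submodule.span R (Set.range fun i : J ↦ v i) = N := by
    rw [← Set.image_eq_range]
    refine le_antisymm (Submodule.span_le.2 ?_) (le_span_image_of_forall_apply_dvd hv hdvd)
    exact Set.image_subset_iff.2 fun i _ ↦ (hv i).1
  exact ⟨J, ⟨(Module.Basis.span hli).map (LinearEquiv.ofEq _ _ hspan)⟩⟩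

theorem exists_basis_submodule_of_pid (b : Module.Basis ι R M) (N : Submodule R M) :
    ∃ J : Set ι, Nonempty (Module.Basis J R N) := by
  obtain ⟨J, ⟨c⟩⟩ := exists_basis_submodule_finsupp_of_pid (N.map b.repr.toLinearMap)
  exact ⟨J, ⟨c.map (b.repr.submoduleMap N).symm⟩⟩

theorem free_of_injective_of_pid {F : Type*} [AddCommGroup F] [Module R F] [Module.Free R F]
    (f : M →ₗ[R] F) (hf : Function.Injective f) : Module.Free R M := by
  obtain ⟨J, ⟨b⟩⟩ := exists_basis_submodule_of_pid (Module.Free.chooseBasis R F) f.range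
  exact Module.Free.of_basis (b.map (LinearEquiv.ofInjective f hf).symm)

end PrincipalIdealDomain

section Extensions

theorem subsingleton_abelianExt_succ_of_isZero_ext {R C : Type*} [Ring R] [Category* C] [Abelian C]
    [Linear R C] [EnoughProjectives C] [HasExt C] {X Y : C} {n : ℕ}
    (h : Limits.IsZero (((Ext R C (n + 1)).obj (Opposite.op X)).obj Y)) :
    Subsingleton (Abelian.Ext X Y (n + 1)) := by
  let P := ProjectiveResolution.of X
  have hexact : (P.complex.linearYonedaObj R Y).ExactAt (n + 1) :=
    (HomologicalComplex.exactAt_iff_isZero_homology _ _).2 (h.of_iso (P.isoExt (n + 1) Y).symm)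
  rw [HomologicalComplex.exactAt_iff' _ n (n + 1) (n + 2) (by simp) (by simp),
    ShortComplex.moduleCat_exact_iff] at hexact
  refine subsingleton_of_forall_eq 0 fun α ↦ ?_
  obtain ⟨f, hf, rfl⟩ := P.extMk_surjective α (n + 2) rfl
  exact (P.extMk_eq_zero_iff f _ rfl hf n rfl).2 (hexact f hf)

theorem exists_comp_eq_of_subsingleton_ext {C : Type*} [Category* C] [Abelian C] [HasExt C]
    {S : ShortComplex C} (hS : S.ShortExact) {Y : C} [Subsingleton (Abelian.Ext S.X₃ Y 1)]
    (g : S.X₁ ⟶ Y) : ∃ h : S.X₂ ⟶ Y, S.f ≫ h = g := by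
  obtain ⟨α, hα⟩ := Abelian.Ext.contravariant_sequence_exact₁ hS Y (Abelian.Ext.mk₀ g) rfl
    (Subsingleton.elim _ _)
  obtain ⟨h, rfl⟩ := Abelian.Ext.mk₀_bijective _ _ |>.2 α
  exact ⟨h, Abelian.Ext.mk₀_bijective _ _ |>.1 (by rw [← Abelian.Ext.mk₀_comp_mk₀, hα])⟩

theorem exists_extension_of_subsingleton_ext1 {R M N F : Type u} [CommRing R] [AddCommGroup M]
    [Module R M] [AddCommGroup N] [Module R N] [AddCommGroup F] [Module R F]
    (h : Subsingleton (ext1 R M N)) {q : F →ₗ[R] M} (hq : Function.Surjective q)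
    (g : q.ker →ₗ[R] N) : ∃ g' : F →ₗ[R] N, g' ∘ₗ q.ker.subtype = g := by
  have := subsingleton_abelianExt_succ_of_isZero_ext
    (@ModuleCat.isZero_of_subsingleton _ _ (ext1 R M N) h)
  obtain ⟨g', hg'⟩ := exists_comp_eq_of_subsingleton_ext
    (LinearMap.shortExact_shortComplexKer hq) (Y := ModuleCat.of R N) (ModuleCat.ofHom g)
  exact ⟨g'.hom, congrArg ModuleCat.Hom.hom hg'⟩

theorem mem_span_range_basis_of_forall_repr_mem_range {R₀ R F S : Type*} [CommSemiring R₀]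
    [Semiring R] [Algebra R₀ R] [AddCommMonoid F] [Module R F] [Module R₀ F] [IsScalarTower R₀ R F]
    (β : Module.Basis S R F) {x : F} (hx : ∀ s, β.repr x s ∈ Set.range (algebraMap R₀ R)) :
    x ∈ Submodule.span R₀ (Set.range β) := by
  rw [← β.linearCombination_repr x, Finsupp.linearCombination_apply]
  refine sum_mem fun s _ ↦ ?_
  obtain ⟨a, ha⟩ := hx s
  change β.repr x s • β s ∈ _
  rw [← ha, algebraMap_smul]
  exact Submodule.smul_mem _ a (Submodule.subset_span (Set.mem_range_self s))

theorem exists_retraction_of_forall_exists_extension {R₀ R K F I J S : Type*} [CommRing R₀]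
    [CommRing R] [Algebra R₀ R] [AddCommGroup K] [Module R K] [Module R₀ K] [IsScalarTower R₀ R K]
    [AddCommGroup F] [Module R F] [Module R₀ F] [IsScalarTower R₀ R F]
    (b : Module.Basis I R₀ R) (c : Module.Basis J R K) (e : J ↪ I) (β : Module.Basis S R F)
    {f : K →ₗ[R] F} (hf : ∀ j, f (c j) ∈ Submodule.span R₀ (Set.range β))
    (hext : ∀ g : K →ₗ[R] R, ∃ g' : F →ₗ[R] R, g' ∘ₗ f = g) :
    ∃ ρ : F →ₗ[R] K, ρ ∘ₗ f = LinearMap.id := by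
  obtain ⟨g, hg⟩ := hext (c.constr ℕ (b ∘ e))
  let decode : R →ₗ[R₀] K := b.constr ℕ (Function.extend e c 0)
  let ρ : F →ₗ[R] K := β.constr ℕ (decode ∘ g ∘ β)
  -- `ρ` is `R`-linear and `decode ∘ g` only `R₀`-linear, so they need not agree on all of `F`.
  have ρ_eq_decode : ∀ x ∈ Submodule.span R₀ (Set.range β), ρ x = decode (g x) :=
    LinearMap.eqOn_span (f := ρ.restrictScalars R₀) (g := decode ∘ₗ g.restrictScalars R₀) <| by
      rintro _ ⟨s, rfl⟩
      simp [ρ]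
  refine ⟨ρ, c.ext fun j ↦ ?_⟩
  calc ρ (f (c j)) = decode (g (f (c j))) := ρ_eq_decode _ (hf j)
    _ = decode (b (e j)) := by rw [← LinearMap.comp_apply, hg, c.constr_basis, Function.comp_apply]
    _ = c j := by simp [decode, e.injective.extend_apply]

end Extensions

section LargeFreeSubrings

/-- Every set of at most `κ` elements of `R` lies in a subring over which `R` is free of rank at
least `κ`. Over a p.i.d. with this property, the `κ`-generated Whitehead modules are free.
Subrings are encoded as algebra maps `R₀ → R`, which are injective as soon as `R` is nontrivial
and has a basis over `R₀`. -/
def HasLargeFreeSubrings (R : Type u) [CommRing R] (κ : Cardinal.{u}) : Prop :=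
  ∀ T : Set R, #T ≤ κ → ∃ (R₀ : Type u) (_ : CommRing R₀) (_ : Algebra R₀ R) (I : Type u),
    T ⊆ Set.range (algebraMap R₀ R) ∧ κ ≤ #I ∧ Nonempty (Module.Basis I R₀ R)

variable {κ : Cardinal.{u}}

theorem IsWhitehead.free_of_hasLargeFreeSubrings {R M : Type u} [CommRing R] [IsDomain R]
    [IsPrincipalIdealRing R] [AddCommGroup M] [Module R M] (hM : IsWhitehead R M)
    (hκ : ℵ₀ ≤ κ) (hR : HasLargeFreeSubrings R κ) (hgen : IsGenerated R M κ) :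
    Module.Free R M := by
  obtain ⟨S, hS, hspan⟩ := hgen
  let q : (S →₀ R) →ₗ[R] M := Finsupp.linearCombination R (↑)
  have hq : Function.Surjective q := by
    rw [← LinearMap.range_eq_top, Finsupp.range_linearCombination, Subtype.range_coe, hspan]
  obtain ⟨J, ⟨c⟩⟩ := exists_basis_submodule_finsupp_of_pid q.ker
  have hJ : #J ≤ κ := (mk_set_le J).trans hS
  let coords : Set R := Set.range fun x : J × S ↦ (c x.1 : S →₀ R) x.2
  have hcoords : #coords ≤ κ := by
    refine mk_range_le.trans ?_
    rw [mk_prod, lift_id, lift_id]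
    exact mul_le_of_le hκ hJ hS
  obtain ⟨R₀, _, _, I, hR₀, hI, ⟨b⟩⟩ := hR coords hcoords
  obtain ⟨e⟩ := hJ.trans hI
  obtain ⟨ρ, hρ⟩ : ∃ ρ : (S →₀ R) →ₗ[R] q.ker, ρ ∘ₗ q.ker.subtype = LinearMap.id := by
    refine exists_retraction_of_forall_exists_extension b c e Finsupp.basisSingleOne (fun j ↦ ?_)
      (exists_extension_of_subsingleton_ext1 hM hq)
    exact mem_span_range_basis_of_forall_repr_mem_range _ fun s ↦ hR₀ ⟨(j, s), rfl⟩
  have split_iff := Function.Exact.split_tfae (M := q.ker) (N := S →₀ R) (P := M)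
    (LinearMap.exact_subtype_ker_map q) q.ker.injective_subtype hq
  obtain ⟨s, hs⟩ : ∃ s : M →ₗ[R] S →₀ R, q ∘ₗ s = LinearMap.id :=
    (split_iff.out 0 1 rfl rfl).2 ⟨ρ, hρ⟩
  exact free_of_injective_of_pid s (LinearMap.injective_of_comp_eq_id s q hs)

theorem cardinalMk_le_max_of_span_eq_top {R A : Type u} [CommSemiring R] [Semiring A] [Algebra R A]
    {s : Set A} (hs : Submodule.span R s = ⊤) : #A ≤ #R ⊔ #s ⊔ ℵ₀ := by
  have hadjoin : Algebra.adjoin R s = ⊤ :=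
    Algebra.toSubmodule_eq_top.1 (top_le_iff.1 (hs ▸ Algebra.span_le_adjoin R s))
  calc #A = #(Algebra.adjoin R s) := by rw [hadjoin]; exact mk_univ.symm
    _ ≤ #R ⊔ #s ⊔ ℵ₀ := Algebra.cardinalMk_adjoin_le R s

theorem hasLargeFreeSubrings_of_lt_cardinalMk {k : Type u} [Field k] (hκ : ℵ₀ ≤ κ) (hk : κ < #k) :
    HasLargeFreeSubrings k κ := by
  intro T hT
  let k₀ := Subfield.closure T
  have hk₀ : #k₀ ≤ κ := (Subfield.cardinalMk_closure_le_max T).trans (max_le hT hκ)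
  let b := Module.Basis.ofVectorSpace k₀ k
  refine ⟨k₀, inferInstance, inferInstance, _, ?_, ?_, ⟨b⟩⟩
  · exact fun x hx ↦ ⟨⟨x, Subfield.subset_closure hx⟩, rfl⟩
  · by_contra! hI
    refine hk.not_ge ((cardinalMk_le_max_of_span_eq_top b.span_eq).trans ?_)
    exact max_le (max_le hk₀ (mk_range_le.trans hI.le)) hκ

theorem HasLargeFreeSubrings.polynomial {A : Type u} [CommRing A] (hκ : ℵ₀ ≤ κ)
    (hA : HasLargeFreeSubrings A κ) : HasLargeFreeSubrings A[X] κ := by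
  intro T hT
  let coeffs : Set A := Set.range fun x : T × ℕ ↦ (x.1 : A[X]).coeff x.2
  have hcoeffs : #coeffs ≤ κ := by
    refine mk_range_le.trans ?_
    simp only [mk_prod, mk_nat, lift_aleph0, lift_uzero]
    exact mul_le_of_le hκ hT hκ
  obtain ⟨A₀, _, _, I, hA₀, hI, ⟨b⟩⟩ := hA coeffs hcoeffs
  let : Algebra A₀[X] A[X] := Polynomial.algebra A₀ A
  have hbc : IsBaseChange A₀[X] (IsScalarTower.toAlgHom A₀ A A[X]).toLinearMap :=
    Algebra.IsPushout.out
  refine ⟨A₀[X], inferInstance, inferInstance, I, fun p hp ↦ ?_, hI, ⟨hbc.basis b⟩⟩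
  exact (lifts_iff_set_range _).1
    ((lifts_iff_coeff_lifts p).2 fun n ↦ hA₀ ⟨(⟨p, hp⟩, n), rfl⟩)

end LargeFreeSubrings

theorem exists_pid_aleph_two_whitehead_implies_free_general {κ μ : Cardinal.{u}} (hκ : ℵ₀ ≤ κ)
    (hκμ : κ < μ) :
    ∃ (R : Type u) (_ : CommRing R),
      IsDomain R ∧ IsPrincipalIdealRing R ∧ ¬ IsField R ∧
      #R = μ ∧
      ∀ (M : Type u) (_ : AddCommGroup M) (_ : Module R M),
        IsGenerated R M κ → IsWhitehead R M → Module.Free R M := by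
  have hμ : ℵ₀ ≤ μ := hκ.trans hκμ.le
  obtain ⟨k, rfl⟩ : ∃ k : Type u, #k = μ := ⟨μ.out, mk_out μ⟩
  have : Infinite k := infinite_iff.2 hμ
  obtain ⟨_⟩ := Infinite.nonempty_field (α := k)
  have hk : HasLargeFreeSubrings k[X] κ :=
    (hasLargeFreeSubrings_of_lt_cardinalMk hκ hκμ).polynomial hκ
  refine ⟨k[X], inferInstance, inferInstance, inferInstance, Polynomial.not_isField k, ?_,
    fun M _ _ hgen hM ↦ hM.free_of_hasLargeFreeSubrings hκ hk hgen⟩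
  rw [Polynomial.cardinalMk_eq_max, max_eq_left hμ]

/-- Eklof–Shelah, Theorem 2: there is a p.i.d. `R` of cardinality `ℵ₂`
such that an `ℵ₁`-generated `R`-module is Whitehead only if it is free. -/
theorem exists_pid_aleph_two_whitehead_implies_free :
    ∃ (R : Type) (_ : CommRing R),
      IsDomain R ∧ IsPrincipalIdealRing R ∧ ¬ IsField R ∧
      #R = aleph 2 ∧
      ∀ (M : Type) (_ : AddCommGroup M) (_ : Module R M),
        IsGenerated R M (aleph 1) → IsWhitehead R M → Module.Free R M :=
  exists_pid_aleph_two_whitehead_implies_free_general (aleph0_le_aleph 1)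
    (aleph_lt_aleph.2 one_lt_two)
end

section
/- Suppose R′ is an integral domain with a prime element p such that ⋂_{n ∈ ℕ} pⁿR′ = 0. Then the localization R′_{(p)} of R′ at the prime ideal pR′ (i.e., the localization at the complement of pR′) is a principal ideal domain. -/
/-!
Statement 4 (Eklof–Shelah, Lemma 1): if `R'` is an integral domain with a prime
element `p` such that `⋂ₙ pⁿR' = 0`, then the localization of `R'` at the prime
ideal `pR'` is a principal ideal domain.
-/

universe u

/-!
If `⋂ₙ pⁿR = 0`, every nonzero `a` is `pⁿb` with `p ∤ b`. Such a `b` becomes a unit in the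
localization at `pR`, so there every nonzero element is associated to a power of `p`, and a nonzero
ideal is generated by the least power of `p` it contains.
-/

theorem finiteMultiplicity_of_iInf_span_pow_eq_bot {R : Type*} [CommSemiring R] {p a : R}
    (hp : (⨅ n : ℕ, Ideal.span {p ^ n}) = ⊥) (ha : a ≠ 0) : FiniteMultiplicity p a := by
  by_contra hinf
  refine ha ?_
  rw [← Ideal.mem_bot, ← hp, Ideal.mem_iInf]
  exact fun n ↦ Ideal.mem_span_singleton.mpr (FiniteMultiplicity.not_iff_forall.mp hinf n)

theorem exists_associated_pow_mk' {R S : Type*} [CommSemiring R] [CommSemiring S] [Algebra R S]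
    {p a : R} [(Ideal.span {p}).IsPrime] [IsLocalization.AtPrime S (Ideal.span {p})]
    (ha : FiniteMultiplicity p a) (s : (Ideal.span {p}).primeCompl) :
    ∃ n : ℕ, Associated (algebraMap R S p ^ n) (IsLocalization.mk' S a s) := by
  obtain ⟨b, hab, hpb⟩ := ha.exists_eq_pow_mul_and_not_dvd
  have hb : b ∈ (Ideal.span {p}).primeCompl := fun h ↦ hpb (Ideal.mem_span_singleton.mp h)
  have hunit : IsUnit (IsLocalization.mk' S b s) :=
    (IsLocalization.AtPrime.isUnit_mk'_iff S (Ideal.span {p}) b s).mpr hb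
  refine ⟨multiplicity p a, hunit.unit, ?_⟩
  rw [hunit.unit_spec, ← map_pow, IsLocalization.mul_mk'_eq_mk'_of_mul, ← hab]

theorem isPrincipalIdealRing_of_forall_associated_pow {S : Type*} [CommSemiring S] (ϖ : S)
    (h : ∀ x : S, x ≠ 0 → ∃ n : ℕ, Associated (ϖ ^ n) x) : IsPrincipalIdealRing S := by
  classical
  refine ⟨fun I ↦ ?_⟩
  obtain rfl | hI := eq_or_ne I ⊥
  · exact bot_isPrincipal
  have exists_pow_mem : ∃ n : ℕ, ϖ ^ n ∈ I := by
    obtain ⟨x, hxI, hx⟩ := Submodule.exists_mem_ne_zero_of_ne_bot hI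
    obtain ⟨n, hn⟩ := h x hx
    exact ⟨n, I.mem_of_dvd hn.symm.dvd hxI⟩
  refine ⟨ϖ ^ Nat.find exists_pow_mem, le_antisymm (fun x hxI ↦ ?_) ?_⟩
  · obtain rfl | hx := eq_or_ne x 0
    · exact zero_mem _
    obtain ⟨n, hn⟩ := h x hx
    have hmin : Nat.find exists_pow_mem ≤ n :=
      Nat.find_min' exists_pow_mem (I.mem_of_dvd hn.symm.dvd hxI)
    exact Ideal.mem_span_singleton.mpr ((pow_dvd_pow ϖ hmin).trans hn.dvd)
  · exact (Ideal.span_singleton_le_iff_mem I).mpr (Nat.find_spec exists_pow_mem)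

theorem isPrincipalIdealRing_localization_atPrime_general {R : Type*} (S : Type*)
    [CommSemiring R] [CommSemiring S] [Algebra R S] (p : R) [(Ideal.span {p}).IsPrime]
    [IsLocalization.AtPrime S (Ideal.span {p})]
    (hp : (⨅ n : ℕ, Ideal.span {p ^ n}) = ⊥) : IsPrincipalIdealRing S := by
  refine isPrincipalIdealRing_of_forall_associated_pow (algebraMap R S p) fun x hx ↦ ?_
  obtain ⟨a, s, rfl⟩ := IsLocalization.exists_mk'_eq (Ideal.span {p}).primeCompl x
  have ha : a ≠ 0 := by
    rintro rfl
    exact hx (IsLocalization.mk'_zero s)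
  exact exists_associated_pow_mk' (finiteMultiplicity_of_iInf_span_pow_eq_bot hp ha) s

theorem isPrincipalIdealRing_localization_atPrime {R' : Type u} [CommRing R'] [IsDomain R']
    (p : R') (hp : Prime p)
    (hint : (⨅ n : ℕ, Ideal.span {p ^ n} : Ideal R') = ⊥) :
    IsPrincipalIdealRing
      (Localization (Ideal.primeCompl (Ideal.span {p})
        (hp := (Ideal.span_singleton_prime hp.ne_zero).mpr hp))) :=
  have : (Ideal.span {p}).IsPrime := (Ideal.span_singleton_prime hp.ne_zero).mpr hp
  isPrincipalIdealRing_localization_atPrime_general _ p hint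
end
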